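/- arXiv:2307.05401 — 2 statements merged into one kernel-verified Lean document; each statement's English description precedes it below -/
import Mathlib

section
/- There exists ε_* ∈ (0,1), depending only on n and m, with the following property: for every ε ∈ (0, ε_*), every α ∈ (0, (n+2m)/(2m−n)], and every positive smooth function u on ℝⁿ such that for some c > 0 one has c^{−1}(1+|x|²)^{(2m−n)/2} ≤ u(x) ≤ c(1+|x|²)^{(2m−n)/2} for all x, and u(x) = γ ∫_{ℝⁿ} |x−y|^{2m−n} F_{ε,u}(y) dy for all x ∈ ℝⁿ, one has u(x) = (1−ε)^{−1/(α+1)} ((1+|x|²)/2)^{(2m−n)/2} for every x ∈ ℝⁿ. -/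
open MeasureTheory

/-- The nonlinearity `F_{ε,u}(x) := ε f(x)^{2m} u(x) +
f(x)^{(n+2m)/2 + α(n−2m)/2} u(x)^{−α}` with `f(x) = 2/(1+|x|²)`. -/
noncomputable def sphF (n m : ℕ) (ε α : ℝ) (u : EuclideanSpace ℝ (Fin n) → ℝ)
    (x : EuclideanSpace ℝ (Fin n)) : ℝ :=
  ε * (2 / (1 + ‖x‖ ^ 2)) ^ (2 * m) * u x +
    (2 / (1 + ‖x‖ ^ 2)) ^ (((n : ℝ) + 2 * m) / 2 + α * ((n : ℝ) - 2 * m) / 2) * u x ^ (-α)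

/-!
In stereographic coordinates the solution becomes a function `w` on the sphere satisfying the
conformally invariant equation with nonlinearity `ε w + w ^ (-α)`; it has to be shown that `w` is
constant, the value of the constant then being forced by the normalisation of `γ`. For `α < 1`,
comparing the potential of the solution with that of constants at the supremum and the infimum of
`w` already gives `sup w ≤ inf w`.

For `α ≥ 1` moving spheres are applied to the integral equation. While `w` stays in a range where
the nonlinearity is decreasing, a continuity argument increases the radius up to
`R ^ 2 = 1 + ‖c‖ ^ 2` around every center `c`, where the inversion is a reflection of the sphere,
and yields an inequality between `w` and its reflection. The reflected function is again a
solution, so the inequality also holds in reverse, and since these reflections exchange any two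
points of different norm, `w` is constant. For small `ε` the range condition follows from an a
priori Harnack bound: up to the first point where `w` leaves the range the method of moving spheres
about the origin applies, and bounds the total mass of the source by the value of `w` there.
-/

namespace MovingSpheres

open Set Metric Filter Topology Module EuclideanGeometry

section Kernel

/-- The quotient `(bᵖ - aᵖ) / (b² - a²)` with the common factor `b - a` cancelled, so that it is
also meaningful for `a = b`. -/
noncomputable def powQuot (p : ℕ) (a b : ℝ) : ℝ :=
  (∑ i ∈ Finset.range p, b ^ i * a ^ (p - 1 - i)) / (a + b)

theorem powQuot_comm (p : ℕ) (a b : ℝ) : powQuot p a b = powQuot p b a := by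
  rw [powQuot, powQuot, add_comm]
  congr 1
  exact (Commute.all b a).geom_sum₂_comm p

theorem sq_sub_sq_mul_powQuot (p : ℕ) {a b : ℝ} (ha : 0 ≤ a) (hb : 0 ≤ b) :
    (b ^ 2 - a ^ 2) * powQuot p a b = b ^ p - a ^ p := by
  have hgeom := (Commute.all b a).geom_sum₂_mul p
  rcases eq_or_ne (a + b) 0 with h | h
  · obtain rfl : a = 0 := by linarith
    obtain rfl : b = 0 := by linarith
    simp
  · rw [powQuot, ← hgeom]
    field_simp
    ring

theorem powQuot_nonneg (p : ℕ) {a b : ℝ} (ha : 0 ≤ a) (hb : 0 ≤ b) : 0 ≤ powQuot p a b := by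
  unfold powQuot
  positivity

theorem powQuot_pos {p : ℕ} (hp : p ≠ 0) {a b : ℝ} (ha : 0 ≤ a) (hb : 0 ≤ b) (hab : 0 < a + b) :
    0 < powQuot p a b := by
  refine div_pos (Finset.sum_pos' (fun i _ => by positivity) ?_) hab
  rcases ha.eq_or_lt with rfl | ha
  · rw [zero_add] at hab
    exact ⟨p - 1, Finset.mem_range.2 (by omega), by simpa using pow_pos hab _⟩
  · exact ⟨0, Finset.mem_range.2 (by omega), by simpa using pow_pos ha _⟩

theorem sq_mul_powQuot_mul (p : ℕ) {t : ℝ} (ht : t ≠ 0) (a b : ℝ) :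
    t ^ 2 * powQuot p (t * a) (t * b) = t ^ p * powQuot p a b := by
  rcases p with _ | k
  · simp [powQuot]
  have hsum : ∑ i ∈ Finset.range (k + 1), (t * b) ^ i * (t * a) ^ (k - i) =
      t ^ k * ∑ i ∈ Finset.range (k + 1), b ^ i * a ^ (k - i) := by
    rw [Finset.mul_sum]
    refine Finset.sum_congr rfl fun i hi => ?_
    rw [← Nat.add_sub_of_le (Finset.mem_range_succ_iff.1 hi), pow_add, Nat.add_sub_cancel_left]
    ring
  simp only [powQuot, Nat.add_sub_cancel, hsum, ← mul_add]
  field_simp [ht]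
  ring

theorem add_mul_powQuot_le (p : ℕ) {a b M : ℝ} (ha : 0 ≤ a) (hb : 0 ≤ b) (haM : a ≤ M)
    (hbM : b ≤ M) : (a + b) * powQuot p a b ≤ p * M ^ (p - 1) := by
  have hterm : ∀ i ∈ Finset.range p, b ^ i * a ^ (p - 1 - i) ≤ M ^ (p - 1) := fun i hi => by
    rw [← Nat.add_sub_of_le (show i ≤ p - 1 by grind), pow_add, Nat.add_sub_cancel_left]
    have hM := ha.trans haM
    gcongr
  calc (a + b) * powQuot p a b ≤ ∑ i ∈ Finset.range p, b ^ i * a ^ (p - 1 - i) := by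
        rw [powQuot, mul_div_left_comm]
        exact mul_le_of_le_one_right (by positivity) (div_self_le_one _)
    _ ≤ p * M ^ (p - 1) := by simpa using Finset.sum_le_sum hterm

variable {V : Type*} [NormedAddCommGroup V] [InnerProductSpace ℝ V]

/-- For `X = l z`, the quantity `(‖X‖ / l) * ‖X* - Y‖`, where `X*` is the reflection of `X` in the
sphere of radius `l` about the origin; written without division so that it makes sense for all `l`
and `z`. -/
noncomputable def reflectedDist (l : ℝ) (z Y : V) : ℝ :=
  √(l ^ 2 - 2 * l * inner ℝ z Y + ‖z‖ ^ 2 * ‖Y‖ ^ 2)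

/-- The kernel of the method of moving spheres for `‖x - y‖ ^ p` on the sphere of radius `l`: the
difference between the kernel at `l z` and its Kelvin reflection, divided by `1 - ‖z‖ ^ 2` so that
its positivity is a meaningful condition also for `z` on the unit sphere. -/
noncomputable def sphereKernel (p : ℕ) (l : ℝ) (z Y : V) : ℝ :=
  (‖Y‖ ^ 2 - l ^ 2) * powQuot p (reflectedDist l z Y) ‖l • z - Y‖

theorem reflectedDist_nonneg (l : ℝ) (z Y : V) : 0 ≤ reflectedDist l z Y := Real.sqrt_nonneg _

theorem abs_two_mul_inner_le (l : ℝ) (z Y : V) :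
    |2 * l * inner ℝ z Y| ≤ 2 * (|l| * (‖z‖ * ‖Y‖)) := by
  rw [mul_assoc, abs_mul, abs_mul, abs_two]
  gcongr
  exact abs_real_inner_le_norm z Y

theorem sq_le_reflectedDist_radicand (l : ℝ) (z Y : V) :
    (|l| - ‖z‖ * ‖Y‖) ^ 2 ≤ l ^ 2 - 2 * l * inner ℝ z Y + ‖z‖ ^ 2 * ‖Y‖ ^ 2 := by
  have h := (abs_le.1 (abs_two_mul_inner_le l z Y)).2
  nlinarith [sq_abs l]

theorem reflectedDist_sq (l : ℝ) (z Y : V) :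
    reflectedDist l z Y ^ 2 = l ^ 2 - 2 * l * inner ℝ z Y + ‖z‖ ^ 2 * ‖Y‖ ^ 2 :=
  Real.sq_sqrt ((sq_nonneg _).trans (sq_le_reflectedDist_radicand l z Y))

theorem norm_smul_sub_sq (l : ℝ) (z Y : V) :
    ‖l • z - Y‖ ^ 2 = l ^ 2 * ‖z‖ ^ 2 - 2 * l * inner ℝ z Y + ‖Y‖ ^ 2 := by
  rw [norm_sub_sq_real, norm_smul, real_inner_smul_left, mul_pow, Real.norm_eq_abs, sq_abs]
  ring

theorem reflectedDist_zero (l : ℝ) (Y : V) : reflectedDist l 0 Y = |l| := by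
  simp [reflectedDist, Real.sqrt_sq_eq_abs]

theorem reflectedDist_inv_smul {l : ℝ} (hl : 0 < l) {X : V} (hX : X ≠ 0) (Y : V) :
    reflectedDist l (l⁻¹ • X) Y = ‖X‖ / l * ‖(l / ‖X‖) ^ 2 • X - Y‖ := by
  have : ‖X‖ ≠ 0 := norm_ne_zero_iff.2 hX
  refine (sq_eq_sq₀ (reflectedDist_nonneg _ _ _) (by positivity)).1 ?_
  rw [reflectedDist_sq, mul_pow, norm_smul_sub_sq, norm_smul, real_inner_smul_left,
    Real.norm_of_nonneg (by positivity)]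
  field_simp

theorem abs_sub_mul_norm_le_reflectedDist (l : ℝ) (z Y : V) :
    |l| - ‖z‖ * ‖Y‖ ≤ reflectedDist l z Y :=
  Real.le_sqrt_of_sq_le (sq_le_reflectedDist_radicand l z Y)

theorem norm_smul_sub_sq_sub_reflectedDist_sq (l : ℝ) (z Y : V) :
    ‖l • z - Y‖ ^ 2 - reflectedDist l z Y ^ 2 = (1 - ‖z‖ ^ 2) * (‖Y‖ ^ 2 - l ^ 2) := by
  rw [norm_smul_sub_sq, reflectedDist_sq]
  ring

theorem norm_smul_sub_pow_sub_reflectedDist_pow (p : ℕ) (l : ℝ) (z Y : V) :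
    ‖l • z - Y‖ ^ p - reflectedDist l z Y ^ p = (1 - ‖z‖ ^ 2) * sphereKernel p l z Y := by
  rw [sphereKernel, ← mul_assoc, ← norm_smul_sub_sq_sub_reflectedDist_sq,
    sq_sub_sq_mul_powQuot p (reflectedDist_nonneg l z Y) (norm_nonneg _)]

theorem norm_smul_sub_le (l : ℝ) {z : V} (hz : ‖z‖ ≤ 1) (Y : V) : ‖l • z - Y‖ ≤ |l| + ‖Y‖ := by
  refine (norm_sub_le _ _).trans ?_
  rw [norm_smul, Real.norm_eq_abs]
  gcongr
  exact mul_le_of_le_one_right (abs_nonneg l) hz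

theorem reflectedDist_le (l : ℝ) {z : V} (hz : ‖z‖ ≤ 1) (Y : V) :
    reflectedDist l z Y ≤ |l| + ‖Y‖ := by
  have hinner := (abs_le.1 (abs_two_mul_inner_le l z Y)).1
  have hzY : ‖z‖ * ‖Y‖ ≤ ‖Y‖ := mul_le_of_le_one_left (norm_nonneg Y) hz
  refine Real.sqrt_le_iff.2 ⟨by positivity, ?_⟩
  calc l ^ 2 - 2 * l * inner ℝ z Y + ‖z‖ ^ 2 * ‖Y‖ ^ 2 ≤ (|l| + ‖z‖ * ‖Y‖) ^ 2 := by
        nlinarith [sq_abs l]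
    _ ≤ (|l| + ‖Y‖) ^ 2 := by gcongr

theorem abs_norm_sq_sub_sq_le (l : ℝ) {z : V} (hz : ‖z‖ ≤ 1) (Y : V) :
    |‖Y‖ ^ 2 - l ^ 2| ≤ (|l| + ‖Y‖) * (reflectedDist l z Y + ‖l • z - Y‖) := by
  have hA := reflectedDist_nonneg l z Y
  have hA' := abs_sub_mul_norm_le_reflectedDist l z Y
  have hB := norm_nonneg (l • z - Y)
  have hB' : ‖Y‖ - |l| * ‖z‖ ≤ ‖l • z - Y‖ := by
    simpa [norm_smul, norm_sub_rev] using norm_sub_norm_le Y (l • z)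
  have hzY : ‖z‖ * ‖Y‖ ≤ ‖Y‖ := mul_le_of_le_one_left (norm_nonneg Y) hz
  have hlz : |l| * ‖z‖ ≤ |l| := mul_le_of_le_one_right (abs_nonneg l) hz
  have hfactor : ‖Y‖ ^ 2 - l ^ 2 = (|l| + ‖Y‖) * (‖Y‖ - |l|) := by
    rw [← sq_abs l]
    ring
  rw [hfactor, abs_mul, abs_of_nonneg (by positivity : 0 ≤ |l| + ‖Y‖)]
  gcongr
  rw [abs_le]
  constructor <;> linarith

theorem abs_sphereKernel_le (p : ℕ) (l : ℝ) {z : V} (hz : ‖z‖ ≤ 1) (Y : V) :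
    |sphereKernel p l z Y| ≤ p * (|l| + ‖Y‖) ^ p := by
  have hA := reflectedDist_nonneg l z Y
  have hB := norm_nonneg (l • z - Y)
  have hquot := powQuot_nonneg p hA hB
  rcases p with _ | k
  · simp [sphereKernel, powQuot]
  rw [sphereKernel, abs_mul, abs_of_nonneg hquot]
  calc |‖Y‖ ^ 2 - l ^ 2| * powQuot (k + 1) (reflectedDist l z Y) ‖l • z - Y‖
      ≤ (|l| + ‖Y‖) * (reflectedDist l z Y + ‖l • z - Y‖) *
          powQuot (k + 1) (reflectedDist l z Y) ‖l • z - Y‖ := by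
        gcongr
        exact abs_norm_sq_sub_sq_le l hz Y
    _ ≤ (|l| + ‖Y‖) * ((k + 1 : ℕ) * (|l| + ‖Y‖) ^ k) := by
        rw [mul_assoc]
        refine mul_le_mul_of_nonneg_left ?_ (by positivity)
        exact add_mul_powQuot_le (k + 1) hA hB (reflectedDist_le l hz Y) (norm_smul_sub_le l hz Y)
    _ = (k + 1 : ℕ) * (|l| + ‖Y‖) ^ (k + 1) := by ring

theorem sphereKernel_neg {p : ℕ} (hp : p ≠ 0) {l : ℝ} {z Y : V} (hz : ‖z‖ ≤ 1) (hY : ‖Y‖ < l) :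
    sphereKernel p l z Y < 0 := by
  have hl : 0 ≤ l := (norm_nonneg Y).trans hY.le
  have hA : 0 < reflectedDist l z Y := by
    have := abs_sub_mul_norm_le_reflectedDist l z Y
    rw [abs_of_nonneg hl] at this
    linarith [mul_le_of_le_one_left (norm_nonneg Y) hz]
  refine mul_neg_of_neg_of_pos (sub_neg.2 (by gcongr)) ?_
  exact powQuot_pos hp hA.le (norm_nonneg _) (by positivity)

theorem sphereKernel_zero_pos {p : ℕ} (hp : p ≠ 0) (z : V) {Y : V} (hY : Y ≠ 0) :
    0 < sphereKernel p 0 z Y := by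
  have hY' := norm_pos_iff.2 hY
  refine mul_pos (by simpa using pow_pos hY' 2)
    (powQuot_pos hp (reflectedDist_nonneg _ _ _) (norm_nonneg _) ?_)
  simpa using add_pos_of_nonneg_of_pos (reflectedDist_nonneg 0 z Y) hY'

theorem norm_smul_sub_reflection {l : ℝ} (hl : 0 ≤ l) (z : V) {Y : V} (hY : Y ≠ 0) :
    ‖l • z - (l / ‖Y‖) ^ 2 • Y‖ = l / ‖Y‖ * reflectedDist l z Y := by
  have : ‖Y‖ ≠ 0 := norm_ne_zero_iff.2 hY
  refine (sq_eq_sq₀ (norm_nonneg _)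
    (mul_nonneg (by positivity) (reflectedDist_nonneg _ _ _))).1 ?_
  rw [norm_smul_sub_sq, mul_pow, reflectedDist_sq, norm_smul, real_inner_smul_right,
    Real.norm_of_nonneg (by positivity)]
  field_simp
  ring

theorem reflectedDist_reflection {l : ℝ} (hl : 0 ≤ l) (z : V) {Y : V} (hY : Y ≠ 0) :
    reflectedDist l z ((l / ‖Y‖) ^ 2 • Y) = l / ‖Y‖ * ‖l • z - Y‖ := by
  have : ‖Y‖ ≠ 0 := norm_ne_zero_iff.2 hY
  refine (sq_eq_sq₀ (reflectedDist_nonneg _ _ _) (by positivity)).1 ?_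
  rw [reflectedDist_sq, mul_pow, norm_smul_sub_sq, norm_smul, real_inner_smul_right,
    Real.norm_of_nonneg (by positivity)]
  field_simp
  ring

theorem sphereKernel_reflection (p : ℕ) {l : ℝ} (hl : 0 < l) (z : V) {Y : V} (hY : Y ≠ 0) :
    sphereKernel p l z ((l / ‖Y‖) ^ 2 • Y) = -((l / ‖Y‖) ^ p * sphereKernel p l z Y) := by
  have hY' := norm_pos_iff.2 hY
  have hscale := sq_mul_powQuot_mul p (div_pos hl hY').ne' (reflectedDist l z Y) ‖l • z - Y‖
  have hnorm : ‖(l / ‖Y‖) ^ 2 • Y‖ ^ 2 - l ^ 2 = -((l / ‖Y‖) ^ 2 * (‖Y‖ ^ 2 - l ^ 2)) := by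
    rw [norm_smul, Real.norm_of_nonneg (by positivity)]
    field_simp
    ring
  rw [sphereKernel, sphereKernel, norm_smul_sub_reflection hl.le z hY,
    reflectedDist_reflection hl.le z hY, hnorm, powQuot_comm]
  linear_combination -(‖Y‖ ^ 2 - l ^ 2) * hscale

theorem continuousAt_sphereKernel (p : ℕ) {q : ℝ × V} {Y : V} (hY : Y ≠ q.1 • q.2) :
    ContinuousAt (fun q : ℝ × V => sphereKernel p q.1 q.2 Y) q := by
  have hden : reflectedDist q.1 q.2 Y + ‖q.1 • q.2 - Y‖ ≠ 0 :=
    (add_pos_of_nonneg_of_pos (reflectedDist_nonneg _ _ _)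
      (norm_pos_iff.2 (sub_ne_zero.2 hY.symm))).ne'
  unfold sphereKernel powQuot reflectedDist at *
  fun_prop (disch := exact hden)

theorem measurable_sphereKernel [MeasurableSpace V] [BorelSpace V] (p : ℕ) (l : ℝ) (z c : V) :
    Measurable fun y : V => sphereKernel p l z (y - c) := by
  have hA : Continuous fun y : V => reflectedDist l z (y - c) := by
    unfold reflectedDist
    fun_prop
  have hB : Continuous fun y : V => ‖l • z - (y - c)‖ := by fun_prop
  have hsum : Continuous fun y : V => ∑ i ∈ Finset.range p,
      ‖l • z - (y - c)‖ ^ i * reflectedDist l z (y - c) ^ (p - 1 - i) :=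
    continuous_finsetSum _ fun i _ => (hB.pow _).mul (hA.pow _)
  exact (show Continuous fun y : V => ‖y - c‖ ^ 2 - l ^ 2 by fun_prop).measurable.mul
    (hsum.measurable.div (hA.add hB).measurable)

end Kernel

section Inversion

variable {V : Type*} [NormedAddCommGroup V] [InnerProductSpace ℝ V]

theorem inversion_eq_add_smul (c y : V) (R : ℝ) :
    inversion c R y = c + (R / ‖y - c‖) ^ 2 • (y - c) := by
  simp [inversion, dist_eq_norm, add_comm]

theorem inversion_sub_center (c y : V) (R : ℝ) :
    inversion c R y - c = (R / ‖y - c‖) ^ 2 • (y - c) := by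
  rw [inversion_eq_add_smul, add_sub_cancel_left]

theorem inversion_ne_center {c y : V} {R : ℝ} (hR : R ≠ 0) (hy : y ≠ c) : inversion c R y ≠ c :=
  (inversion_eq_center hR).not.2 hy

theorem inversion_image_eq {s t : Set V} {c : V} {R : ℝ} (hR : R ≠ 0)
    (hst : MapsTo (inversion c R) s t) (hts : MapsTo (inversion c R) t s) :
    inversion c R '' s = t :=
  (hst.image_subset).antisymm fun y hy => ⟨inversion c R y, hts hy, inversion_inversion c hR y⟩

theorem inversion_image_compl_center (c : V) {R : ℝ} (hR : R ≠ 0) :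
    inversion c R '' {c}ᶜ = {c}ᶜ :=
  inversion_image_eq hR (fun _ => inversion_ne_center hR) (fun _ => inversion_ne_center hR)

theorem inversion_image_ball_diff_center (c : V) {R : ℝ} (hR : 0 < R) :
    inversion c R '' (ball c R \ {c}) = (closedBall c R)ᶜ := by
  refine inversion_image_eq hR.ne' (fun y hy => ?_) (fun y hy => ?_)
  · rw [mem_compl_iff, mem_closedBall, not_le, dist_inversion_center, lt_div_iff₀ (dist_pos.2 hy.2)]
    nlinarith [mem_ball.1 hy.1]
  · rw [mem_compl_iff, mem_closedBall, not_le] at hy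
    have hyc : 0 < dist y c := hR.trans hy
    refine ⟨?_, inversion_ne_center hR.ne' (dist_pos.1 hyc)⟩
    rw [mem_ball, dist_inversion_center, div_lt_iff₀ hyc]
    nlinarith

theorem one_add_norm_inversion_sq (c : V) {y : V} (hy : y ≠ c) (R : ℝ) :
    1 + ‖inversion c R y‖ ^ 2 = (R / ‖y - c‖) ^ 2 * (1 + ‖y‖ ^ 2) -
      ((R / ‖y - c‖) ^ 2 - 1) * (1 + ‖c‖ ^ 2 - R ^ 2) := by
  obtain ⟨Y, rfl⟩ : ∃ Y, y = c + Y := ⟨y - c, by simp⟩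
  have hY : ‖Y‖ ≠ 0 := by simpa using hy
  rw [inversion_eq_add_smul, add_sub_cancel_left, norm_add_sq_real, norm_add_sq_real, norm_smul,
    real_inner_smul_right, Real.norm_of_nonneg (by positivity)]
  field_simp
  ring

/-- The center lies on the line through `x` and `y`, beyond `x`, where the power of the point
`R ^ 2 = ‖x - c‖ * ‖y - c‖` equals `1 + ‖c‖ ^ 2`. -/
theorem exists_inversion_eq {x y : V} (hxy : ‖x‖ < ‖y‖) :
    ∃ (c : V) (R : ℝ), 0 < R ∧ R ^ 2 = 1 + ‖c‖ ^ 2 ∧ x ≠ c ∧ ‖x - c‖ ≤ R ∧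
      inversion c R x = y := by
  obtain ⟨w, rfl⟩ : ∃ w, y = x + w := ⟨y - x, by simp⟩
  have hw : 0 < ‖w‖ := norm_pos_iff.2 fun h => by simp [h] at hxy
  have hden : 0 < 2 * inner ℝ x w + ‖w‖ ^ 2 := by
    have := norm_add_sq_real x w
    nlinarith [norm_nonneg x]
  set t := (1 + ‖x‖ ^ 2) / (2 * inner ℝ x w + ‖w‖ ^ 2)
  have ht : 0 < t := by positivity
  have ht' : t * (2 * inner ℝ x w + ‖w‖ ^ 2) = 1 + ‖x‖ ^ 2 := div_mul_cancel₀ _ hden.ne'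
  have hxc : x - (x - t • w) = t • w := by abel
  have hnorm : ‖t • w‖ = t * ‖w‖ := by rw [norm_smul, Real.norm_of_nonneg ht.le]
  refine ⟨x - t • w, √(t * (t + 1)) * ‖w‖, by positivity, ?_, ?_, ?_, ?_⟩
  · rw [mul_pow, Real.sq_sqrt (by positivity), norm_sub_sq_real, real_inner_smul_right, hnorm]
    linear_combination ht'
  · rw [← sub_ne_zero, hxc]
    exact smul_ne_zero ht.ne' (norm_pos_iff.1 hw)
  · rw [hxc, hnorm]
    gcongr
    exact Real.le_sqrt_of_sq_le (by nlinarith)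
  · rw [inversion_eq_add_smul, hxc, hnorm, mul_div_mul_right _ _ hw.ne', div_pow,
      Real.sq_sqrt (by positivity), smul_smul, sub_add, ← sub_smul,
      show t - t * (t + 1) / t ^ 2 * t = -1 by field_simp; ring, neg_one_smul, sub_neg_eq_add]

variable [FiniteDimensional ℝ V]

theorem abs_det_fderiv_inversion (c y : V) (R : ℝ) :
    |((R / dist y c) ^ 2 • ((ℝ ∙ (y - c))ᗮ.reflection : V →L[ℝ] V)).det| =
      (R / ‖y - c‖) ^ (2 * finrank ℝ V) := by
  have hdet : ((ℝ ∙ (y - c))ᗮ.reflection : V →L[ℝ] V).det =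
      (-1) ^ finrank ℝ (ℝ ∙ (y - c))ᗮᗮ := by
    rw [← Submodule.det_reflection]
    rfl
  unfold ContinuousLinearMap.det at *
  rw [ContinuousLinearMap.toLinearMap_smul, LinearMap.det_smul, hdet, dist_eq_norm, ← pow_mul]
  simp [abs_mul, abs_of_nonneg ((even_two_mul (finrank ℝ V)).pow_nonneg (R / ‖y - c‖))]

variable [MeasurableSpace V] [BorelSpace V]

theorem setIntegral_image_inversion {c : V} {R : ℝ} (hR : R ≠ 0) {s : Set V}
    (hs : MeasurableSet s) (hc : c ∉ s) (g : V → ℝ) :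
    ∫ y in inversion c R '' s, g y =
      ∫ y in s, (R / ‖y - c‖) ^ (2 * finrank ℝ V) * g (inversion c R y) := by
  rw [integral_image_eq_integral_abs_det_fderiv_smul volume hs
    (fun y hy => (hasFDerivAt_inversion (ne_of_mem_of_not_mem hy hc)).hasFDerivWithinAt)
    (inversion_injective c hR).injOn]
  simp_rw [abs_det_fderiv_inversion, smul_eq_mul]

theorem integrableOn_image_inversion_iff {c : V} {R : ℝ} (hR : R ≠ 0) {s : Set V}
    (hs : MeasurableSet s) (hc : c ∉ s) (g : V → ℝ) :
    IntegrableOn g (inversion c R '' s) ↔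
      IntegrableOn (fun y => (R / ‖y - c‖) ^ (2 * finrank ℝ V) * g (inversion c R y)) s := by
  rw [integrableOn_image_iff_integrableOn_abs_det_fderiv_smul volume hs
    (fun y hy => (hasFDerivAt_inversion (ne_of_mem_of_not_mem hy hc)).hasFDerivWithinAt)
    (inversion_injective c hR).injOn]
  simp_rw [abs_det_fderiv_inversion, smul_eq_mul]

variable [Nontrivial V]

theorem integral_comp_inversion (c : V) {R : ℝ} (hR : R ≠ 0) (g : V → ℝ) :
    ∫ y, (R / ‖y - c‖) ^ (2 * finrank ℝ V) * g (inversion c R y) = ∫ y, g y := by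
  have hc : c ∉ ({c}ᶜ : Set V) := notMem_compl_iff.2 rfl
  have h := setIntegral_image_inversion hR (measurableSet_singleton c).compl hc g
  rwa [inversion_image_compl_center c hR, restrict_compl_singleton, eq_comm] at h

theorem ball_diff_center_ae_eq_closedBall (c : V) {R : ℝ} :
    (ball c R \ {c} : Set V) =ᵐ[volume] closedBall c R :=
  (sdiff_null_ae_eq_self (measure_singleton c)).trans
    (ae_eq_set.2 ⟨by simp [sdiff_eq_empty.2 ball_subset_closedBall],
      by rw [closedBall_sdiff_ball, Measure.addHaar_sphere]⟩)

theorem integral_eq_setIntegral_ball_add_inversion (c : V) {R : ℝ} (hR : 0 < R) {g : V → ℝ}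
    (hg : Integrable g) :
    IntegrableOn (fun y => g y + (R / ‖y - c‖) ^ (2 * finrank ℝ V) * g (inversion c R y))
        (ball c R \ {c}) ∧
      ∫ y, g y = ∫ y in ball c R \ {c},
        (g y + (R / ‖y - c‖) ^ (2 * finrank ℝ V) * g (inversion c R y)) := by
  have hmeas : MeasurableSet (ball c R \ {c}) := measurableSet_ball.diff (measurableSet_singleton c)
  have hc : c ∉ ball c R \ {c} := by simp
  have himage := inversion_image_ball_diff_center c hR
  have hreflected := (integrableOn_image_inversion_iff hR.ne' hmeas hc g).1 hg.integrableOn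
  refine ⟨hg.integrableOn.add hreflected, ?_⟩
  rw [integral_add hg.integrableOn hreflected, ← setIntegral_image_inversion hR.ne' hmeas hc,
    himage, setIntegral_congr_set (ball_diff_center_ae_eq_closedBall c),
    integral_add_compl measurableSet_closedBall hg]

end Inversion

section ConformalRoot

variable {V : Type*} [NormedAddCommGroup V]

/-- The square root of the conformal factor `2 / (1 + ‖x‖ ^ 2)` of the stereographic
projection. -/
noncomputable def conformalRoot (x : V) : ℝ := √(2 / (1 + ‖x‖ ^ 2))

theorem conformalRoot_pos (x : V) : 0 < conformalRoot x := by
  unfold conformalRoot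
  positivity

theorem conformalRoot_sq (x : V) : conformalRoot x ^ 2 = 2 / (1 + ‖x‖ ^ 2) :=
  Real.sq_sqrt (by positivity)

theorem continuous_conformalRoot : Continuous (conformalRoot : V → ℝ) := by
  unfold conformalRoot
  fun_prop (disch := intros; positivity)

theorem conformalRoot_le (x : V) : conformalRoot x ≤ 2 / (1 + ‖x‖) := by
  refine Real.sqrt_le_iff.2 ⟨by positivity, ?_⟩
  rw [div_pow, div_le_div_iff₀ (by positivity) (by positivity)]
  nlinarith [sq_nonneg (‖x‖ - 1)]

theorem one_le_conformalRoot_zero : 1 ≤ conformalRoot (0 : V) := by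
  simp [conformalRoot, Real.one_le_sqrt]

theorem conformalRoot_mul_norm_le (x : V) : conformalRoot x * ‖x‖ ≤ 2 * min 1 ‖x‖ := by
  refine (mul_le_mul_of_nonneg_right (conformalRoot_le x) (norm_nonneg x)).trans ?_
  rw [div_mul_eq_mul_div, div_le_iff₀ (by positivity)]
  rcases min_cases 1 ‖x‖ with ⟨h, _⟩ | ⟨h, _⟩ <;> rw [h] <;> nlinarith [norm_nonneg x]

theorem conformalRoot_le_two (x : V) : conformalRoot x ≤ 2 :=
  (conformalRoot_le x).trans (div_le_self zero_le_two (by simp))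

variable [InnerProductSpace ℝ V]

theorem conformalRoot_lt_mul_inversion {c y : V} {R : ℝ} (hR : R ^ 2 < 1 + ‖c‖ ^ 2)
    (hy : y ∈ ball c R \ {c}) :
    conformalRoot y < R / ‖y - c‖ * conformalRoot (inversion c R y) := by
  have hyc : 0 < ‖y - c‖ := norm_pos_iff.2 (sub_ne_zero.2 hy.2)
  have ht : 1 < R / ‖y - c‖ := (one_lt_div hyc).2 (mem_ball_iff_norm.1 hy.1)
  refine lt_of_pow_lt_pow_left₀ 2 (mul_nonneg (by positivity) (conformalRoot_pos _).le) ?_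
  rw [mul_pow, conformalRoot_sq, conformalRoot_sq, ← mul_div_assoc,
    div_lt_div_iff₀ (by positivity) (by positivity), one_add_norm_inversion_sq c hy.2]
  nlinarith [mul_pos (sub_pos.2 (one_lt_pow₀ ht two_ne_zero)) (sub_pos.2 hR)]

theorem conformalRoot_inversion {c y : V} {R : ℝ} (hR : 0 < R) (hRc : R ^ 2 = 1 + ‖c‖ ^ 2)
    (hy : y ≠ c) : conformalRoot (inversion c R y) = ‖y - c‖ / R * conformalRoot y := by
  have : ‖y - c‖ ≠ 0 := norm_ne_zero_iff.2 (sub_ne_zero.2 hy)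
  refine (sq_eq_sq₀ (conformalRoot_pos _).le
    (mul_nonneg (by positivity) (conformalRoot_pos _).le)).1 ?_
  rw [mul_pow, conformalRoot_sq, conformalRoot_sq, one_add_norm_inversion_sq c hy, hRc]
  field_simp
  ring

theorem pow_mul_conformalRoot_inversion_pow {c y : V} {R : ℝ} (hR : 0 < R)
    (hRc : R ^ 2 = 1 + ‖c‖ ^ 2) (hy : y ≠ c) (q : ℕ) :
    (R / ‖y - c‖) ^ q * conformalRoot (inversion c R y) ^ q = conformalRoot y ^ q := by
  have : ‖y - c‖ ≠ 0 := norm_ne_zero_iff.2 (sub_ne_zero.2 hy)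
  rw [← mul_pow, conformalRoot_inversion hR hRc hy]
  congr 1
  field_simp

end ConformalRoot

section Potential

variable {V : Type*} [NormedAddCommGroup V] [InnerProductSpace ℝ V] [FiniteDimensional ℝ V]
  [MeasurableSpace V] [BorelSpace V] {p : ℕ} {g : V → ℝ}

/-- The potential of the weight `g` for the kernel `‖x - y‖ ^ p`. -/
noncomputable def potential (p : ℕ) (g : V → ℝ) (x : V) : ℝ := ∫ y, ‖x - y‖ ^ p * g y

/-- The potential of the weight `g` for the moving-spheres kernel of the sphere of radius `l` about
`x₀`, evaluated at `x₀ + l • z`. -/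
noncomputable def spherePotential (p : ℕ) (g : V → ℝ) (x₀ : V) (l : ℝ) (z : V) : ℝ :=
  ∫ y, sphereKernel p l z (y - x₀) * g y

/-- The measurable weights that decay like `conformalRoot ^ (2 * dim V + p)`, the natural class for
the kernel `‖x - y‖ ^ p` on the sphere. -/
structure ConformalDecay (p : ℕ) (g : V → ℝ) : Prop where
  aestronglyMeasurable : AEStronglyMeasurable g
  exists_abs_le : ∃ K, ∀ y, |g y| ≤ K * conformalRoot y ^ (2 * finrank ℝ V + p)

theorem conformalDecay_const_mul_conformalRoot_pow (K : ℝ) :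
    ConformalDecay p fun y : V => K * conformalRoot y ^ (2 * finrank ℝ V + p) where
  aestronglyMeasurable := ((continuous_conformalRoot.pow _).const_mul K).aestronglyMeasurable
  exists_abs_le := ⟨|K|, fun y => by
    rw [abs_mul, abs_of_pos (pow_pos (conformalRoot_pos y) _)]⟩

variable [Nontrivial V]

theorem integrable_pow_mul_conformalRoot_pow (p : ℕ) {a : ℝ} (ha : 0 ≤ a) (x₀ : V) :
    Integrable fun y : V => (a + ‖y - x₀‖) ^ p * conformalRoot y ^ (2 * finrank ℝ V + p) := by
  have hbase := integrable_one_add_norm (E := V) (μ := volume) (r := (2 * finrank ℝ V : ℕ))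
    (by have := finrank_pos (R := ℝ) (M := V); norm_cast; omega)
  have hcont : Continuous fun y : V =>
      (a + ‖y - x₀‖) ^ p * conformalRoot y ^ (2 * finrank ℝ V + p) :=
    (by fun_prop : Continuous fun y : V => (a + ‖y - x₀‖) ^ p).mul (continuous_conformalRoot.pow _)
  refine (hbase.const_mul ((a + ‖x₀‖ + 1) ^ p * 2 ^ (2 * finrank ℝ V + p))).mono'
    hcont.aestronglyMeasurable (.of_forall fun y => ?_)
  have hroot := conformalRoot_pos y
  have hshift : a + ‖y - x₀‖ ≤ (a + ‖x₀‖ + 1) * (1 + ‖y‖) := by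
    nlinarith [norm_sub_le y x₀, mul_nonneg ha (norm_nonneg y),
      mul_nonneg (norm_nonneg x₀) (norm_nonneg y)]
  rw [Real.norm_of_nonneg (by positivity)]
  calc (a + ‖y - x₀‖) ^ p * conformalRoot y ^ (2 * finrank ℝ V + p)
      ≤ ((a + ‖x₀‖ + 1) * (1 + ‖y‖)) ^ p * (2 / (1 + ‖y‖)) ^ (2 * finrank ℝ V + p) := by
        gcongr
        exact conformalRoot_le y
    _ = (a + ‖x₀‖ + 1) ^ p * 2 ^ (2 * finrank ℝ V + p) *
          (1 + ‖y‖) ^ (-((2 * finrank ℝ V : ℕ) : ℝ)) := by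
        rw [Real.rpow_neg (by positivity), Real.rpow_natCast, div_pow, mul_pow, pow_add (1 + ‖y‖)]
        field_simp

namespace ConformalDecay

theorem integrable_mul (hg : ConformalDecay p g) {k : V → ℝ} (hk : AEStronglyMeasurable k)
    {C a : ℝ} (ha : 0 ≤ a) (x₀ : V) (hbound : ∀ y, |k y| ≤ C * (a + ‖y - x₀‖) ^ p) :
    Integrable fun y => k y * g y := by
  obtain ⟨K, hK⟩ := hg.exists_abs_le
  refine ((integrable_pow_mul_conformalRoot_pow p ha x₀).const_mul (C * K)).mono'
    (hk.mul hg.aestronglyMeasurable) (.of_forall fun y => ?_)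
  calc ‖k y * g y‖ = |k y| * |g y| := abs_mul _ _
    _ ≤ C * (a + ‖y - x₀‖) ^ p * (K * conformalRoot y ^ (2 * finrank ℝ V + p)) :=
        mul_le_mul (hbound y) (hK y) (abs_nonneg _) ((abs_nonneg _).trans (hbound y))
    _ = C * K * ((a + ‖y - x₀‖) ^ p * conformalRoot y ^ (2 * finrank ℝ V + p)) := by ring

theorem integrable (hg : ConformalDecay p g) : Integrable g := by
  simpa using hg.integrable_mul (k := fun _ => 1) (C := 1) aestronglyMeasurable_const
    zero_le_one 0 fun y => by simpa using one_le_pow₀ (by simp)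

theorem integrable_norm_sub_pow_mul (hg : ConformalDecay p g) (x : V) :
    Integrable fun y => ‖x - y‖ ^ p * g y :=
  hg.integrable_mul (C := 1) (Continuous.aestronglyMeasurable (by fun_prop)) le_rfl x fun y => by
    simp [norm_sub_rev]

theorem integrable_reflectedDist_pow_mul (hg : ConformalDecay p g) (x₀ : V) (l : ℝ) {z : V}
    (hz : ‖z‖ ≤ 1) : Integrable fun y => reflectedDist l z (y - x₀) ^ p * g y := by
  have hcont : Continuous fun y : V => reflectedDist l z (y - x₀) := by
    unfold reflectedDist
    fun_prop
  refine hg.integrable_mul (C := 1) (hcont.pow p).aestronglyMeasurable (abs_nonneg l) x₀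
    fun y => ?_
  rw [abs_pow, abs_of_nonneg (reflectedDist_nonneg _ _ _), one_mul]
  exact pow_le_pow_left₀ (reflectedDist_nonneg _ _ _) (reflectedDist_le l hz _) p

theorem integrable_sphereKernel_mul (hg : ConformalDecay p g) (x₀ : V) (l : ℝ) {z : V}
    (hz : ‖z‖ ≤ 1) : Integrable fun y => sphereKernel p l z (y - x₀) * g y :=
  hg.integrable_mul (measurable_sphereKernel p l z x₀).aestronglyMeasurable (abs_nonneg l) x₀
    fun _ => abs_sphereKernel_le p l hz _

theorem comp_inversion (hg : ConformalDecay p g) (hmeas : Measurable g) {c : V}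
    {R : ℝ} (hR : 0 < R) (hRc : R ^ 2 = 1 + ‖c‖ ^ 2) :
    ConformalDecay p fun y => (R / ‖y - c‖) ^ (2 * finrank ℝ V + p) * g (inversion c R y) := by
  have hinversion : Measurable fun y => inversion c R y := by
    simp only [inversion_eq_add_smul]
    fun_prop
  have hfactor : Measurable fun y : V => (R / ‖y - c‖) ^ (2 * finrank ℝ V + p) := by fun_prop
  obtain ⟨K, hK⟩ := hg.exists_abs_le
  refine ⟨(hfactor.mul (hmeas.comp hinversion)).aestronglyMeasurable, |K|, fun y => ?_⟩
  rw [abs_mul, abs_of_nonneg (by positivity : 0 ≤ (R / ‖y - c‖) ^ (2 * finrank ℝ V + p))]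
  rcases eq_or_ne y c with rfl | hy
  · have hexp : 2 * finrank ℝ V + p ≠ 0 := by have := finrank_pos (R := ℝ) (M := V); omega
    rw [sub_self, norm_zero, div_zero, zero_pow hexp, zero_mul]
    exact mul_nonneg (abs_nonneg K) (pow_nonneg (conformalRoot_pos _).le _)
  · rw [← pow_mul_conformalRoot_inversion_pow hR hRc hy, mul_left_comm]
    gcongr
    exact (hK _).trans (mul_le_mul_of_nonneg_right (le_abs_self K)
      (pow_nonneg (conformalRoot_pos _).le _))

theorem continuousAt_integral_mul (hg : ConformalDecay p g) {X : Type*} [TopologicalSpace X]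
    [FirstCountableTopology X] {k : X → V → ℝ} {q : X} {C a : ℝ} (ha : 0 ≤ a) (x₀ : V)
    (hk : ∀ r, AEStronglyMeasurable (k r))
    (hbound : ∀ᶠ r in 𝓝 q, ∀ y, |k r y| ≤ C * (a + ‖y - x₀‖) ^ p)
    (hcont : ∀ᵐ y, ContinuousAt (fun r => k r y) q) :
    ContinuousAt (fun r => ∫ y, k r y * g y) q := by
  have hdom : Integrable fun y => C * (a + ‖y - x₀‖) ^ p * |g y| := by
    have hg' : ConformalDecay p fun y => |g y| :=
      ⟨hg.aestronglyMeasurable.norm, by simpa using hg.exists_abs_le⟩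
    exact hg'.integrable_mul (C := |C|) (Continuous.aestronglyMeasurable (by fun_prop)) ha x₀
      fun y => by rw [abs_mul, abs_of_nonneg (by positivity : 0 ≤ (a + ‖y - x₀‖) ^ p)]
  refine continuousAt_of_dominated (.of_forall fun r => (hk r).mul hg.aestronglyMeasurable)
    ?_ hdom (hcont.mono fun y hy => hy.mul continuousAt_const)
  filter_upwards [hbound] with r hr
  refine .of_forall fun y => ?_
  rw [Real.norm_eq_abs, abs_mul]
  exact mul_le_mul_of_nonneg_right (hr y) (abs_nonneg _)

theorem continuous_potential (hg : ConformalDecay p g) : Continuous (potential p g) := by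
  refine continuous_iff_continuousAt.2 fun x => hg.continuousAt_integral_mul (C := 1)
    zero_le_one x (fun _ => Continuous.aestronglyMeasurable (by fun_prop)) ?_
    (.of_forall fun y => by fun_prop)
  filter_upwards [ball_mem_nhds x one_pos] with r hr y
  rw [abs_pow, abs_norm, one_mul, norm_sub_rev y x]
  gcongr
  calc ‖r - y‖ ≤ ‖r - x‖ + ‖x - y‖ := norm_sub_le_norm_sub_add_norm_sub r x y
    _ ≤ 1 + ‖x - y‖ := by gcongr; exact (mem_ball_iff_norm.1 hr).le

theorem continuous_spherePotential (hg : ConformalDecay p g) (x₀ : V) :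
    Continuous fun q : ℝ × closedBall (0 : V) 1 => spherePotential p g x₀ q.1 q.2 := by
  refine continuous_iff_continuousAt.2 fun q => hg.continuousAt_integral_mul
    (k := fun (q : ℝ × closedBall (0 : V) 1) y => sphereKernel p q.1 (q.2 : V) (y - x₀))
    (C := p) (a := |q.1| + 1) (by positivity) x₀
    (fun r => (measurable_sphereKernel p r.1 (r.2 : V) x₀).aestronglyMeasurable) ?_ ?_
  · have hnear : ∀ᶠ r : ℝ × closedBall (0 : V) 1 in 𝓝 q, |r.1| < |q.1| + 1 :=
      continuous_fst.abs.continuousAt.eventually_lt continuousAt_const (lt_add_one _)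
    filter_upwards [hnear] with r hr y
    refine (abs_sphereKernel_le p r.1 (mem_closedBall_zero_iff.1 r.2.2) _).trans ?_
    gcongr
  · filter_upwards [Measure.ae_ne volume (x₀ + q.1 • (q.2 : V))] with y hy
    have hne : y - x₀ ≠ q.1 • (q.2 : V) := fun h => hy (by rw [← h, add_sub_cancel])
    have hcoe : Continuous fun r : ℝ × closedBall (0 : V) 1 => (r.1, (r.2 : V)) := by fun_prop
    exact ContinuousAt.comp (x := q) (f := fun r : ℝ × closedBall (0 : V) 1 => (r.1, (r.2 : V)))
      (continuousAt_sphereKernel p (q := (q.1, (q.2 : V))) hne) hcoe.continuousAt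

theorem potential_sub_reflection (hg : ConformalDecay p g) (x₀ : V) (l : ℝ) {z : V}
    (hz : ‖z‖ ≤ 1) :
    potential p g (x₀ + l • z) - ∫ y, reflectedDist l z (y - x₀) ^ p * g y =
      (1 - ‖z‖ ^ 2) * spherePotential p g x₀ l z := by
  rw [potential, spherePotential, ← integral_sub (hg.integrable_norm_sub_pow_mul _)
    (hg.integrable_reflectedDist_pow_mul x₀ l hz), ← integral_const_mul]
  refine integral_congr_ae (.of_forall fun y => ?_)
  simp only
  rw [← sub_mul, ← mul_assoc, ← norm_smul_sub_pow_sub_reflectedDist_pow,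
    show x₀ + l • z - y = l • z - (y - x₀) by abel]

theorem potential_sub_inversion (hg : ConformalDecay p g) {c y : V} {R : ℝ} (hR : 0 < R)
    (hyc : y ≠ c) (hyR : ‖y - c‖ ≤ R) :
    potential p g y - (‖y - c‖ / R) ^ p * potential p g (inversion c R y) =
      (1 - (‖y - c‖ / R) ^ 2) * spherePotential p g c R (R⁻¹ • (y - c)) := by
  have hnorm : ‖R⁻¹ • (y - c)‖ = ‖y - c‖ / R := by
    rw [norm_smul, norm_inv, Real.norm_of_nonneg hR.le, inv_mul_eq_div]
  have h := hg.potential_sub_reflection c R (hnorm.trans_le (div_le_one_of_le₀ hyR hR.le))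
  rw [smul_inv_smul₀ hR.ne', add_sub_cancel, hnorm] at h
  rw [← h, potential, potential, ← integral_const_mul]
  refine congrArg _ (integral_congr_ae (.of_forall fun x => ?_))
  simp only
  rw [reflectedDist_inv_smul hR (sub_ne_zero.2 hyc), mul_pow, mul_assoc, inversion_eq_add_smul,
    sub_sub_eq_add_sub, add_comm c]

theorem potential_center_sub (hg : ConformalDecay p g) (c : V) (R : ℝ) :
    potential p g c - |R| ^ p * ∫ y, g y = spherePotential p g c R 0 := by
  simpa [reflectedDist_zero, integral_const_mul] using
    hg.potential_sub_reflection c R (z := 0) (by simp)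

theorem potential_mono {f : V → ℝ} (hf : ConformalDecay p f) (hg : ConformalDecay p g)
    (hfg : ∀ y, f y ≤ g y) (x : V) : potential p f x ≤ potential p g x :=
  integral_mono (hf.integrable_norm_sub_pow_mul x) (hg.integrable_norm_sub_pow_mul x) fun y =>
    mul_le_mul_of_nonneg_left (hfg y) (by positivity)

theorem potential_le_two_pow_mul (hg : ConformalDecay p g) (hnonneg : ∀ y, 0 ≤ g y) (x x₀ : V) :
    potential p g x ≤ 2 ^ p * (‖x - x₀‖ ^ p * (∫ y, g y) + potential p g x₀) := by
  have hsum := (hg.integrable.const_mul (‖x - x₀‖ ^ p)).add (hg.integrable_norm_sub_pow_mul x₀)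
  rw [potential, potential, ← integral_const_mul, ← integral_add
    (hg.integrable.const_mul _) (hg.integrable_norm_sub_pow_mul x₀), ← integral_const_mul]
  refine integral_mono (hg.integrable_norm_sub_pow_mul x) (hsum.const_mul _) fun y => ?_
  have hpow : ‖x - y‖ ^ p ≤ 2 ^ p * (‖x - x₀‖ ^ p + ‖x₀ - y‖ ^ p) :=
    calc ‖x - y‖ ^ p ≤ (‖x - x₀‖ + ‖x₀ - y‖) ^ p := by
          gcongr
          exact norm_sub_le_norm_sub_add_norm_sub x x₀ y
      _ ≤ 2 ^ (p - 1) * (‖x - x₀‖ ^ p + ‖x₀ - y‖ ^ p) :=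
          add_pow_le (norm_nonneg _) (norm_nonneg _) p
      _ ≤ 2 ^ p * (‖x - x₀‖ ^ p + ‖x₀ - y‖ ^ p) := by
          gcongr
          · exact one_le_two
          · exact p.sub_le 1
  simp only
  rw [← add_mul, ← mul_assoc]
  exact mul_le_mul_of_nonneg_right hpow (hnonneg y)

theorem spherePotential_eq_setIntegral (hg : ConformalDecay p g) (x₀ : V) {l : ℝ} (hl : 0 < l)
    {z : V} (hz : ‖z‖ ≤ 1) :
    IntegrableOn (fun y => sphereKernel p l z (y - x₀) *
        (g y - (l / ‖y - x₀‖) ^ (2 * finrank ℝ V + p) * g (inversion x₀ l y)))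
        (ball x₀ l \ {x₀}) ∧
      spherePotential p g x₀ l z = ∫ y in ball x₀ l \ {x₀}, sphereKernel p l z (y - x₀) *
        (g y - (l / ‖y - x₀‖) ^ (2 * finrank ℝ V + p) * g (inversion x₀ l y)) := by
  have hfold := integral_eq_setIntegral_ball_add_inversion x₀ hl
    (hg.integrable_sphereKernel_mul x₀ l hz)
  have hcongr : EqOn (fun y => sphereKernel p l z (y - x₀) * g y +
      (l / ‖y - x₀‖) ^ (2 * finrank ℝ V) *
        (sphereKernel p l z (inversion x₀ l y - x₀) * g (inversion x₀ l y)))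
      (fun y => sphereKernel p l z (y - x₀) *
        (g y - (l / ‖y - x₀‖) ^ (2 * finrank ℝ V + p) * g (inversion x₀ l y)))
      (ball x₀ l \ {x₀}) := fun y hy => by
    simp only
    rw [inversion_sub_center, sphereKernel_reflection p hl z (sub_ne_zero.2 hy.2)]
    ring
  have hmeas : MeasurableSet (ball x₀ l \ {x₀}) :=
    measurableSet_ball.diff (measurableSet_singleton x₀)
  exact ⟨hfold.1.congr_fun hcongr hmeas, hfold.2.trans (setIntegral_congr_fun hmeas hcongr)⟩

end ConformalDecay

theorem potential_inversion (p : ℕ) (g : V → ℝ) {c x : V} {R : ℝ} (hR : R ≠ 0) (hx : x ≠ c) :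
    potential p (fun y => (R / ‖y - c‖) ^ (2 * finrank ℝ V + p) * g (inversion c R y)) x =
      (‖x - c‖ / R) ^ p * potential p g (inversion c R x) := by
  rw [potential, potential, ← integral_comp_inversion c hR fun y => ‖inversion c R x - y‖ ^ p * g y,
    ← integral_const_mul]
  refine integral_congr_ae ?_
  filter_upwards [Measure.ae_ne volume c] with y hy
  have hx' : ‖x - c‖ ≠ 0 := norm_ne_zero_iff.2 (sub_ne_zero.2 hx)
  have hdist : ‖inversion c R x - inversion c R y‖ =
      R / ‖x - c‖ * (R / ‖y - c‖) * ‖x - y‖ := by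
    simp only [← dist_eq_norm, dist_inversion_inversion hx hy]
    ring
  rw [hdist]
  simp only [mul_pow, pow_add, div_pow R ‖x - c‖, div_pow ‖x - c‖ R]
  field_simp

end Potential

section Nonlinearity

/-- The nonlinearity `t ↦ ε t + t ^ (-α)` of the equation, written on the sphere. -/
noncomputable def nonlin (ε α t : ℝ) : ℝ := ε * t + t ^ (-α)

variable {ε α : ℝ}

theorem nonlin_pos {t : ℝ} (hε : 0 ≤ ε) (ht : 0 < t) : 0 < nonlin ε α t :=
  add_pos_of_nonneg_of_pos (mul_nonneg hε ht.le) (Real.rpow_pos_of_pos ht _)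

theorem nonlin_le_add {a b t : ℝ} (hε : 0 ≤ ε) (hα : 0 ≤ α) (ha : 0 < a) (hat : a ≤ t)
    (htb : t ≤ b) : nonlin ε α t ≤ ε * b + a ^ (-α) :=
  add_le_add (mul_le_mul_of_nonneg_left htb hε)
    (Real.rpow_le_rpow_of_nonpos ha hat (neg_nonpos.2 hα))

theorem add_le_nonlin {a b t : ℝ} (hε : 0 ≤ ε) (hα : 0 ≤ α) (ha : 0 < a) (hat : a ≤ t)
    (htb : t ≤ b) : ε * a + b ^ (-α) ≤ nonlin ε α t :=
  add_le_add (mul_le_mul_of_nonneg_left hat hε)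
    (Real.rpow_le_rpow_of_nonpos (ha.trans_le hat) htb (neg_nonpos.2 hα))

theorem antitoneOn_nonlin {T : ℝ} (hα : 0 ≤ α) (hT : ε ≤ α * T ^ (-α - 1)) :
    AntitoneOn (nonlin ε α) (Ioc 0 T) := by
  have hderiv : ∀ t, 0 < t → HasDerivAt (nonlin ε α) (ε - α * t ^ (-α - 1)) t := fun t ht =>
    (((hasDerivAt_id' t).const_mul ε).add
      (Real.hasDerivAt_rpow_const (Or.inl ht.ne'))).congr_deriv (by ring)
  refine antitoneOn_of_deriv_nonpos (convex_Ioc 0 T)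
    (fun t ht => (hderiv t ht.1).continuousAt.continuousWithinAt) ?_ ?_ <;>
    rw [interior_Ioc] <;> intro t ht
  · exact (hderiv t ht.1).differentiableAt.differentiableWithinAt
  · rw [(hderiv t ht.1).deriv, sub_nonpos]
    exact hT.trans (mul_le_mul_of_nonneg_left
      (Real.rpow_le_rpow_of_nonpos ht.1 ht.2.le (by linarith)) hα)

/-- At `α p = q` the singular term `c ^ q * (c ^ p) ^ (-α)` is exactly scale invariant. -/
theorem strictMonoOn_pow_mul_nonlin {p q : ℕ} {t : ℝ} (hε : 0 < ε) (ht : 0 < t) (hq : q ≠ 0)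
    (hα : α * p ≤ q) : StrictMonoOn (fun c : ℝ => c ^ q * nonlin ε α (c ^ p * t)) (Ioi 0) := by
  have hexpand : ∀ c : ℝ, 0 < c →
      c ^ q * nonlin ε α (c ^ p * t) = ε * t * c ^ (q + p) + t ^ (-α) * c ^ (q - α * p) := by
    intro c hc
    have hscale : (c ^ p * t) ^ (-α) = c ^ (-(α * p)) * t ^ (-α) := by
      rw [Real.mul_rpow (pow_nonneg hc.le p) ht.le, ← Real.rpow_natCast_mul hc.le,
        mul_neg, mul_comm (p : ℝ)]
    rw [nonlin, hscale, sub_eq_add_neg, Real.rpow_add hc, Real.rpow_natCast]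
    ring
  intro a (ha : 0 < a) b (hb : 0 < b) hab
  simp only [hexpand a ha, hexpand b hb]
  exact add_lt_add_of_lt_of_le (by gcongr) (by gcongr)

theorem pow_mul_nonlin_lt {p q : ℕ} {T a b s t : ℝ} (hG : AntitoneOn (nonlin ε α) (Ioc 0 T))
    (hε : 0 < ε) (hq : q ≠ 0) (hα : α * p ≤ q) (ha : 0 < a) (hab : a < b) (hs : 0 < s)
    (hst : s ≤ t) (hT : a ^ p * t ≤ T) :
    a ^ q * nonlin ε α (a ^ p * t) < b ^ q * nonlin ε α (b ^ p * s) := by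
  have hle : a ^ p * s ≤ a ^ p * t := by gcongr
  have hsT : a ^ p * s ∈ Ioc 0 T := ⟨by positivity, hle.trans hT⟩
  calc a ^ q * nonlin ε α (a ^ p * t) ≤ a ^ q * nonlin ε α (a ^ p * s) :=
        mul_le_mul_of_nonneg_left (hG hsT ⟨hsT.1.trans_le hle, hT⟩ hle) (pow_nonneg ha.le q)
    _ < b ^ q * nonlin ε α (b ^ p * s) :=
        strictMonoOn_pow_mul_nonlin hε hs hq hα ha (ha.trans hab) hab

theorem eq_rpow_of_nonlin_eq_self {t : ℝ} (hα : α + 1 ≠ 0) (ht : 0 < t)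
    (hfix : nonlin ε α t = t) : t = (1 - ε) ^ (-1 / (α + 1)) := by
  have hpow : 1 - ε = t ^ (-(α + 1)) := by
    rw [show -(α + 1) = -α - 1 by ring, Real.rpow_sub_one ht.ne', eq_div_iff ht.ne']
    rw [nonlin] at hfix
    linarith
  rw [hpow, ← Real.rpow_mul ht.le, show -(α + 1) * (-1 / (α + 1)) = 1 by field_simp, Real.rpow_one]

theorem le_of_le_rpow_neg_of_rpow_neg_le {k M μ : ℝ} (hα : α < 1) (hk : 0 < k) (hM : 0 < M)
    (hμ : 0 < μ) (hMμ : k * M ≤ μ ^ (-α)) (hμM : M ^ (-α) ≤ k * μ) : M ≤ μ := by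
  have hlogM := Real.log_le_log (by positivity) hMμ
  have hlogμ := Real.log_le_log (by positivity) hμM
  rw [Real.log_mul hk.ne' hM.ne', Real.log_rpow hμ] at hlogM
  rw [Real.log_mul hk.ne' hμ.ne', Real.log_rpow hM] at hlogμ
  have hlog : (1 - α) * Real.log M ≤ (1 - α) * Real.log μ := by linarith
  exact (Real.log_le_log_iff hM hμ).1 (le_of_mul_le_mul_left hlog (sub_pos.2 hα))

end Nonlinearity

section Continuity

theorem forall_mem_of_isClosed_of_forall_ne {X : Type*} [TopologicalSpace X] {s : Set X} {a : X}
    [NeBot (𝓝[≠] a)] (hs : IsClosed s) (h : ∀ x, x ≠ a → x ∈ s) (x : X) : x ∈ s :=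
  hs.closure_subset_iff.2 h (dense_compl_singleton a x)

theorem forall_nonneg_of_nonneg_imp_pos {X : Type*} [TopologicalSpace X] [CompactSpace X]
    {Q : ℝ × X → ℝ} (hQ : Continuous Q) {L : ℝ} (hL : 0 ≤ L) (hzero : ∀ x, 0 ≤ Q (0, x))
    (hstep : ∀ l ∈ Ico 0 L, (∀ x, 0 ≤ Q (l, x)) → ∀ x, 0 < Q (l, x)) (x : X) : 0 ≤ Q (L, x) := by
  have hclosed : IsClosed {l : ℝ | ∀ x, 0 ≤ Q (l, x)} := by
    simp only [ofPred_forall]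
    exact isClosed_iInter fun x => isClosed_le continuous_const (by fun_prop)
  have hopen : ∀ l ∈ {l : ℝ | ∀ x, 0 ≤ Q (l, x)} ∩ Ico 0 L,
      {l : ℝ | ∀ x, 0 ≤ Q (l, x)} ∈ 𝓝[>] l := by
    rintro l ⟨hl, hlL⟩
    have hnear : ∀ᶠ l' in 𝓝 l, ∀ x ∈ (univ : Set X), 0 < Q (l', x) :=
      isCompact_univ.eventually_forall_of_forall_eventually fun x _ =>
        hQ.continuousAt.eventually_const_lt (hstep l hlL hl x)
    filter_upwards [nhdsWithin_le_nhds hnear] with l' hl' x using (hl' x (mem_univ x)).le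
  exact (hclosed.inter isClosed_Icc).Icc_subset_of_forall_mem_nhdsWithin hzero hopen
    (right_mem_Icc.2 hL) x

theorem setIntegral_pos_of_forall_pos {X : Type*} [MeasurableSpace X] {μ : Measure X} {s : Set X}
    {f : X → ℝ} (hs : MeasurableSet s) (hμ : μ s ≠ 0) (hf : IntegrableOn f s μ)
    (hpos : ∀ x ∈ s, 0 < f x) : 0 < ∫ x in s, f x ∂μ := by
  rw [setIntegral_pos_iff_support_of_nonneg_ae
    (ae_restrict_of_forall_mem hs fun x hx => (hpos x hx).le) hf,
    inter_eq_self_of_subset_right fun x hx => Function.mem_support.2 (hpos x hx).ne']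
  exact pos_iff_ne_zero.2 hμ

end Continuity

section Solution

variable {V : Type*} [NormedAddCommGroup V] [InnerProductSpace ℝ V] [FiniteDimensional ℝ V]
  [MeasurableSpace V] [BorelSpace V] {p : ℕ} {γ ε α : ℝ} {u : V → ℝ}

/-- The function on the sphere that corresponds to `u` on `V`, read in stereographic coordinates. -/
noncomputable def sphereLift (p : ℕ) (u : V → ℝ) (x : V) : ℝ := conformalRoot x ^ p * u x

/-- The right-hand side `F_{ε,u}` of the equation, with `p = 2m - n` and `n = dim V`. -/
noncomputable def source (p : ℕ) (ε α : ℝ) (u : V → ℝ) (y : V) : ℝ :=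
  conformalRoot y ^ (2 * finrank ℝ V + p) * nonlin ε α (sphereLift p u y)

/-- `u` solves the integral equation `u = γ ∫ ‖· - y‖ ^ p F_{ε,u}(y) dy`, for positive parameters,
and its lift to the sphere is bounded between positive constants. -/
structure IsSolution (p : ℕ) (γ ε α : ℝ) (u : V → ℝ) : Prop where
  exponent_ne_zero : p ≠ 0
  gamma_pos : 0 < γ
  eps_pos : 0 < ε
  alpha_pos : 0 < α
  exists_bounds : ∃ c C, 0 < c ∧ ∀ x, c ≤ sphereLift p u x ∧ sphereLift p u x ≤ C
  eq_potential : ∀ x, u x = γ * potential p (source p ε α u) x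

namespace IsSolution

theorem sphereLift_pos (h : IsSolution p γ ε α u) (x : V) : 0 < sphereLift p u x :=
  let ⟨_, _, hc, hb⟩ := h.exists_bounds
  hc.trans_le (hb x).1

theorem bddAbove_range_sphereLift (h : IsSolution p γ ε α u) :
    BddAbove (range (sphereLift p u)) :=
  let ⟨_, C, _, hb⟩ := h.exists_bounds
  ⟨C, forall_mem_range.2 fun x => (hb x).2⟩

theorem bddBelow_range_sphereLift (h : IsSolution p γ ε α u) :
    BddBelow (range (sphereLift p u)) :=
  let ⟨c, _, _, hb⟩ := h.exists_bounds
  ⟨c, forall_mem_range.2 fun x => (hb x).1⟩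

theorem iInf_sphereLift_pos (h : IsSolution p γ ε α u) : 0 < ⨅ x, sphereLift p u x :=
  let ⟨_, _, hc, hb⟩ := h.exists_bounds
  hc.trans_le (le_ciInf fun x => (hb x).1)

theorem pos (h : IsSolution p γ ε α u) (x : V) : 0 < u x :=
  pos_of_mul_pos_right (h.sphereLift_pos x) (pow_nonneg (conformalRoot_pos x).le p)

theorem source_pos (h : IsSolution p γ ε α u) (y : V) : 0 < source p ε α u y :=
  mul_pos (pow_pos (conformalRoot_pos y) _) (nonlin_pos h.eps_pos.le (h.sphereLift_pos y))

theorem source_lt (h : IsSolution p γ ε α u) {T : ℝ} (hG : AntitoneOn (nonlin ε α) (Ioc 0 T))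
    (hα : α * p ≤ (2 * finrank ℝ V + p : ℕ)) {x₀ y : V} {l : ℝ} (hl : l ^ 2 < 1 + ‖x₀‖ ^ 2)
    (hy : y ∈ ball x₀ l \ {x₀}) (hT : sphereLift p u y ≤ T)
    (hle : (‖y - x₀‖ / l) ^ p * u (inversion x₀ l y) ≤ u y) :
    source p ε α u y <
      (l / ‖y - x₀‖) ^ (2 * finrank ℝ V + p) * source p ε α u (inversion x₀ l y) := by
  have hy0 : 0 < ‖y - x₀‖ := norm_pos_iff.2 (sub_ne_zero.2 hy.2)
  have hl0 : 0 < l := hy0.trans (mem_ball_iff_norm.1 hy.1)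
  have hlift : (l / ‖y - x₀‖ * conformalRoot (inversion x₀ l y)) ^ p *
      ((‖y - x₀‖ / l) ^ p * u (inversion x₀ l y)) = sphereLift p u (inversion x₀ l y) := by
    rw [sphereLift, mul_pow, div_pow, div_pow]
    field_simp
  have hlt := pow_mul_nonlin_lt hG h.eps_pos (by have := h.exponent_ne_zero; omega) hα
    (conformalRoot_pos y) (conformalRoot_lt_mul_inversion hl hy)
    (mul_pos (by positivity) (h.pos (inversion x₀ l y))) hle hT
  rwa [hlift, mul_pow, mul_assoc] at hlt

variable [Nontrivial V]

/-- Were the integrand not integrable, the Bochner integral would be `0`, whereas `u` is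
positive. -/
theorem aestronglyMeasurable_source (h : IsSolution p γ ε α u) :
    AEStronglyMeasurable (source p ε α u) := by
  have hint : Integrable fun y : V => ‖0 - y‖ ^ p * source p ε α u y := by
    by_contra hnot
    have hzero := h.eq_potential 0
    rw [potential, integral_undef hnot, mul_zero] at hzero
    exact (h.pos 0).ne' hzero
  have hinv : AEStronglyMeasurable fun y : V => (‖0 - y‖ ^ p)⁻¹ :=
    (by fun_prop : Measurable fun y : V => (‖0 - y‖ ^ p)⁻¹).aestronglyMeasurable
  refine (hinv.mul hint.aestronglyMeasurable).congr ?_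
  filter_upwards [Measure.ae_ne volume (0 : V)] with y hy
  exact inv_mul_cancel_left₀ (pow_ne_zero p (by simpa using hy)) _

theorem conformalDecay_source (h : IsSolution p γ ε α u) : ConformalDecay p (source p ε α u) := by
  obtain ⟨c, C, hc, hb⟩ := h.exists_bounds
  refine ⟨h.aestronglyMeasurable_source, ε * C + c ^ (-α), fun y => ?_⟩
  rw [abs_of_pos (h.source_pos y), mul_comm]
  exact mul_le_mul_of_nonneg_left
    (nonlin_le_add h.eps_pos.le h.alpha_pos.le hc (hb y).1 (hb y).2)
    (pow_nonneg (conformalRoot_pos y).le _)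

theorem continuous_sphereLift (h : IsSolution p γ ε α u) : Continuous (sphereLift p u) := by
  have hu : Continuous u :=
    (h.conformalDecay_source.continuous_potential.const_mul γ).congr fun x =>
      (h.eq_potential x).symm
  exact (continuous_conformalRoot.pow p).mul hu

theorem pow_mul_inversion_le (h : IsSolution p γ ε α u) {x₀ y : V} {l : ℝ} (hl : 0 < l)
    (hy : y ≠ x₀) (hyl : ‖y - x₀‖ ≤ l)
    (hQ : ∀ z, ‖z‖ ≤ 1 → 0 ≤ spherePotential p (source p ε α u) x₀ l z) :
    (‖y - x₀‖ / l) ^ p * u (inversion x₀ l y) ≤ u y := by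
  have hratio : ‖y - x₀‖ / l ≤ 1 := (div_le_one hl).2 hyl
  have hnorm : ‖l⁻¹ • (y - x₀)‖ = ‖y - x₀‖ / l := by
    rw [norm_smul, norm_inv, Real.norm_of_nonneg hl.le, inv_mul_eq_div]
  have hsub := h.conformalDecay_source.potential_sub_inversion hl hy hyl
  have hfactor : 0 ≤ 1 - (‖y - x₀‖ / l) ^ 2 :=
    sub_nonneg.2 (pow_le_one₀ (by positivity) hratio)
  rw [h.eq_potential y, h.eq_potential (inversion x₀ l y), mul_left_comm]
  exact mul_le_mul_of_nonneg_left
    (sub_nonneg.1 (hsub ▸ mul_nonneg hfactor (hQ _ (hnorm.trans_le hratio)))) h.gamma_pos.le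

theorem spherePotential_zero_pos (h : IsSolution p γ ε α u) (x₀ : V) {z : V} (hz : ‖z‖ ≤ 1) :
    0 < spherePotential p (source p ε α u) x₀ 0 z := by
  rw [spherePotential, ← restrict_compl_singleton (μ := volume) x₀]
  exact setIntegral_pos_of_forall_pos (measurableSet_singleton x₀).compl
    (isOpen_compl_singleton.measure_ne_zero volume (nonempty_compl_of_nontrivial x₀))
    (h.conformalDecay_source.integrable_sphereKernel_mul x₀ 0 hz).integrableOn fun y hy =>
      mul_pos (sphereKernel_zero_pos h.exponent_ne_zero z (sub_ne_zero.2 hy)) (h.source_pos y)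

theorem spherePotential_pos (h : IsSolution p γ ε α u) {T : ℝ}
    (hG : AntitoneOn (nonlin ε α) (Ioc 0 T)) (hα : α * p ≤ (2 * finrank ℝ V + p : ℕ))
    {x₀ : V} {l : ℝ} (hl : 0 < l) (hlx : l ^ 2 < 1 + ‖x₀‖ ^ 2)
    (hT : ∀ y ∈ ball x₀ l, sphereLift p u y ≤ T)
    (hQ : ∀ z, ‖z‖ ≤ 1 → 0 ≤ spherePotential p (source p ε α u) x₀ l z) {z : V} (hz : ‖z‖ ≤ 1) :
    0 < spherePotential p (source p ε α u) x₀ l z := by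
  obtain ⟨hint, heq⟩ := h.conformalDecay_source.spherePotential_eq_setIntegral x₀ hl hz
  rw [heq]
  refine setIntegral_pos_of_forall_pos (measurableSet_ball.diff (measurableSet_singleton x₀)) ?_
    hint fun y hy => ?_
  · rw [measure_sdiff_null (measure_singleton x₀)]
    exact (measure_ball_pos volume x₀ hl).ne'
  · have hyl : ‖y - x₀‖ < l := mem_ball_iff_norm.1 hy.1
    have hreflect := h.pow_mul_inversion_le hl hy.2 hyl.le hQ
    exact mul_pos_of_neg_of_neg (sphereKernel_neg h.exponent_ne_zero hz hyl)
      (sub_neg.2 (h.source_lt hG hα hlx hy (hT y hy.1) hreflect))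

theorem spherePotential_nonneg (h : IsSolution p γ ε α u) {T : ℝ}
    (hG : AntitoneOn (nonlin ε α) (Ioc 0 T)) (hα : α * p ≤ (2 * finrank ℝ V + p : ℕ))
    {x₀ : V} {L : ℝ} (hL : 0 ≤ L) (hLx : L ^ 2 ≤ 1 + ‖x₀‖ ^ 2)
    (hT : ∀ y ∈ ball x₀ L, sphereLift p u y ≤ T) {z : V} (hz : ‖z‖ ≤ 1) :
    0 ≤ spherePotential p (source p ε α u) x₀ L z := by
  refine forall_nonneg_of_nonneg_imp_pos
    (h.conformalDecay_source.continuous_spherePotential x₀) hL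
    (fun z => (h.spherePotential_zero_pos x₀ (mem_closedBall_zero_iff.1 z.2)).le)
    (fun l hl hQ z => ?_) ⟨z, mem_closedBall_zero_iff.2 hz⟩
  have hz := mem_closedBall_zero_iff.1 z.2
  rcases hl.1.eq_or_lt with rfl | hl0
  · exact h.spherePotential_zero_pos x₀ hz
  · exact h.spherePotential_pos hG hα hl0
      ((pow_lt_pow_left₀ hl.2 hl.1 two_ne_zero).trans_le hLx)
      (fun y hy => hT y (ball_subset_ball hl.2.le hy))
      (fun z hz => hQ ⟨z, mem_closedBall_zero_iff.2 hz⟩) hz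

theorem pow_mul_integral_source_le (h : IsSolution p γ ε α u) {T : ℝ}
    (hG : AntitoneOn (nonlin ε α) (Ioc 0 T)) (hα : α * p ≤ (2 * finrank ℝ V + p : ℕ))
    {x₀ : V} {L : ℝ} (hL : 0 ≤ L) (hLx : L ^ 2 ≤ 1 + ‖x₀‖ ^ 2)
    (hT : ∀ y ∈ ball x₀ L, sphereLift p u y ≤ T) :
    L ^ p * (γ * ∫ y, source p ε α u y) ≤ u x₀ := by
  have hQ := h.spherePotential_nonneg hG hα hL hLx hT (z := 0) (by simp)
  rw [← h.conformalDecay_source.potential_center_sub, abs_of_nonneg hL, sub_nonneg] at hQ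
  rw [h.eq_potential x₀, mul_left_comm]
  exact mul_le_mul_of_nonneg_left hQ h.gamma_pos.le

theorem sphereLift_inversion_le (h : IsSolution p γ ε α u) {T : ℝ}
    (hG : AntitoneOn (nonlin ε α) (Ioc 0 T)) (hα : α * p ≤ (2 * finrank ℝ V + p : ℕ))
    {c y : V} {R : ℝ} (hR : 0 < R) (hRc : R ^ 2 = 1 + ‖c‖ ^ 2)
    (hT : ∀ x ∈ ball c R, sphereLift p u x ≤ T) (hy : y ≠ c) (hyR : ‖y - c‖ ≤ R) :
    sphereLift p u (inversion c R y) ≤ sphereLift p u y := by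
  have hreflect := h.pow_mul_inversion_le hR hy hyR
    fun z hz => h.spherePotential_nonneg hG hα hR.le hRc.le hT hz
  rw [sphereLift, sphereLift, conformalRoot_inversion hR hRc hy, mul_pow, mul_right_comm, mul_comm]
  exact mul_le_mul_of_nonneg_left hreflect (pow_nonneg (conformalRoot_pos y).le p)

theorem measurable_source (h : IsSolution p γ ε α u) : Measurable (source p ε α u) := by
  have hnonlin : Continuous fun y => nonlin ε α (sphereLift p u y) :=
    (h.continuous_sphereLift.const_mul ε).add
      (h.continuous_sphereLift.rpow_const fun y => Or.inl (h.sphereLift_pos y).ne')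
  exact ((continuous_conformalRoot.pow _).mul hnonlin).measurable

/-- The inversions with `R ^ 2 = 1 + ‖c‖ ^ 2` are isometries of the sphere, so they preserve
solutions. -/
theorem exists_sphereLift_eq_comp_inversion (h : IsSolution p γ ε α u) {c : V} {R : ℝ}
    (hR : 0 < R) (hRc : R ^ 2 = 1 + ‖c‖ ^ 2) :
    ∃ w, IsSolution p γ ε α w ∧
      ∀ x, x ≠ c → sphereLift p w x = sphereLift p u (inversion c R x) := by
  set g : V → ℝ := fun y =>
    (R / ‖y - c‖) ^ (2 * finrank ℝ V + p) * source p ε α u (inversion c R y) with hg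
  set w : V → ℝ := fun x => γ * potential p g x with hw
  have hdecay : ConformalDecay p g :=
    h.conformalDecay_source.comp_inversion h.measurable_source hR hRc
  have hlift : ∀ x, x ≠ c → sphereLift p w x = sphereLift p u (inversion c R x) := fun x hx => by
    rw [sphereLift, sphereLift, conformalRoot_inversion hR hRc hx, h.eq_potential, hw, hg]
    simp only [potential_inversion p _ hR.ne' hx]
    ring
  have hcont : Continuous (sphereLift p w) :=
    (continuous_conformalRoot.pow p).mul (hdecay.continuous_potential.const_mul γ)
  obtain ⟨a, b, ha, hb⟩ := h.exists_bounds
  have hbounds : ∀ x, sphereLift p w x ∈ Icc a b :=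
    forall_mem_of_isClosed_of_forall_ne (a := c) (isClosed_Icc.preimage hcont) fun x hx => by
      change sphereLift p w x ∈ Icc a b
      exact (hlift x hx).symm ▸ hb _
  have hsource : ∀ y, y ≠ c → g y = source p ε α w y := fun y hy => by
    rw [hg, source, hlift y hy, ← pow_mul_conformalRoot_inversion_pow hR hRc hy, mul_assoc]
    rfl
  refine ⟨w, ⟨h.exponent_ne_zero, h.gamma_pos, h.eps_pos, h.alpha_pos, ⟨a, b, ha, hbounds⟩,
    fun x => congrArg (γ * ·) (integral_congr_ae ?_)⟩, hlift⟩
  filter_upwards [Measure.ae_ne volume c] with y hy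
  simp only [hsource y hy]

theorem le_two_pow_mul (h : IsSolution p γ ε α u) (x x₀ : V) :
    u x ≤ 2 ^ p * (‖x - x₀‖ ^ p * (γ * ∫ y, source p ε α u y) + u x₀) := by
  have hle := mul_le_mul_of_nonneg_left
    (h.conformalDecay_source.potential_le_two_pow_mul (fun y => (h.source_pos y).le) x x₀)
    h.gamma_pos.le
  rw [h.eq_potential x, h.eq_potential x₀]
  linarith

theorem sphereLift_le_of_integral_le (h : IsSolution p γ ε α u) {x : V}
    (hx : min 1 ‖x‖ ^ p * (γ * ∫ y, source p ε α u y) ≤ u 0) :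
    sphereLift p u x ≤ 2 * 4 ^ p * u 0 := by
  have hroot := conformalRoot_pos x
  have hmass : 0 ≤ γ * ∫ y, source p ε α u y :=
    mul_nonneg h.gamma_pos.le (integral_nonneg fun y => (h.source_pos y).le)
  have hu := (h.pos 0).le
  calc conformalRoot x ^ p * u x
      ≤ conformalRoot x ^ p * (2 ^ p * (‖x‖ ^ p * (γ * ∫ y, source p ε α u y) + u 0)) := by
        gcongr
        simpa using h.le_two_pow_mul x 0
    _ = 2 ^ p * ((conformalRoot x * ‖x‖) ^ p * (γ * ∫ y, source p ε α u y) +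
          conformalRoot x ^ p * u 0) := by ring
    _ ≤ 2 ^ p * ((2 * min 1 ‖x‖) ^ p * (γ * ∫ y, source p ε α u y) + 2 ^ p * u 0) := by
        gcongr 2 ^ p * (?_ * _ + ?_ * _)
        · exact pow_le_pow_left₀ (by positivity) (conformalRoot_mul_norm_le x) p
        · exact pow_le_pow_left₀ hroot.le (conformalRoot_le_two x) p
    _ = 4 ^ p * (min 1 ‖x‖ ^ p * (γ * ∫ y, source p ε α u y)) + 4 ^ p * u 0 := by
        rw [mul_pow, show (4 : ℝ) = 2 * 2 by norm_num, mul_pow]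
        ring
    _ ≤ 4 ^ p * u 0 + 4 ^ p * u 0 := by gcongr
    _ = 2 * 4 ^ p * u 0 := by ring

/-- At a point of smallest norm where the lift reaches `T`, moving spheres about the origin still
apply, and the resulting Harnack bound is less than `T`. -/
theorem sphereLift_lt (h : IsSolution p γ ε α u) {T : ℝ}
    (hG : AntitoneOn (nonlin ε α) (Ioc 0 T)) (hα : α * p ≤ (2 * finrank ℝ V + p : ℕ))
    (h0 : 2 * 4 ^ p * sphereLift p u 0 < T) (x : V) : sphereLift p u x < T := by
  by_contra! hx
  have hclosed : IsClosed {y | T ≤ sphereLift p u y} :=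
    isClosed_le continuous_const h.continuous_sphereLift
  obtain ⟨y, hyT, hy⟩ := hclosed.exists_infDist_eq_dist ⟨x, hx⟩ 0
  have hball : ∀ z ∈ ball (0 : V) (min 1 ‖y‖), sphereLift p u z ≤ T := fun z hz => by
    by_contra! hzT
    have hyz := infDist_le_dist_of_mem (x := (0 : V)) (s := {y | T ≤ sphereLift p u y}) hzT.le
    rw [hy, dist_zero_left, dist_zero_left] at hyz
    exact hyz.not_gt ((mem_ball_zero_iff.1 hz).trans_le (min_le_right _ _))
  have hmass := h.pow_mul_integral_source_le hG hα (le_min zero_le_one (norm_nonneg y))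
    ((pow_le_one₀ (le_min zero_le_one (norm_nonneg y)) (min_le_left 1 ‖y‖)).trans (by simp)) hball
  have hlift0 : u 0 ≤ sphereLift p u 0 :=
    le_mul_of_one_le_left (h.pos 0).le (one_le_pow₀ one_le_conformalRoot_zero)
  have hlt : sphereLift p u y < T :=
    calc sphereLift p u y ≤ 2 * 4 ^ p * u 0 := h.sphereLift_le_of_integral_le hmass
      _ ≤ 2 * 4 ^ p * sphereLift p u 0 := by gcongr
      _ < T := h0
  exact hlt.not_ge hyT

theorem sphereLift_le_of_exists (h : IsSolution p γ ε α u) {T : ℝ}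
    (hG : AntitoneOn (nonlin ε α) (Ioc 0 T)) (hα : α * p ≤ (2 * finrank ℝ V + p : ℕ))
    (hex : ∃ x, 2 * 4 ^ p * sphereLift p u x < T) (x : V) : sphereLift p u x ≤ T := by
  obtain ⟨x₀, hx₀⟩ := hex
  rcases eq_or_ne x₀ 0 with rfl | hne
  · exact (h.sphereLift_lt hG hα hx₀ x).le
  obtain ⟨c, R, hR, hRc, h0c, -, hinv⟩ :=
    exists_inversion_eq (x := (0 : V)) (y := x₀) (by simpa using hne)
  obtain ⟨w, hw, hlift⟩ := h.exists_sphereLift_eq_comp_inversion hR hRc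
  have hw0 : 2 * 4 ^ p * sphereLift p w 0 < T := by rwa [hlift 0 h0c, hinv]
  refine forall_mem_of_isClosed_of_forall_ne (a := c)
    (isClosed_le h.continuous_sphereLift continuous_const) (fun y hy => ?_) x
  have hwy := hw.sphereLift_lt hG hα hw0 (inversion c R y)
  rw [hlift _ (inversion_ne_center hR.ne' hy), inversion_inversion c hR.ne'] at hwy
  exact hwy.le

theorem sphereLift_inversion_eq (h : IsSolution p γ ε α u) {T : ℝ}
    (hG : AntitoneOn (nonlin ε α) (Ioc 0 T)) (hα : α * p ≤ (2 * finrank ℝ V + p : ℕ))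
    (hT : ∀ x, sphereLift p u x ≤ T) {c y : V} {R : ℝ} (hR : 0 < R) (hRc : R ^ 2 = 1 + ‖c‖ ^ 2)
    (hy : y ≠ c) (hyR : ‖y - c‖ ≤ R) :
    sphereLift p u (inversion c R y) = sphereLift p u y := by
  obtain ⟨w, hw, hlift⟩ := h.exists_sphereLift_eq_comp_inversion hR hRc
  have hwT : ∀ x, sphereLift p w x ≤ T :=
    forall_mem_of_isClosed_of_forall_ne (isClosed_le hw.continuous_sphereLift continuous_const)
      fun x hx => (hlift x hx).trans_le (hT _)
  have hle := hw.sphereLift_inversion_le hG hα hR hRc (fun x _ => hwT x) hy hyR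
  rw [hlift y hy, hlift _ (inversion_ne_center hR.ne' hy), inversion_inversion c hR.ne'] at hle
  exact (h.sphereLift_inversion_le hG hα hR hRc (fun x _ => hT x) hy hyR).antisymm hle

theorem exists_sphereLift_eq_const (h : IsSolution p γ ε α u) {T : ℝ}
    (hG : AntitoneOn (nonlin ε α) (Ioc 0 T)) (hα : α * p ≤ (2 * finrank ℝ V + p : ℕ))
    (hT : ∀ x, sphereLift p u x ≤ T) : ∃ κ, ∀ x, sphereLift p u x = κ := by
  have heq : ∀ x y : V, ‖x‖ < ‖y‖ → sphereLift p u y = sphereLift p u x := fun x y hxy => by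
    obtain ⟨c, R, hR, hRc, hxc, hxR, rfl⟩ := exists_inversion_eq hxy
    exact h.sphereLift_inversion_eq hG hα hT hR hRc hxc hxR
  refine ⟨sphereLift p u 0, fun x => ?_⟩
  obtain ⟨y, hy⟩ := NormedSpace.exists_lt_norm ℝ V ‖x‖
  rw [← heq x y hy, heq 0 y (norm_zero.trans_lt ((norm_nonneg x).trans_lt hy))]

end IsSolution

variable (V) in
/-- The normalisation of `γ`: the constant function `1` on the sphere is its own potential. -/
def IsNormalizing (p : ℕ) (γ : ℝ) : Prop :=
  ∀ x : V, conformalRoot x ^ p *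
    (γ * potential p (fun y : V => conformalRoot y ^ (2 * finrank ℝ V + p)) x) = 1

theorem IsNormalizing.mul_potential_const_mul (hN : IsNormalizing V p γ) (K : ℝ) (x : V) :
    conformalRoot x ^ p *
      (γ * potential p (fun y : V => K * conformalRoot y ^ (2 * finrank ℝ V + p)) x) = K := by
  have hmul : potential p (fun y : V => K * conformalRoot y ^ (2 * finrank ℝ V + p)) x =
      K * potential p (fun y : V => conformalRoot y ^ (2 * finrank ℝ V + p)) x := by
    rw [potential, potential, ← integral_const_mul]
    simp only [mul_left_comm]
  rw [hmul, mul_left_comm γ, mul_left_comm, hN x, mul_one]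

/-- A bound on `ε` below which `nonlin ε α` is decreasing up to `8 * 4 ^ p + 1`, for all
`1 ≤ α ≤ (2n + p) / p`. -/
noncomputable def liouvilleThreshold (n p : ℕ) : ℝ :=
  min (1 / 2) ((8 * 4 ^ p + 1) ^ (-((2 * n + p) / p : ℝ) - 1))

theorem liouvilleThreshold_pos (n p : ℕ) : 0 < liouvilleThreshold n p :=
  lt_min one_half_pos (by positivity)

theorem liouvilleThreshold_le_half (n p : ℕ) : liouvilleThreshold n p ≤ 1 / 2 :=
  min_le_left _ _

theorem antitoneOn_nonlin_of_lt_liouvilleThreshold {n : ℕ} (hp : p ≠ 0)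
    (hε : ε < liouvilleThreshold n p) (h1 : 1 ≤ α) (hα : α * p ≤ (2 * n + p : ℕ)) :
    AntitoneOn (nonlin ε α) (Ioc 0 (8 * 4 ^ p + 1)) := by
  have hp0 : (0 : ℝ) < p := by positivity
  have hαle : α ≤ (2 * n + p) / p := (le_div_iff₀ hp0).2 (by exact_mod_cast hα)
  refine antitoneOn_nonlin (zero_le_one.trans h1) ?_
  calc ε ≤ (8 * 4 ^ p + 1) ^ (-((2 * n + p) / p : ℝ) - 1) := (hε.trans_le (min_le_right _ _)).le
    _ ≤ (8 * 4 ^ p + 1) ^ (-α - 1) :=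
      Real.rpow_le_rpow_of_exponent_le (le_add_of_nonneg_left (by positivity)) (by linarith)
    _ ≤ α * (8 * 4 ^ p + 1) ^ (-α - 1) := le_mul_of_one_le_left (by positivity) h1

namespace IsSolution

variable [Nontrivial V]

theorem sphereLift_le_of_nonlin_le (h : IsSolution p γ ε α u) (hN : IsNormalizing V p γ) {K : ℝ}
    (hK : ∀ y, nonlin ε α (sphereLift p u y) ≤ K) (x : V) : sphereLift p u x ≤ K := by
  have hle : ∀ y, source p ε α u y ≤ K * conformalRoot y ^ (2 * finrank ℝ V + p) := fun y => by
    rw [source, mul_comm]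
    exact mul_le_mul_of_nonneg_right (hK y) (pow_nonneg (conformalRoot_pos y).le _)
  rw [sphereLift, h.eq_potential, ← hN.mul_potential_const_mul K x]
  have hroot := conformalRoot_pos x
  have hγ := h.gamma_pos
  gcongr
  exact h.conformalDecay_source.potential_mono
    (conformalDecay_const_mul_conformalRoot_pow K) hle x

theorem le_sphereLift_of_le_nonlin (h : IsSolution p γ ε α u) (hN : IsNormalizing V p γ) {K : ℝ}
    (hK : ∀ y, K ≤ nonlin ε α (sphereLift p u y)) (x : V) : K ≤ sphereLift p u x := by
  have hle : ∀ y, K * conformalRoot y ^ (2 * finrank ℝ V + p) ≤ source p ε α u y := fun y => by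
    rw [source, mul_comm]
    exact mul_le_mul_of_nonneg_left (hK y) (pow_nonneg (conformalRoot_pos y).le _)
  rw [sphereLift, h.eq_potential, ← hN.mul_potential_const_mul K x]
  have hroot := conformalRoot_pos x
  have hγ := h.gamma_pos
  gcongr
  exact (conformalDecay_const_mul_conformalRoot_pow K).potential_mono
    h.conformalDecay_source hle x

theorem iSup_sphereLift_le (h : IsSolution p γ ε α u) (hN : IsNormalizing V p γ) :
    ⨆ x, sphereLift p u x ≤ ε * (⨆ x, sphereLift p u x) + (⨅ x, sphereLift p u x) ^ (-α) :=
  ciSup_le <| h.sphereLift_le_of_nonlin_le hN fun y =>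
    nonlin_le_add h.eps_pos.le h.alpha_pos.le h.iInf_sphereLift_pos
      (ciInf_le h.bddBelow_range_sphereLift y) (le_ciSup h.bddAbove_range_sphereLift y)

theorem le_iInf_sphereLift (h : IsSolution p γ ε α u) (hN : IsNormalizing V p γ) :
    ε * (⨅ x, sphereLift p u x) + (⨆ x, sphereLift p u x) ^ (-α) ≤ ⨅ x, sphereLift p u x :=
  le_ciInf <| h.le_sphereLift_of_le_nonlin hN fun y =>
    add_le_nonlin h.eps_pos.le h.alpha_pos.le h.iInf_sphereLift_pos
      (ciInf_le h.bddBelow_range_sphereLift y) (le_ciSup h.bddAbove_range_sphereLift y)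

theorem exists_sphereLift_lt_four (h : IsSolution p γ ε α u) (hN : IsNormalizing V p γ)
    (hε : ε ≤ 1 / 2) : ∃ x, sphereLift p u x < 4 := by
  by_contra! hfour
  have hinf : (⨅ x, sphereLift p u x) ^ (-α) ≤ 1 :=
    Real.rpow_le_one_of_one_le_of_nonpos (le_ciInf fun x => (by norm_num : (1 : ℝ) ≤ 4).trans
      (hfour x)) (neg_nonpos.2 h.alpha_pos.le)
  have hsup : 4 ≤ ⨆ x, sphereLift p u x :=
    (hfour 0).trans (le_ciSup h.bddAbove_range_sphereLift 0)
  nlinarith [h.iSup_sphereLift_le hN]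

theorem exists_sphereLift_eq_const_of_lt_one (h : IsSolution p γ ε α u)
    (hN : IsNormalizing V p γ) (hε : ε < 1) (hα : α < 1) : ∃ κ, ∀ x, sphereLift p u x = κ := by
  have hinf_le x := ciInf_le h.bddBelow_range_sphereLift x
  have hle_sup x := le_ciSup h.bddAbove_range_sphereLift x
  have hinf := h.iInf_sphereLift_pos
  have hsup_inf : ⨆ x, sphereLift p u x ≤ ⨅ x, sphereLift p u x :=
    le_of_le_rpow_neg_of_rpow_neg_le hα (sub_pos.2 hε)
      (hinf.trans_le ((hinf_le 0).trans (hle_sup 0))) hinf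
      (by linarith [h.iSup_sphereLift_le hN]) (by linarith [h.le_iInf_sphereLift hN])
  exact ⟨_, fun x => ((hle_sup x).trans hsup_inf).antisymm (hinf_le x)⟩

theorem exists_sphereLift_eq_const_of_one_le (h : IsSolution p γ ε α u)
    (hN : IsNormalizing V p γ) (hε : ε < liouvilleThreshold (finrank ℝ V) p)
    (h1 : 1 ≤ α) (hα : α * p ≤ (2 * finrank ℝ V + p : ℕ)) : ∃ κ, ∀ x, sphereLift p u x = κ := by
  have hG := antitoneOn_nonlin_of_lt_liouvilleThreshold h.exponent_ne_zero hε h1 hα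
  obtain ⟨x, hx⟩ := h.exists_sphereLift_lt_four hN (hε.le.trans (liouvilleThreshold_le_half _ _))
  have hlt : 2 * 4 ^ p * sphereLift p u x < 8 * 4 ^ p + 1 := by
    linarith [mul_lt_mul_of_pos_left hx (by positivity : (0 : ℝ) < 2 * 4 ^ p)]
  exact h.exists_sphereLift_eq_const hG hα (h.sphereLift_le_of_exists hG hα ⟨x, hlt⟩)

theorem eq_rpow_of_sphereLift_eq_const (h : IsSolution p γ ε α u) (hN : IsNormalizing V p γ)
    {κ : ℝ} (hκ : ∀ x, sphereLift p u x = κ) : κ = (1 - ε) ^ (-1 / (α + 1)) := by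
  refine eq_rpow_of_nonlin_eq_self (by linarith [h.alpha_pos]) (hκ 0 ▸ h.sphereLift_pos 0) ?_
  exact le_antisymm
    ((h.le_sphereLift_of_le_nonlin hN (fun y => by rw [hκ]) 0).trans_eq (hκ 0))
    ((hκ 0).ge.trans (h.sphereLift_le_of_nonlin_le hN (fun y => by rw [hκ]) 0))

theorem sphereLift_eq (h : IsSolution p γ ε α u) (hN : IsNormalizing V p γ)
    (hε : ε < liouvilleThreshold (finrank ℝ V) p) (hα : α * p ≤ (2 * finrank ℝ V + p : ℕ))
    (x : V) : sphereLift p u x = (1 - ε) ^ (-1 / (α + 1)) := by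
  have hε1 : ε < 1 := (hε.trans_le (liouvilleThreshold_le_half _ _)).trans one_half_lt_one
  have hconst : ∃ κ, ∀ x, sphereLift p u x = κ := by
    rcases lt_or_ge α 1 with h1 | h1
    · exact h.exists_sphereLift_eq_const_of_lt_one hN hε1 h1
    · exact h.exists_sphereLift_eq_const_of_one_le hN hε h1 hα
  obtain ⟨κ, hκ⟩ := hconst
  rw [hκ x, h.eq_rpow_of_sphereLift_eq_const hN hκ]

end IsSolution

end Solution

section Stereographic

variable {V : Type*} [NormedAddCommGroup V]

theorem two_div_rpow_eq_conformalRoot_rpow (x : V) (r : ℝ) :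
    (2 / (1 + ‖x‖ ^ 2)) ^ r = conformalRoot x ^ (2 * r) := by
  rw [← conformalRoot_sq, ← Real.rpow_natCast, ← Real.rpow_mul (conformalRoot_pos x).le,
    Nat.cast_ofNat]

theorem one_add_norm_sq_div_two_rpow (p : ℕ) (x : V) :
    ((1 + ‖x‖ ^ 2) / 2) ^ ((p : ℝ) / 2) = (conformalRoot x ^ p)⁻¹ := by
  rw [← inv_div 2, Real.inv_rpow (by positivity), two_div_rpow_eq_conformalRoot_rpow,
    mul_div_cancel₀ _ two_ne_zero, Real.rpow_natCast]

theorem one_add_norm_sq_rpow (p : ℕ) (x : V) :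
    (1 + ‖x‖ ^ 2) ^ ((p : ℝ) / 2) = 2 ^ ((p : ℝ) / 2) * (conformalRoot x ^ p)⁻¹ := by
  rw [← one_add_norm_sq_div_two_rpow, ← Real.mul_rpow zero_le_two (by positivity),
    mul_div_cancel₀ _ two_ne_zero]

theorem exists_bounds_sphereLift {p : ℕ} {u : V → ℝ} {c : ℝ} (hc : 0 < c)
    (hb : ∀ x, c⁻¹ * (1 + ‖x‖ ^ 2) ^ ((p : ℝ) / 2) ≤ u x ∧
      u x ≤ c * (1 + ‖x‖ ^ 2) ^ ((p : ℝ) / 2)) :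
    ∃ a b, 0 < a ∧ ∀ x, a ≤ sphereLift p u x ∧ sphereLift p u x ≤ b := by
  refine ⟨c⁻¹ * 2 ^ ((p : ℝ) / 2), c * 2 ^ ((p : ℝ) / 2), by positivity, fun x => ?_⟩
  have hpos := pow_pos (conformalRoot_pos x) p
  have hx := hb x
  rwa [one_add_norm_sq_rpow, ← mul_assoc, ← mul_assoc, ← div_eq_mul_inv, ← div_eq_mul_inv,
    div_le_iff₀' hpos, le_div_iff₀' hpos] at hx

end Stereographic

theorem sphF_eq_source {n m p : ℕ} (hp : n + p = 2 * m) (ε α : ℝ)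
    {u : EuclideanSpace ℝ (Fin n) → ℝ} {y : EuclideanSpace ℝ (Fin n)} (hu : 0 < u y) :
    sphF n m ε α u y = source p ε α u y := by
  have hroot := conformalRoot_pos y
  have hpR : (2 * m : ℝ) = n + p := by exact_mod_cast hp.symm
  have hlinear : conformalRoot y ^ (2 * n + p) * (conformalRoot y ^ p * u y) =
      (2 / (1 + ‖y‖ ^ 2)) ^ (2 * m) * u y := by
    rw [← conformalRoot_sq, ← pow_mul, ← mul_assoc, ← pow_add, ← hp]
    ring
  have hexp : 2 * (((n : ℝ) + 2 * m) / 2 + α * ((n : ℝ) - 2 * m) / 2) =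
      (2 * n + p : ℕ) + p * -α := by
    push_cast
    linear_combination (1 - α) * hpR
  have hpower : conformalRoot y ^ (2 * n + p) * (conformalRoot y ^ p * u y) ^ (-α) =
      (2 / (1 + ‖y‖ ^ 2)) ^ (((n : ℝ) + 2 * m) / 2 + α * ((n : ℝ) - 2 * m) / 2) *
        u y ^ (-α) := by
    rw [two_div_rpow_eq_conformalRoot_rpow, hexp, Real.rpow_add hroot, Real.rpow_natCast,
      Real.rpow_mul hroot.le, Real.rpow_natCast, Real.mul_rpow (by positivity) hu.le, mul_assoc]
  rw [sphF, source, finrank_euclideanSpace_fin, nonlin, sphereLift, mul_add, mul_left_comm,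
    hlinear, hpower, mul_assoc]

theorem isNormalizing_of_forall_eq {n p : ℕ} {γ : ℝ}
    (hγ : ∀ x : EuclideanSpace ℝ (Fin n), ((1 + ‖x‖ ^ 2) / 2) ^ ((p : ℝ) / 2) =
      γ * ∫ y, ‖x - y‖ ^ p * (2 / (1 + ‖y‖ ^ 2)) ^ ((2 * (n : ℝ) + p) / 2)) :
    IsNormalizing (EuclideanSpace ℝ (Fin n)) p γ := fun x => by
  have hpow : ∀ y : EuclideanSpace ℝ (Fin n), (2 / (1 + ‖y‖ ^ 2)) ^ ((2 * (n : ℝ) + p) / 2) =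
      conformalRoot y ^ (2 * n + p) := fun y => by
    rw [two_div_rpow_eq_conformalRoot_rpow, mul_div_cancel₀ _ two_ne_zero, ← Real.rpow_natCast]
    push_cast
    rfl
  have hx := hγ x
  simp only [hpow, one_add_norm_sq_div_two_rpow] at hx
  rw [finrank_euclideanSpace_fin, potential, ← hx,
    mul_inv_cancel₀ (pow_pos (conformalRoot_pos x) p).ne']

theorem isSolution_of_forall_eq {n m p : ℕ} (hp : n + p = 2 * m) (hp0 : p ≠ 0) {γ ε α c : ℝ}
    (hγ : 0 < γ) (hε : 0 < ε) (hα : 0 < α) (hc : 0 < c) {u : EuclideanSpace ℝ (Fin n) → ℝ}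
    (hb : ∀ x, c⁻¹ * (1 + ‖x‖ ^ 2) ^ ((p : ℝ) / 2) ≤ u x ∧
      u x ≤ c * (1 + ‖x‖ ^ 2) ^ ((p : ℝ) / 2))
    (heq : ∀ x, u x = γ * ∫ y, ‖x - y‖ ^ p * sphF n m ε α u y) : IsSolution p γ ε α u := by
  have hpos : ∀ x, 0 < u x := fun x => lt_of_lt_of_le (by positivity) (hb x).1
  refine ⟨hp0, hγ, hε, hα, exists_bounds_sphereLift hc hb, fun x => ?_⟩
  rw [heq x, potential]
  simp only [sphF_eq_source hp ε α (hpos _)]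

end MovingSpheres

open MovingSpheres in
theorem stmt13_general (n m : ℕ) (hn : 0 < n) (hmn : n < 2 * m) (γ : ℝ) (hγ : 0 < γ)
    (hγeq : ∀ x : EuclideanSpace ℝ (Fin n),
      ((1 + ‖x‖ ^ 2) / 2) ^ ((2 * (m : ℝ) - n) / 2) =
        γ * ∫ y, ‖x - y‖ ^ (2 * m - n) * (2 / (1 + ‖y‖ ^ 2)) ^ (((n : ℝ) + 2 * m) / 2)) :
    ∃ εs : ℝ, 0 < εs ∧ εs < 1 ∧
      ∀ ε : ℝ, 0 < ε → ε < εs →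
      ∀ α : ℝ, 0 < α → α ≤ ((n : ℝ) + 2 * m) / (2 * (m : ℝ) - n) →
      ∀ u : EuclideanSpace ℝ (Fin n) → ℝ,
      (∃ c : ℝ, 0 < c ∧ ∀ x,
        c⁻¹ * (1 + ‖x‖ ^ 2) ^ ((2 * (m : ℝ) - n) / 2) ≤ u x ∧
          u x ≤ c * (1 + ‖x‖ ^ 2) ^ ((2 * (m : ℝ) - n) / 2)) →
      (∀ x, u x = γ * ∫ y, ‖x - y‖ ^ (2 * m - n) * sphF n m ε α u y) →
      ∀ x : EuclideanSpace ℝ (Fin n),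
        u x = (1 - ε) ^ (-1 / (α + 1)) * ((1 + ‖x‖ ^ 2) / 2) ^ ((2 * (m : ℝ) - n) / 2) := by
  obtain ⟨p, hp⟩ := Nat.exists_eq_add_of_le hmn.le
  have hpm : 2 * m - n = p := by omega
  have hpR : 2 * (m : ℝ) - n = p := sub_eq_of_eq_add' (by exact_mod_cast hp)
  have hnR : (n : ℝ) + 2 * m = 2 * n + p := by linarith
  have hp0 : 0 < p := by omega
  have : Nontrivial (EuclideanSpace ℝ (Fin n)) :=
    Module.nontrivial_of_finrank_pos (R := ℝ) (by rwa [finrank_euclideanSpace_fin])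
  simp only [hpm, hpR, hnR] at hγeq ⊢
  refine ⟨liouvilleThreshold n p, liouvilleThreshold_pos n p,
    (liouvilleThreshold_le_half n p).trans_lt one_half_lt_one, ?_⟩
  rintro ε hε hεs α hα hαp u ⟨c, hc, hb⟩ heq x
  rw [le_div_iff₀ (Nat.cast_pos.2 hp0)] at hαp
  have hu := isSolution_of_forall_eq hp.symm hp0.ne' hγ hε hα hc hb heq
  have hlift := hu.sphereLift_eq (isNormalizing_of_forall_eq hγeq)
    (by rwa [finrank_euclideanSpace_fin])
    (by rw [finrank_euclideanSpace_fin]; exact_mod_cast hαp) x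
  rw [one_add_norm_sq_div_two_rpow, ← hlift, sphereLift, ← div_eq_mul_inv,
    mul_div_cancel_left₀ _ (pow_pos (conformalRoot_pos x) p).ne']

/-- Liouville result: there is `ε_* ∈ (0,1)`, depending only on `n` and `m`, such that
for `ε ∈ (0, ε_*)` and `α ∈ (0, (n+2m)/(2m−n)]`, any positive smooth solution of
`u(x) = γ ∫ |x−y|^{2m−n} F_{ε,u}(y) dy` with growth `u ≍ (1+|x|²)^{(2m−n)/2}` equals
`(1−ε)^{−1/(α+1)} ((1+|x|²)/2)^{(2m−n)/2}`. -/
theorem stmt13 (n m : ℕ) (hn : 3 ≤ n) (hodd : Odd n) (hmn : n < 2 * m)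
    (γ : ℝ) (hγ : 0 < γ)
    (hγeq : ∀ x : EuclideanSpace ℝ (Fin n),
      ((1 + ‖x‖ ^ 2) / 2) ^ ((2 * (m : ℝ) - n) / 2) =
        γ * ∫ y, ‖x - y‖ ^ (2 * m - n) * (2 / (1 + ‖y‖ ^ 2)) ^ (((n : ℝ) + 2 * m) / 2)) :
    ∃ εs : ℝ, 0 < εs ∧ εs < 1 ∧
      ∀ ε : ℝ, 0 < ε → ε < εs →
      ∀ α : ℝ, 0 < α → α ≤ ((n : ℝ) + 2 * m) / (2 * (m : ℝ) - n) →
      ∀ u : EuclideanSpace ℝ (Fin n) → ℝ, ContDiff ℝ (⊤ : ℕ∞) u → (∀ x, 0 < u x) →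
      (∃ c : ℝ, 0 < c ∧ ∀ x,
        c⁻¹ * (1 + ‖x‖ ^ 2) ^ ((2 * (m : ℝ) - n) / 2) ≤ u x ∧
          u x ≤ c * (1 + ‖x‖ ^ 2) ^ ((2 * (m : ℝ) - n) / 2)) →
      (∀ x, u x = γ * ∫ y, ‖x - y‖ ^ (2 * m - n) * sphF n m ε α u y) →
      ∀ x : EuclideanSpace ℝ (Fin n),
        u x = (1 - ε) ^ (-1 / (α + 1)) * ((1 + ‖x‖ ^ 2) / 2) ^ ((2 * (m : ℝ) - n) / 2) := by
  obtain ⟨εs, hpos, hlt, h⟩ := stmt13_general n m (by omega) hmn γ hγ hγeq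
  exact ⟨εs, hpos, hlt, fun ε hε hεs α hα hαp u _ _ => h ε hε hεs α hα hαp u⟩
end

section
/- Let ε^* ∈ (0,1) and α ∈ (0, (2m+n)/(2m−n)] be fixed. Then there exists a constant C > 0, depending only on n, m, ε^* and α, such that: for every ε ∈ (0, ε^*) and every positive smooth function u on ℝⁿ satisfying u(x) = γ ∫_{ℝⁿ} |x−y|^{2m−n} F_{ε,u}(y) dy for all x and admitting some constant c > 0 with c^{−1}(1+|x|²)^{(2m−n)/2} ≤ u(x) ≤ c(1+|x|²)^{(2m−n)/2} for all x, one has the uniform bounds C^{−1}(1+|x|²)^{(2m−n)/2} ≤ u(x) ≤ C(1+|x|²)^{(2m−n)/2} for all x ∈ ℝⁿ. Moreover, if α < (2m+n)/(2m−n), the same conclusion holds for every ε ∈ [0, ε^*). -/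
open MeasureTheory

/-!
In stereographic coordinates the equation becomes `v = γ ∫ d(·, y) ^ k h(v(y)) dσ(y)` on the unit
sphere, where `v = f ^ (k / 2) u`, `d` is the chordal distance, `k = 2m - n` and
`h(t) = ε t + t ^ (-α)`. Testing it against conformal vector fields gives a Kazdan–Warner identity
`∫ ⟪p, ·⟫ g(v) dσ = 0` for every `p`, with `g` increasing. If the mass of `h(v)` concentrated at a
point, then `v` would nearly be an increasing function of the distance to that point, which the
identity excludes. So the mass is spread out, which is a Harnack inequality for `v`, and the
equation turns it into bounds that do not depend on `ε` and `v`.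
-/

namespace RoundSphere

open Module InnerProductSpace
open scoped RealInnerProductSpace

section Geometry

variable {E : Type*} [NormedAddCommGroup E]

/-- The factor `f x = 2 / (1 + ‖x‖²)` for which `f² |dx|²` is the round metric of the unit sphere
in stereographic coordinates. -/
noncomputable def conformalFactor (x : E) : ℝ := 2 / (1 + ‖x‖ ^ 2)

lemma conformalFactor_pos (x : E) : 0 < conformalFactor x := by
  unfold conformalFactor; positivity

lemma conformalFactor_mul (x : E) : conformalFactor x * (1 + ‖x‖ ^ 2) = 2 :=
  div_mul_cancel₀ _ (by positivity)

lemma conformalFactor_le_two (x : E) : conformalFactor x ≤ 2 := by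
  nlinarith [conformalFactor_mul x, conformalFactor_pos x, sq_nonneg ‖x‖]

lemma conformalFactor_mul_norm_le_one (x : E) : conformalFactor x * ‖x‖ ≤ 1 := by
  nlinarith [conformalFactor_mul x, conformalFactor_pos x, sq_nonneg (‖x‖ - 1)]

variable [InnerProductSpace ℝ E]

lemma hasFDerivAt_conformalFactor (x : E) :
    HasFDerivAt conformalFactor (-(conformalFactor x ^ 2) • innerSL ℝ x) x := by
  have hne : 1 + ‖x‖ ^ 2 ≠ 0 := by positivity
  have hsq : HasFDerivAt (fun y : E => 1 + ‖y‖ ^ 2) (2 • innerSL ℝ x) x :=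
    (hasStrictFDerivAt_norm_sq x).hasFDerivAt.const_add 1
  refine (((hasDerivAt_inv hne).comp_hasFDerivAt x hsq).const_mul 2).congr_fderiv ?_
  ext y
  simp only [conformalFactor, smul_apply, innerSL_apply_apply, smul_eq_mul,
    nsmul_eq_mul, Nat.cast_ofNat]
  field_simp

lemma differentiable_conformalFactor : Differentiable ℝ (conformalFactor : E → ℝ) :=
  fun x => (hasFDerivAt_conformalFactor x).differentiableAt

/-- Inverse stereographic projection onto the unit sphere of `E × ℝ`; infinity is sent to the
missing point `(0, -1)`. The distance between `spherePoint x` and `spherePoint y` is the chordal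
distance of `x` and `y`. -/
noncomputable def spherePoint (x : E) : WithLp 2 (E × ℝ) :=
  WithLp.toLp 2 (conformalFactor x • x, conformalFactor x - 1)

lemma spherePoint_fst (x : E) : (spherePoint x).fst = conformalFactor x • x := rfl

lemma spherePoint_snd (x : E) : (spherePoint x).snd = conformalFactor x - 1 := rfl

lemma inner_spherePoint (p : WithLp 2 (E × ℝ)) (x : E) :
    ⟪p, spherePoint x⟫ = conformalFactor x * ⟪p.fst, x⟫ + p.snd * (conformalFactor x - 1) := by
  have h : ⟪p, spherePoint x⟫ = ⟪p.fst, conformalFactor x • x⟫ + (conformalFactor x - 1) * p.snd :=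
    WithLp.prod_inner_apply p _
  rw [h, real_inner_smul_right, mul_comm p.snd]

lemma norm_spherePoint (x : E) : ‖spherePoint x‖ = 1 := by
  refine (sq_eq_sq₀ (norm_nonneg _) zero_le_one).1 ?_
  rw [← real_inner_self_eq_norm_sq, inner_spherePoint]
  rw [spherePoint_fst, spherePoint_snd, real_inner_smul_left, real_inner_self_eq_norm_sq]
  linear_combination conformalFactor x * conformalFactor_mul x

lemma abs_inner_spherePoint_le (p : WithLp 2 (E × ℝ)) (x : E) : |⟪p, spherePoint x⟫| ≤ ‖p‖ := by
  simpa only [norm_spherePoint, mul_one] using abs_real_inner_le_norm p (spherePoint x)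

lemma dist_spherePoint_sq (x y : E) :
    dist (spherePoint x) (spherePoint y) ^ 2 = 2 - 2 * ⟪spherePoint x, spherePoint y⟫ := by
  rw [dist_eq_norm, norm_sub_sq_real, norm_spherePoint, norm_spherePoint]; ring

lemma dist_spherePoint_sq_eq_mul (x y : E) :
    dist (spherePoint x) (spherePoint y) ^ 2 =
      conformalFactor x * conformalFactor y * ‖x - y‖ ^ 2 := by
  rw [dist_spherePoint_sq, inner_spherePoint, norm_sub_sq_real, spherePoint_fst, spherePoint_snd,
    real_inner_smul_left]
  linear_combination -conformalFactor x * conformalFactor_mul y -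
    conformalFactor y * conformalFactor_mul x

lemma dist_spherePoint_le_two (x y : E) : dist (spherePoint x) (spherePoint y) ≤ 2 := by
  refine (dist_le_norm_add_norm _ _).trans_eq ?_
  rw [norm_spherePoint, norm_spherePoint]; norm_num

lemma dist_spherePoint_le (x y : E) : dist (spherePoint x) (spherePoint y) ≤ 2 * dist x y := by
  refine abs_le_of_sq_le_sq' ?_ (by positivity) |>.2
  rw [dist_spherePoint_sq_eq_mul, mul_pow, dist_eq_norm]
  gcongr
  nlinarith [conformalFactor_le_two x, conformalFactor_le_two y, conformalFactor_pos x,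
    conformalFactor_pos y]

lemma dist_spherePoint_pos {x y : E} (h : x ≠ y) : 0 < dist (spherePoint x) (spherePoint y) := by
  refine dist_nonneg.lt_of_ne' (pow_ne_zero_iff two_ne_zero |>.1 ?_)
  rw [dist_spherePoint_sq_eq_mul]
  have := norm_sub_pos_iff.2 h
  have := conformalFactor_pos x
  have := conformalFactor_pos y
  positivity

lemma continuous_spherePoint : Continuous (spherePoint : E → WithLp 2 (E × ℝ)) :=
  (LipschitzWith.of_dist_le_mul (K := 2) dist_spherePoint_le).continuous

/-- The conformal vector field of the round sphere attached to `p`, in stereographic coordinates: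
the gradient of the linear function `x ↦ ⟪p, spherePoint x⟫` in the round metric. -/
noncomputable def conformalField (p : WithLp 2 (E × ℝ)) (x : E) : E :=
  ((1 + ‖x‖ ^ 2) / 2) • p.fst - (⟪p.fst, x⟫ + p.snd) • x

lemma hasFDerivAt_inner_spherePoint (p : WithLp 2 (E × ℝ)) (x : E) :
    HasFDerivAt (fun x => ⟪p, spherePoint x⟫)
      (conformalFactor x ^ 2 • innerSL ℝ (conformalField p x)) x := by
  have hf := hasFDerivAt_conformalFactor x
  have hp : HasFDerivAt (fun x => ⟪p.fst, x⟫) (innerSL ℝ p.fst) x := (innerSL ℝ p.fst).hasFDerivAt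
  simp only [inner_spherePoint]
  refine ((hf.mul hp).add ((hf.sub_const 1).const_mul p.snd)).congr_fderiv ?_
  ext y
  simp [conformalField]
  linear_combination - conformalFactor x * ⟪p.fst, y⟫ / 2 * conformalFactor_mul x

lemma conformalFactor_sq_mul_inner_conformalField (p q : WithLp 2 (E × ℝ)) (x : E) :
    conformalFactor x ^ 2 * ⟪conformalField p x, conformalField q x⟫ =
      ⟪p, q⟫ - ⟪p, spherePoint x⟫ * ⟪q, spherePoint x⟫ := by
  have hpq : ⟪p, q⟫ = ⟪p.fst, q.fst⟫ + q.snd * p.snd := WithLp.prod_inner_apply p q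
  rw [inner_spherePoint, inner_spherePoint, hpq]
  simp only [conformalField, inner_sub_left, inner_sub_right, real_inner_smul_left,
    real_inner_smul_right, real_inner_self_eq_norm_sq, real_inner_comm q.fst x]
  linear_combination (⟪p.fst, q.fst⟫ / 4 * (conformalFactor x * (1 + ‖x‖ ^ 2) + 2) -
    conformalFactor x / 2 * ((⟪p.fst, x⟫ + p.snd) * ⟪q.fst, x⟫ +
      (⟪q.fst, x⟫ + q.snd) * ⟪p.fst, x⟫) +
    conformalFactor x * (⟪p.fst, x⟫ + p.snd) * (⟪q.fst, x⟫ + q.snd)) * conformalFactor_mul x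

lemma conformalFactor_mul_norm_conformalField_le (p : WithLp 2 (E × ℝ)) (x : E) :
    conformalFactor x * ‖conformalField p x‖ ≤ ‖p‖ := by
  refine abs_le_of_sq_le_sq' ?_ (norm_nonneg p) |>.2
  rw [mul_pow, ← real_inner_self_eq_norm_sq, conformalFactor_sq_mul_inner_conformalField,
    real_inner_self_eq_norm_sq]
  nlinarith [sq_nonneg ⟪p, spherePoint x⟫]

end Geometry

section Divergence

variable {E : Type*} [NormedAddCommGroup E] [InnerProductSpace ℝ E]

lemma hasFDerivAt_conformalField (p : WithLp 2 (E × ℝ)) (x : E) :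
    HasFDerivAt (conformalField p)
      ((innerSL ℝ x).smulRight p.fst - ((⟪p.fst, x⟫ + p.snd) • ContinuousLinearMap.id ℝ E +
        (innerSL ℝ p.fst).smulRight x)) x := by
  have hsq : HasFDerivAt (fun y : E => (1 + ‖y‖ ^ 2) / 2) (innerSL ℝ x) x := by
    refine (((hasStrictFDerivAt_norm_sq x).hasFDerivAt.const_add 1).mul_const 2⁻¹).congr_fderiv ?_
    ext y
    simp
  have hs : HasFDerivAt (fun y => ⟪p.fst, y⟫ + p.snd) (innerSL ℝ p.fst) x :=
    (innerSL ℝ p.fst).hasFDerivAt.add_const _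
  exact (hsq.smul_const p.fst).sub (hs.smul (hasFDerivAt_id x))

lemma hasFDerivAt_conformalFactor_pow (j : ℕ) (x : E) :
    HasFDerivAt (fun x => conformalFactor x ^ j)
      (-(j * conformalFactor x ^ (j + 1)) • innerSL ℝ x) x := by
  refine ((hasFDerivAt_conformalFactor x).pow j).congr_fderiv ?_
  rcases j with - | j
  · simp
  · rw [smul_smul, add_tsub_cancel_right, nsmul_eq_mul]
    congr 1
    ring

lemma hasFDerivAt_conformalFactor_pow_smul_conformalField (j : ℕ) (p : WithLp 2 (E × ℝ)) (x : E) :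
    HasFDerivAt (fun x => conformalFactor x ^ j • conformalField p x)
      (conformalFactor x ^ j • fderiv ℝ (conformalField p) x +
        (-(j * conformalFactor x ^ (j + 1)) • innerSL ℝ x).smulRight (conformalField p x)) x :=
  (hasFDerivAt_conformalFactor_pow j x).smul
    (hasFDerivAt_conformalField p x).differentiableAt.hasFDerivAt

lemma inner_conformalField (p : WithLp 2 (E × ℝ)) (x : E) :
    conformalFactor x * ⟪x, conformalField p x⟫ =
      ⟪p, spherePoint x⟫ - (⟪p.fst, x⟫ + p.snd) := by
  rw [inner_spherePoint]
  simp only [conformalField, inner_sub_right, real_inner_smul_right, real_inner_self_eq_norm_sq,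
    real_inner_comm p.fst x]
  linear_combination (⟪p.fst, x⟫ / 2 - (⟪p.fst, x⟫ + p.snd)) * conformalFactor_mul x

-- The exponent `finrank ℝ E` is the one for which `f ^ j` is the density of the round measure.
lemma trace_fderiv_conformalFactor_pow_smul_conformalField [FiniteDimensional ℝ E]
    (p : WithLp 2 (E × ℝ)) (x : E) :
    LinearMap.trace ℝ E
        (fderiv ℝ (fun x => conformalFactor x ^ finrank ℝ E • conformalField p x) x) =
      -(finrank ℝ E * conformalFactor x ^ finrank ℝ E * ⟪p, spherePoint x⟫) := by
  rw [(hasFDerivAt_conformalFactor_pow_smul_conformalField _ p x).fderiv,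
    (hasFDerivAt_conformalField p x).fderiv]
  have htr (l : E →L[ℝ] ℝ) (v : E) : LinearMap.trace ℝ E (l.smulRight v : E →L[ℝ] E) = l v :=
    LinearMap.trace_smulRight (l : E →ₗ[ℝ] ℝ) v
  simp only [ContinuousLinearMap.toLinearMap_add, ContinuousLinearMap.toLinearMap_sub,
    ContinuousLinearMap.toLinearMap_smul, ContinuousLinearMap.coe_id, map_add, map_sub, map_smul,
    htr, LinearMap.trace_id, smul_apply, innerSL_apply_apply, smul_eq_mul,
    real_inner_comm p.fst x]
  linear_combination -finrank ℝ E * conformalFactor x ^ finrank ℝ E * inner_conformalField p x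

lemma conformalFactor_mul_norm_fderiv_conformalField_le (p : WithLp 2 (E × ℝ)) (x : E) :
    conformalFactor x * ‖fderiv ℝ (conformalField p) x‖ ≤ 5 * ‖p‖ := by
  have ha : ‖p.fst‖ ≤ ‖p‖ := WithLp.norm_fst_le _ p
  have hb : ‖p.snd‖ ≤ ‖p‖ := WithLp.norm_snd_le _ p
  have hs : ‖⟪p.fst, x⟫ + p.snd‖ ≤ ‖p‖ * ‖x‖ + ‖p‖ :=
    (norm_add_le _ _).trans (add_le_add ((norm_inner_le_norm _ _).trans (by gcongr)) hb)
  have hf := conformalFactor_pos x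
  rw [(hasFDerivAt_conformalField p x).fderiv]
  calc conformalFactor x * ‖_‖
      ≤ conformalFactor x * (‖x‖ * ‖p.fst‖ + (‖⟪p.fst, x⟫ + p.snd‖ * 1 + ‖p.fst‖ * ‖x‖)) := by
        gcongr
        refine (norm_sub_le _ _).trans (add_le_add ?_ ((norm_add_le _ _).trans (add_le_add ?_ ?_)))
        · rw [ContinuousLinearMap.norm_smulRight_apply, innerSL_apply_norm]
        · rw [norm_smul]
          gcongr
          exact ContinuousLinearMap.norm_id_le
        · rw [ContinuousLinearMap.norm_smulRight_apply, innerSL_apply_norm]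
    _ ≤ conformalFactor x * (‖x‖ * ‖p‖ + ((‖p‖ * ‖x‖ + ‖p‖) * 1 + ‖p‖ * ‖x‖)) := by gcongr
    _ = ‖p‖ * (3 * (conformalFactor x * ‖x‖) + conformalFactor x) := by ring
    _ ≤ ‖p‖ * (3 * 1 + 2) := by
        gcongr
        · exact conformalFactor_mul_norm_le_one x
        · exact conformalFactor_le_two x
    _ = 5 * ‖p‖ := by ring

lemma norm_fderiv_conformalFactor_pow_smul_conformalField_le (j : ℕ) (p : WithLp 2 (E × ℝ))
    (x : E) :
    ‖fderiv ℝ (fun x => conformalFactor x ^ (j + 1) • conformalField p x) x‖ ≤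
      (j + 6) * ‖p‖ * conformalFactor x ^ j := by
  have hf := conformalFactor_pos x
  rw [(hasFDerivAt_conformalFactor_pow_smul_conformalField _ p x).fderiv]
  refine (norm_add_le _ _).trans ?_
  rw [ContinuousLinearMap.norm_smulRight_apply, norm_smul, norm_smul, innerSL_apply_norm, norm_neg,
    Real.norm_of_nonneg (by positivity), Real.norm_of_nonneg (by positivity)]
  calc conformalFactor x ^ (j + 1) * ‖fderiv ℝ (conformalField p) x‖ +
        (j + 1 : ℕ) * conformalFactor x ^ (j + 1 + 1) * ‖x‖ * ‖conformalField p x‖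
      = conformalFactor x ^ j * (conformalFactor x * ‖fderiv ℝ (conformalField p) x‖ +
          (j + 1) * ((conformalFactor x * ‖x‖) * (conformalFactor x * ‖conformalField p x‖))) := by
        push_cast; ring
    _ ≤ conformalFactor x ^ j * (5 * ‖p‖ + (j + 1) * (1 * ‖p‖)) := by
        gcongr conformalFactor x ^ j * (?_ + (j + 1) * (?_ * ?_))
        · exact conformalFactor_mul_norm_fderiv_conformalField_le p x
        · exact conformalFactor_mul_norm_le_one x
        · exact conformalFactor_mul_norm_conformalField_le p x
    _ = (j + 6) * ‖p‖ * conformalFactor x ^ j := by ring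

end Divergence

section IntegrationByParts

variable {E : Type*} [NormedAddCommGroup E] [InnerProductSpace ℝ E] [FiniteDimensional ℝ E]
  [MeasurableSpace E] [BorelSpace E]

theorem integral_fderiv_apply_eq_neg_integral_mul_trace {H : E → ℝ} {W : E → E} {C K : ℝ}
    (hH : Differentiable ℝ H) (hHC : ∀ x, ‖H x‖ ≤ C) (hHK : ∀ x, ‖fderiv ℝ H x‖ ≤ K)
    (hW : Differentiable ℝ W) (hWi : Integrable W) (hW'i : Integrable (fderiv ℝ W)) :
    ∫ x, fderiv ℝ H x (W x) = -∫ x, H x * LinearMap.trace ℝ E (fderiv ℝ W x) := by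
  let b := stdOrthonormalBasis ℝ E
  have hcoord (i) (x : E) : HasFDerivAt (fun y => ⟪b i, W y⟫)
      (innerSL ℝ (b i) ∘L fderiv ℝ W x) x :=
    (innerSL ℝ (b i)).hasFDerivAt.comp x (hW x).hasFDerivAt
  have hcoord' (i) (x : E) : fderiv ℝ (fun y => ⟪b i, W y⟫) x (b i) =
      ⟪b i, fderiv ℝ W x (b i)⟫ := by
    rw [(hcoord i x).fderiv]; rfl
  have hHm : AEStronglyMeasurable H := hH.continuous.aestronglyMeasurable
  have hHW (i) : Integrable fun x => H x * ⟪b i, W x⟫ :=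
    (hWi.const_inner (b i)).bdd_mul hHm (.of_forall hHC)
  have hH'W (i) : Integrable fun x => fderiv ℝ H x (b i) * ⟪b i, W x⟫ := by
    refine (hWi.const_inner (b i)).bdd_mul (c := K)
      (measurable_fderiv_apply_const ℝ H (b i)).aestronglyMeasurable (.of_forall fun x => ?_)
    simpa only [b.norm_eq_one, mul_one] using (fderiv ℝ H x).le_of_opNorm_le (hHK x) (b i)
  have hHW' (i) : Integrable fun x => H x * ⟪b i, fderiv ℝ W x (b i)⟫ :=
    ((hW'i.apply_continuousLinearMap (b i)).const_inner (b i)).bdd_mul hHm (.of_forall hHC)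
  have hparts (i) : ∫ x, fderiv ℝ H x (b i) * ⟪b i, W x⟫ =
      -∫ x, H x * ⟪b i, fderiv ℝ W x (b i)⟫ := by
    rw [← neg_eq_iff_eq_neg, eq_comm]
    simp only [← hcoord']
    exact integral_mul_fderiv_eq_neg_fderiv_mul_of_integrable (hH'W i)
      (by simpa only [hcoord'] using hHW' i) (hHW i) (fun x _ => hH x)
      fun x _ => (hcoord i x).differentiableAt
  calc ∫ x, fderiv ℝ H x (W x)
      = ∫ x, ∑ i, fderiv ℝ H x (b i) * ⟪b i, W x⟫ := by
        congr with x
        conv_lhs => rw [← b.sum_repr' (W x)]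
        simp [mul_comm]
    _ = ∑ i, -∫ x, H x * ⟪b i, fderiv ℝ W x (b i)⟫ := by
        rw [integral_finsetSum _ fun i _ => hH'W i]
        exact Finset.sum_congr rfl fun i _ => hparts i
    _ = -∫ x, H x * LinearMap.trace ℝ E (fderiv ℝ W x) := by
        rw [Finset.sum_neg_distrib, ← integral_finsetSum _ fun i _ => hHW' i]
        simp only [LinearMap.trace_eq_sum_inner _ b, Finset.mul_sum, ContinuousLinearMap.coe_coe]

end IntegrationByParts

section RoundMeasure

variable {E : Type*} [NormedAddCommGroup E] [InnerProductSpace ℝ E] [MeasurableSpace E]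
  [BorelSpace E]

lemma measurable_ofReal_conformalFactor_pow (j : ℕ) :
    Measurable fun x : E => ENNReal.ofReal (conformalFactor x ^ j) :=
  (differentiable_conformalFactor.continuous.pow j).measurable.ennreal_ofReal

variable [FiniteDimensional ℝ E]

lemma integrable_conformalFactor_pow {j : ℕ} (hj : finrank ℝ E < 2 * j) :
    Integrable fun x : E => conformalFactor x ^ j := by
  have hj' : (finrank ℝ E : ℝ) < 2 * j := by exact_mod_cast hj
  refine ((integrable_rpow_neg_one_add_norm_sq (μ := volume) hj').const_mul (2 ^ j)).congr
    (.of_forall fun x => ?_)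
  simp only [conformalFactor]
  rw [neg_div, mul_div_cancel_left₀ _ two_ne_zero, Real.rpow_neg (by positivity),
    Real.rpow_natCast, div_pow, div_eq_mul_inv]

variable (E) in
/-- The volume measure of the round sphere of dimension `finrank ℝ E`, in stereographic
coordinates. -/
noncomputable def roundMeasure : Measure E :=
  volume.withDensity fun x => ENNReal.ofReal (conformalFactor x ^ finrank ℝ E)

lemma integral_roundMeasure (g : E → ℝ) :
    ∫ x, g x ∂roundMeasure E = ∫ x, conformalFactor x ^ finrank ℝ E * g x := by
  rw [roundMeasure, integral_withDensity_eq_integral_toReal_smul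
    (measurable_ofReal_conformalFactor_pow _) (.of_forall fun _ => ENNReal.ofReal_lt_top)]
  congr with x
  rw [ENNReal.toReal_ofReal (pow_pos (conformalFactor_pos x) _).le, smul_eq_mul]

instance : IsFiniteMeasure (roundMeasure E) := by
  refine isFiniteMeasure_withDensity_ofReal (Integrable.hasFiniteIntegral ?_)
  rcases subsingleton_or_nontrivial E with h | h
  · exact .of_finite
  · have := finrank_pos (R := ℝ) (M := E)
    exact integrable_conformalFactor_pow (by omega)

lemma volume_absolutelyContinuous_roundMeasure : (volume : Measure E) ≪ roundMeasure E :=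
  withDensity_absolutelyContinuous' (measurable_ofReal_conformalFactor_pow _).aemeasurable
    (.of_forall fun x => by simpa using pow_pos (conformalFactor_pos x) _)

instance : NeZero (roundMeasure E) :=
  ⟨fun h => NeZero.ne (volume : Measure E) <| Measure.absolutelyContinuous_zero_iff.1 <|
    h ▸ volume_absolutelyContinuous_roundMeasure⟩

instance [Nontrivial E] : NullSingletonClass (roundMeasure E) := by
  unfold roundMeasure; infer_instance

lemma integrable_inner_spherePoint (p : WithLp 2 (E × ℝ)) :
    Integrable (fun x => ⟪p, spherePoint x⟫) (roundMeasure E) :=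
  .of_bound (continuous_const.inner continuous_spherePoint).aestronglyMeasurable ‖p‖
    (.of_forall (abs_inner_spherePoint_le p))

theorem integral_fderiv_conformalField (hn : 3 ≤ finrank ℝ E) (p : WithLp 2 (E × ℝ)) {H : E → ℝ}
    {C K : ℝ} (hH : Differentiable ℝ H) (hHC : ∀ x, ‖H x‖ ≤ C) (hHK : ∀ x, ‖fderiv ℝ H x‖ ≤ K) :
    ∫ x, fderiv ℝ H x (conformalField p x) ∂roundMeasure E =
      finrank ℝ E * ∫ x, ⟪p, spherePoint x⟫ * H x ∂roundMeasure E := by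
  obtain ⟨j, hj⟩ : ∃ j, finrank ℝ E = j + 1 := ⟨finrank ℝ E - 1, by omega⟩
  let W : E → E := fun x => conformalFactor x ^ finrank ℝ E • conformalField p x
  have hW : Differentiable ℝ W := fun x =>
    (hasFDerivAt_conformalFactor_pow_smul_conformalField _ p x).differentiableAt
  have hfj : Integrable fun x : E => conformalFactor x ^ j :=
    integrable_conformalFactor_pow (by omega)
  have hWi : Integrable W := by
    refine (hfj.const_mul ‖p‖).mono' hW.continuous.aestronglyMeasurable (.of_forall fun x => ?_)
    have hf := conformalFactor_pos x
    calc ‖W x‖ = conformalFactor x ^ j * (conformalFactor x * ‖conformalField p x‖) := by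
          rw [norm_smul, Real.norm_of_nonneg (by positivity), hj, pow_succ, mul_assoc]
      _ ≤ conformalFactor x ^ j * ‖p‖ := by
          gcongr
          exact conformalFactor_mul_norm_conformalField_le p x
      _ = ‖p‖ * conformalFactor x ^ j := mul_comm _ _
  have hW'i : Integrable (fderiv ℝ W) := by
    refine (hfj.const_mul ((j + 6) * ‖p‖)).mono' (measurable_fderiv ℝ W).aestronglyMeasurable
      (.of_forall fun x => ?_)
    simpa only [W, hj] using norm_fderiv_conformalFactor_pow_smul_conformalField_le j p x
  calc ∫ x, fderiv ℝ H x (conformalField p x) ∂roundMeasure E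
      = ∫ x, fderiv ℝ H x (W x) := by simp only [integral_roundMeasure, W, map_smul, smul_eq_mul]
    _ = -∫ x, H x * LinearMap.trace ℝ E (fderiv ℝ W x) :=
        integral_fderiv_apply_eq_neg_integral_mul_trace hH hHC hHK hW hWi hW'i
    _ = finrank ℝ E * ∫ x, ⟪p, spherePoint x⟫ * H x ∂roundMeasure E := by
        rw [integral_roundMeasure, ← integral_neg, ← integral_const_mul]
        congr with x
        rw [trace_fderiv_conformalFactor_pow_smul_conformalField]
        ring

lemma integral_inner_spherePoint (hn : 3 ≤ finrank ℝ E) (p : WithLp 2 (E × ℝ)) :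
    ∫ x, ⟪p, spherePoint x⟫ ∂roundMeasure E = 0 := by
  have h := integral_fderiv_conformalField (C := 1) (K := 0) hn p
    (differentiable_const (1 : ℝ)) (by simp) (by simp)
  have hn0 : (finrank ℝ E : ℝ) ≠ 0 := by positivity
  simpa [hn0] using h

lemma integral_inner_spherePoint_sq (hn : 3 ≤ finrank ℝ E) (p : WithLp 2 (E × ℝ)) :
    (finrank ℝ E + 1) * ∫ x, ⟪p, spherePoint x⟫ ^ 2 ∂roundMeasure E =
      ‖p‖ ^ 2 * (roundMeasure E).real Set.univ := by
  have hd (x : E) := hasFDerivAt_inner_spherePoint p x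
  have hsq : Integrable (fun x => ⟪p, spherePoint x⟫ ^ 2) (roundMeasure E) := by
    simpa only [sq] using (integrable_inner_spherePoint p).bdd_mul
      (integrable_inner_spherePoint p).1 (.of_forall (abs_inner_spherePoint_le p))
  have hbound (x : E) : ‖fderiv ℝ (fun x => ⟪p, spherePoint x⟫) x‖ ≤ 2 * ‖p‖ := by
    have hf := conformalFactor_pos x
    rw [(hd x).fderiv, norm_smul, innerSL_apply_norm, Real.norm_of_nonneg (by positivity), sq,
      mul_assoc]
    exact mul_le_mul (conformalFactor_le_two x) (conformalFactor_mul_norm_conformalField_le p x)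
      (by positivity) zero_le_two
  have h := integral_fderiv_conformalField hn p (fun x => (hd x).differentiableAt)
    (abs_inner_spherePoint_le p) hbound
  have hgrad (x : E) : fderiv ℝ (fun x => ⟪p, spherePoint x⟫) x (conformalField p x) =
      ‖p‖ ^ 2 - ⟪p, spherePoint x⟫ ^ 2 := by
    rw [(hd x).fderiv, smul_apply, innerSL_apply_apply, smul_eq_mul,
      conformalFactor_sq_mul_inner_conformalField, real_inner_self_eq_norm_sq, sq ⟪p, _⟫]
  simp only [hgrad, ← sq] at h
  rw [integral_sub (integrable_const _) hsq, integral_const, smul_eq_mul] at h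
  linear_combination -h

end RoundMeasure

lemma abs_pow_sub_pow_le_of_le {a b R : ℝ} (ha : 0 ≤ a) (hb : 0 ≤ b) (haR : a ≤ R) (hbR : b ≤ R)
    (k : ℕ) : |a ^ k - b ^ k| ≤ k * R ^ (k - 1) * |a - b| := by
  calc |a ^ k - b ^ k| ≤ |a - b| * k * max |a| |b| ^ (k - 1) := abs_pow_sub_pow_le ..
    _ ≤ |a - b| * k * R ^ (k - 1) := by
        gcongr
        rw [abs_of_nonneg ha, abs_of_nonneg hb]
        exact max_le haR hbR
    _ = k * R ^ (k - 1) * |a - b| := by ring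

section ChordPower

variable {E : Type*} [NormedAddCommGroup E] [InnerProductSpace ℝ E]

lemma abs_dist_spherePoint_pow_sub_le (k : ℕ) (x x' y : E) :
    |dist (spherePoint x) (spherePoint y) ^ k - dist (spherePoint x') (spherePoint y) ^ k| ≤
      k * 2 ^ (k - 1) * 2 * ‖x - x'‖ := by
  refine (abs_pow_sub_pow_le_of_le dist_nonneg dist_nonneg (dist_spherePoint_le_two _ _)
    (dist_spherePoint_le_two _ _) k).trans ?_
  rw [mul_assoc _ 2]
  gcongr
  exact (abs_dist_sub_le _ _ _).trans (dist_eq_norm x x' ▸ dist_spherePoint_le x x')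

lemma hasFDerivAt_dist_spherePoint_pow (k : ℕ) {x y : E} (h : x ≠ y) :
    HasFDerivAt (fun x => dist (spherePoint x) (spherePoint y) ^ k)
      ((-(k * dist (spherePoint x) (spherePoint y) ^ (k - 1) / dist (spherePoint x) (spherePoint y)
        * conformalFactor x ^ 2)) • innerSL ℝ (conformalField (spherePoint y) x)) x := by
  have hd (x : E) : dist (spherePoint x) (spherePoint y) =
      √(2 - 2 * ⟪spherePoint y, spherePoint x⟫) := by
    rw [real_inner_comm, ← dist_spherePoint_sq, Real.sqrt_sq dist_nonneg]
  have hpos : 0 < dist (spherePoint x) (spherePoint y) := dist_spherePoint_pos h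
  simp only [hd] at hpos ⊢
  refine (((((hasFDerivAt_inner_spherePoint (spherePoint y) x).const_mul 2).const_sub 2).sqrt
    (Real.sqrt_pos.1 hpos).ne').pow k).congr_fderiv ?_
  ext w
  simp only [smul_apply, neg_apply, innerSL_apply_apply, smul_eq_mul,
    nsmul_eq_mul]
  field_simp

/-- The kernel of the operator `q ↦ dv(X) + (k / 2) ⟪p, spherePoint ·⟫ v`, where
`v = chordPotential k q` and `X = conformalField p`. -/
noncomputable def conformalKernel (k : ℕ) (p : WithLp 2 (E × ℝ)) (x y : E) : ℝ :=
  k * dist (spherePoint x) (spherePoint y) ^ (k - 1) / dist (spherePoint x) (spherePoint y) *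
    ⟪p, spherePoint x - spherePoint y⟫

lemma conformalKernel_swap (k : ℕ) (p : WithLp 2 (E × ℝ)) (x y : E) :
    conformalKernel k p y x = -conformalKernel k p x y := by
  rw [conformalKernel, conformalKernel, dist_comm, ← neg_sub (spherePoint x), inner_neg_right,
    mul_neg]

lemma abs_conformalKernel_le (k : ℕ) (p : WithLp 2 (E × ℝ)) (x y : E) :
    |conformalKernel k p x y| ≤ k * 2 ^ (k - 1) * ‖p‖ := by
  have hinner : |⟪p, spherePoint x - spherePoint y⟫| ≤
      ‖p‖ * dist (spherePoint x) (spherePoint y) :=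
    dist_eq_norm (spherePoint x) _ ▸ abs_real_inner_le_norm _ _
  rw [conformalKernel, abs_mul, abs_of_nonneg (by positivity), div_mul_eq_mul_div]
  refine div_le_of_le_mul₀ dist_nonneg (by positivity) ?_
  calc k * dist (spherePoint x) (spherePoint y) ^ (k - 1) * |⟪p, spherePoint x - spherePoint y⟫|
      ≤ k * 2 ^ (k - 1) * (‖p‖ * dist (spherePoint x) (spherePoint y)) := by
        gcongr
        exact dist_spherePoint_le_two x y
    _ = _ := (mul_assoc _ _ _).symm

lemma fderiv_dist_spherePoint_pow_conformalField (k : ℕ) (p : WithLp 2 (E × ℝ)) {x y : E}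
    (h : x ≠ y) :
    fderiv ℝ (fun z => dist (spherePoint z) (spherePoint y) ^ k) x (conformalField p x) =
      conformalKernel k p x y -
        k / 2 * ⟪p, spherePoint x⟫ * dist (spherePoint x) (spherePoint y) ^ k := by
  have hd : dist (spherePoint x) (spherePoint y) ≠ 0 := (dist_spherePoint_pos h).ne'
  have hgrad : conformalFactor x ^ 2 * ⟪conformalField (spherePoint y) x, conformalField p x⟫ =
      ⟪p, spherePoint y⟫ -
        (1 - dist (spherePoint x) (spherePoint y) ^ 2 / 2) * ⟪p, spherePoint x⟫ := by
    rw [conformalFactor_sq_mul_inner_conformalField, real_inner_comm p, dist_spherePoint_sq,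
      real_inner_comm (spherePoint x)]
    ring
  rw [(hasFDerivAt_dist_spherePoint_pow k h).fderiv, smul_apply, innerSL_apply_apply,
    smul_eq_mul, neg_mul, mul_assoc, hgrad, conformalKernel, inner_sub_right]
  rcases k with - | k
  · simp
  · rw [add_tsub_cancel_right]
    field_simp
    ring

end ChordPower

section ChordPotential

variable {E : Type*} [NormedAddCommGroup E] [InnerProductSpace ℝ E] [FiniteDimensional ℝ E]
  [MeasurableSpace E] [BorelSpace E]

/-- The Riesz-type potential of `q` on the round sphere, with the `k`-th power of the chordal
distance as kernel. -/
noncomputable def chordPotential (k : ℕ) (q : E → ℝ) (x : E) : ℝ :=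
  ∫ y, dist (spherePoint x) (spherePoint y) ^ k * q y ∂roundMeasure E

variable {q : E → ℝ} {k : ℕ}

lemma integrable_dist_spherePoint_pow_mul (hq : Integrable q (roundMeasure E)) (k : ℕ) (x : E) :
    Integrable (fun y => dist (spherePoint x) (spherePoint y) ^ k * q y) (roundMeasure E) := by
  refine hq.bdd_mul (c := 2 ^ k)
    ((continuous_const.dist continuous_spherePoint).pow k).aestronglyMeasurable
    (.of_forall fun y => ?_)
  rw [Real.norm_of_nonneg (by positivity)]
  exact pow_le_pow_left₀ dist_nonneg (dist_spherePoint_le_two x y) k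

lemma abs_chordPotential_le (hq : Integrable q (roundMeasure E)) (x : E) :
    |chordPotential k q x| ≤ 2 ^ k * ∫ y, |q y| ∂roundMeasure E := by
  rw [chordPotential, ← integral_const_mul, ← Real.norm_eq_abs]
  refine norm_integral_le_of_norm_le (hq.abs.const_mul _) (.of_forall fun y => ?_)
  rw [norm_mul, Real.norm_of_nonneg (by positivity), Real.norm_eq_abs]
  gcongr
  exact dist_spherePoint_le_two x y

lemma hasFDerivAt_chordPotential [Nontrivial E] (hq : Integrable q (roundMeasure E)) (x : E) :
    Integrable (fun y => q y • fderiv ℝ (fun z => dist (spherePoint z) (spherePoint y) ^ k) x)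
        (roundMeasure E) ∧
      HasFDerivAt (chordPotential k q) (∫ y, q y •
        fderiv ℝ (fun z => dist (spherePoint z) (spherePoint y) ^ k) x ∂roundMeasure E) x := by
  have hcont : Continuous
      (fun y z : E => dist (spherePoint z) (spherePoint y) ^ k).uncurry :=
    ((continuous_spherePoint.comp continuous_snd).dist
      (continuous_spherePoint.comp continuous_fst)).pow k
  have hmeas : Measurable fun y : E =>
      fderiv ℝ (fun z => dist (spherePoint z) (spherePoint y) ^ k) x :=
    (measurable_fderiv_with_param ℝ hcont).of_uncurry_right (y := x)
  refine hasFDerivAt_integral_of_dominated_loc_of_lip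
    (bound := fun y => k * 2 ^ (k - 1) * 2 * |q y|) Filter.univ_mem
    (.of_forall fun z => (integrable_dist_spherePoint_pow_mul hq k z).1)
    (integrable_dist_spherePoint_pow_mul hq k x) (hq.1.smul hmeas.aestronglyMeasurable)
    (.of_forall fun y => LipschitzOnWith.of_dist_le_mul fun z _ z' _ => ?_)
    (hq.abs.const_mul _) ?_
  · rw [Real.coe_nnabs, abs_of_nonneg (by positivity), Real.dist_eq, ← sub_mul, abs_mul,
      mul_right_comm, dist_eq_norm z z']
    gcongr
    exact abs_dist_spherePoint_pow_sub_le k z z' y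
  · filter_upwards [Measure.ae_ne (roundMeasure E) x] with y hy
    exact (hasFDerivAt_dist_spherePoint_pow k hy.symm).differentiableAt.hasFDerivAt.mul_const _

lemma differentiable_chordPotential [Nontrivial E] (hq : Integrable q (roundMeasure E)) :
    Differentiable ℝ (chordPotential k q) :=
  fun x => (hasFDerivAt_chordPotential hq x).2.differentiableAt

lemma norm_fderiv_chordPotential_le (hq : Integrable q (roundMeasure E)) (x : E) :
    ‖fderiv ℝ (chordPotential k q) x‖ ≤
      k * 2 ^ (k - 1) * 2 * ∫ y, |q y| ∂roundMeasure E := by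
  have hint := integrable_dist_spherePoint_pow_mul hq k
  refine norm_fderiv_le_of_lip' ℝ (by positivity) (.of_forall fun z => ?_)
  rw [chordPotential, chordPotential, ← integral_sub (hint z) (hint x), mul_right_comm,
    ← integral_const_mul]
  refine norm_integral_le_of_norm_le (hq.abs.const_mul _) (.of_forall fun y => ?_)
  rw [← sub_mul, norm_mul]
  exact mul_le_mul_of_nonneg_right (abs_dist_spherePoint_pow_sub_le k z x y) (abs_nonneg _)

theorem fderiv_chordPotential_conformalField [Nontrivial E] (hq : Integrable q (roundMeasure E))
    (p : WithLp 2 (E × ℝ)) (x : E) :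
    fderiv ℝ (chordPotential k q) x (conformalField p x) +
        k / 2 * ⟪p, spherePoint x⟫ * chordPotential k q x =
      ∫ y, conformalKernel k p x y * q y ∂roundMeasure E := by
  obtain ⟨hint, hderiv⟩ := hasFDerivAt_chordPotential (k := k) hq x
  rw [hderiv.fderiv, ContinuousLinearMap.integral_apply hint, chordPotential,
    ← integral_const_mul, ← integral_add (hint.apply_continuousLinearMap _)
      ((integrable_dist_spherePoint_pow_mul hq k x).const_mul _)]
  refine integral_congr_ae ?_
  filter_upwards [Measure.ae_ne (roundMeasure E) x] with y hy
  rw [smul_apply, fderiv_dist_spherePoint_pow_conformalField k p hy.symm, smul_eq_mul]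
  ring

lemma integral_mul_integral_eq_zero_of_antisymm {X : Type*} [MeasurableSpace X] {μ : Measure X}
    [SFinite μ] {κ : X → X → ℝ} {g : X → ℝ} {C : ℝ} (hκ : ∀ x y, κ y x = -κ x y)
    (hκm : Measurable κ.uncurry) (hκC : ∀ x y, |κ x y| ≤ C) (hg : Integrable g μ) :
    Integrable (fun x => g x * ∫ y, κ x y * g y ∂μ) μ ∧ ∫ x, g x * ∫ y, κ x y * g y ∂μ ∂μ = 0 := by
  have hint : Integrable (fun z : X × X => κ z.1 z.2 * (g z.1 * g z.2)) (μ.prod μ) :=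
    (hg.mul_prod hg).bdd_mul hκm.aestronglyMeasurable (.of_forall fun z => hκC z.1 z.2)
  have hswap := integral_integral_swap (f := fun x y => κ x y * (g x * g y)) hint
  simp only [← integral_const_mul, mul_left_comm (g _)]
  refine ⟨hint.integral_prod_left, self_eq_neg.1 (hswap.trans ?_)⟩
  simp only [← integral_neg]
  congr with x
  congr with y
  rw [hκ x y]
  ring

lemma measurable_conformalKernel (k : ℕ) (p : WithLp 2 (E × ℝ)) :
    Measurable (conformalKernel k p).uncurry := by
  have h1 : Continuous fun z : E × E => spherePoint z.1 :=
    continuous_spherePoint.comp continuous_fst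
  have h2 : Continuous fun z : E × E => spherePoint z.2 :=
    continuous_spherePoint.comp continuous_snd
  exact ((((h1.dist h2).pow _).measurable.const_mul _).div (h1.dist h2).measurable).mul
    (continuous_const.inner (h1.sub h2)).measurable

theorem integral_mul_fderiv_chordPotential [Nontrivial E] (hq : Integrable q (roundMeasure E))
    (p : WithLp 2 (E × ℝ)) :
    Integrable (fun x => ⟪p, spherePoint x⟫ * (chordPotential k q x * q x)) (roundMeasure E) ∧
      ∫ x, q x * fderiv ℝ (chordPotential k q) x (conformalField p x) ∂roundMeasure E =
        -(k / 2 * ∫ x, ⟪p, spherePoint x⟫ * (chordPotential k q x * q x) ∂roundMeasure E) := by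
  have hζ : Integrable (fun x => ⟪p, spherePoint x⟫ * (chordPotential k q x * q x))
      (roundMeasure E) :=
    (hq.bdd_mul (differentiable_chordPotential hq).continuous.aestronglyMeasurable
        (.of_forall (abs_chordPotential_le hq))).bdd_mul
      (integrable_inner_spherePoint p).1 (.of_forall (abs_inner_spherePoint_le p))
  obtain ⟨hint, hzero⟩ := integral_mul_integral_eq_zero_of_antisymm (conformalKernel_swap k p)
    (measurable_conformalKernel k p) (abs_conformalKernel_le k p) hq
  refine ⟨hζ, ?_⟩
  rw [← integral_const_mul, ← zero_sub, ← hzero, ← integral_sub hint (hζ.const_mul _)]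
  congr with x
  rw [← fderiv_chordPotential_conformalField hq]
  ring

end ChordPotential

section KazdanWarner

variable {E : Type*} [NormedAddCommGroup E] [InnerProductSpace ℝ E] [FiniteDimensional ℝ E]
  [MeasurableSpace E] [BorelSpace E] {k : ℕ} {v : E → ℝ} {g G : ℝ → ℝ} {lo hi : ℝ}

theorem integral_inner_mul_primitive (hn : 3 ≤ finrank ℝ E) (hv : ∀ x, v x ∈ Set.Icc lo hi)
    (hg : ContinuousOn g (Set.Icc lo hi)) (hG : ∀ t ∈ Set.Icc lo hi, HasDerivAt G (g t) t)
    (hq : Integrable (fun x => g (v x)) (roundMeasure E))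
    (heq : chordPotential k (fun x => g (v x)) = v) (p : WithLp 2 (E × ℝ)) :
    Integrable (fun x => ⟪p, spherePoint x⟫ * (finrank ℝ E * G (v x) + k / 2 * (v x * g (v x))))
        (roundMeasure E) ∧
      ∫ x, ⟪p, spherePoint x⟫ * (finrank ℝ E * G (v x) + k / 2 * (v x * g (v x)))
        ∂roundMeasure E = 0 := by
  have : Nontrivial E := nontrivial_of_finrank_pos (R := ℝ) (by omega)
  have hvdiff : Differentiable ℝ v := heq ▸ differentiable_chordPotential hq
  have hGv (x : E) : HasFDerivAt (fun x => G (v x)) (g (v x) • fderiv ℝ v x) x :=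
    (hG _ (hv x)).comp_hasFDerivAt x (hvdiff x).hasFDerivAt
  obtain ⟨Cg, hCg⟩ := isCompact_Icc.exists_bound_of_continuousOn hg
  obtain ⟨CG, hCG⟩ := isCompact_Icc.exists_bound_of_continuousOn
    fun t ht => (hG t ht).continuousAt.continuousWithinAt
  have hGint : Integrable (fun x => ⟪p, spherePoint x⟫ * G (v x)) (roundMeasure E) :=
    (integrable_inner_spherePoint p).mul_bdd
      (continuous_iff_continuousAt.2 fun x => (hGv x).continuousAt).aestronglyMeasurable
      (.of_forall fun x => hCG _ (hv x))
  have hfderiv (x : E) : ‖fderiv ℝ (fun x => G (v x)) x‖ ≤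
      Cg * (k * 2 ^ (k - 1) * 2 * ∫ y, |g (v y)| ∂roundMeasure E) := by
    have hvx := norm_fderiv_chordPotential_le (k := k) hq x
    rw [heq] at hvx
    rw [(hGv x).fderiv, norm_smul]
    exact mul_le_mul (hCg _ (hv x)) hvx (norm_nonneg _) ((norm_nonneg _).trans (hCg _ (hv x)))
  have hdiv := integral_fderiv_conformalField hn p (fun x => (hGv x).differentiableAt)
    (fun x => hCG _ (hv x)) hfderiv
  obtain ⟨hqint, hpot⟩ := integral_mul_fderiv_chordPotential (k := k) hq p
  simp only [fun x => (hGv x).fderiv, smul_apply, smul_eq_mul] at hdiv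
  rw [heq] at hqint hpot
  simp only [mul_add, mul_left_comm (⟪p, spherePoint _⟫) (finrank ℝ E : ℝ),
    mul_left_comm (⟪p, spherePoint _⟫) (k / 2 : ℝ)]
  refine ⟨(hGint.const_mul _).add (hqint.const_mul _), ?_⟩
  rw [integral_add (hGint.const_mul _) (hqint.const_mul _), integral_const_mul,
    integral_const_mul, ← hdiv, hpot, neg_add_cancel]

end KazdanWarner

section Concentration

lemma sub_le_of_hasDerivAt_mem_Icc {h h' : ℝ → ℝ} {κ Λ a b lo hi x y : ℝ}
    (hderiv : ∀ t ∈ Set.Icc lo hi, HasDerivAt h (h' t) t)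
    (hbound : ∀ t ∈ Set.Icc lo hi, h' t ∈ Set.Icc κ Λ) (ha : a ∈ Set.Icc lo hi)
    (hb : b ∈ Set.Icc lo hi) (hx : 0 ≤ x) (hy : 0 ≤ y) (hab : b - a = x - y) :
    h b - h a ≤ Λ * x - κ * y := by
  have hκΛ : κ ≤ Λ := (hbound a ha).1.trans (hbound a ha).2
  have hcont : ContinuousOn h (Set.Icc lo hi) :=
    fun t ht => (hderiv t ht).continuousAt.continuousWithinAt
  have hdiff : DifferentiableOn ℝ h (interior (Set.Icc lo hi)) :=
    fun t ht => (hderiv t (interior_subset ht)).differentiableAt.differentiableWithinAt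
  have hslope (t) (ht : t ∈ interior (Set.Icc lo hi)) : deriv h t ∈ Set.Icc κ Λ :=
    (hderiv t (interior_subset ht)).deriv ▸ hbound t (interior_subset ht)
  rcases le_total a b with h1 | h1
  · have := (convex_Icc lo hi).image_sub_le_mul_sub_of_deriv_le hcont hdiff
      (fun t ht => (hslope t ht).2) a ha b hb h1
    rw [hab] at this
    nlinarith
  · have := (convex_Icc lo hi).mul_sub_le_image_sub_of_le_deriv hcont hdiff
      (fun t ht => (hslope t ht).1) b hb a ha h1
    rw [← neg_sub b a, hab] at this
    nlinarith

lemma sub_le_of_le_add_and_sub_le_of_sub_le {h h' : ℝ → ℝ} {κ Λ a t r lo hi x y : ℝ}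
    (hmono : MonotoneOn h (Set.Ioi 0)) (hderiv : ∀ t ∈ Set.Icc lo hi, HasDerivAt h (h' t) t)
    (hbound : ∀ t ∈ Set.Icc lo hi, h' t ∈ Set.Icc κ Λ) (hlo : 0 < lo) (hal : lo ≤ a - r)
    (hau : a + r ≤ hi) (hx : x ∈ Set.Icc 0 r) (hy : y ∈ Set.Icc 0 r) (ht : 0 < t) :
    (t ≤ a + (x - y) → h t - h a ≤ Λ * x - κ * y) ∧
      (a - (x - y) ≤ t → h a - h t ≤ Λ * x - κ * y) := by
  obtain ⟨⟨hx0, hxr⟩, ⟨hy0, hyr⟩⟩ := And.intro hx hy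
  have ha : a ∈ Set.Icc lo hi := ⟨by linarith, by linarith⟩
  have hadd : a + (x - y) ∈ Set.Icc lo hi := ⟨by linarith, by linarith⟩
  have hsub : a - (x - y) ∈ Set.Icc lo hi := ⟨by linarith, by linarith⟩
  refine ⟨fun hta => ?_, fun hta => ?_⟩
  · linarith [hmono ht (hlo.trans_le hadd.1) hta,
      sub_le_of_hasDerivAt_mem_Icc hderiv hbound ha hadd hx0 hy0 (by ring)]
  · linarith [hmono (hlo.trans_le hsub.1) ht hta,
      sub_le_of_hasDerivAt_mem_Icc hderiv hbound hsub ha hx0 hy0 (by ring)]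

lemma one_add_quarter_le_sqrt_two_pow {k : ℕ} (hk : 1 ≤ k) : 1 + 1 / 4 ≤ √2 ^ k := by
  have h : 1 + 1 / 4 ≤ √2 := Real.le_sqrt_of_sq_le (by norm_num)
  exact h.trans (le_self_pow₀ (by linarith) (by omega))

lemma sqrt_two_pow_add_quarter_le {k : ℕ} (hk : 1 ≤ k) : √2 ^ k + 1 / 4 ≤ 2 ^ k := by
  have h := one_add_quarter_le_sqrt_two_pow hk
  have hsq : √2 ^ k * √2 ^ k = 2 ^ k := by rw [← mul_pow, Real.mul_self_sqrt zero_le_two]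
  nlinarith

lemma sq_sub_sq_div_four_le_pow_sub_pow {a b : ℝ} (ha : 0 ≤ a) (hab : a ≤ b) (hb1 : 1 ≤ b)
    (hb2 : b ≤ 2) {k : ℕ} (hk : 1 ≤ k) : (b ^ 2 - a ^ 2) / 4 ≤ b ^ k - a ^ k := by
  obtain ⟨j, rfl⟩ := Nat.exists_eq_add_of_le' hk
  calc (b ^ 2 - a ^ 2) / 4 = (b + a) / 4 * (b - a) := by ring
    _ ≤ b ^ j * (b - a) := by
        have := sub_nonneg.2 hab
        gcongr
        linarith [one_le_pow₀ hb1 (n := j)]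
    _ ≤ b ^ (j + 1) - a ^ (j + 1) := by
        rw [mul_sub, ← pow_succ, pow_succ a]
        gcongr

-- Both factors on the left change sign near the equator `d = √2`, in opposite directions.
lemma one_sub_mul_sub_le {h h' : ℝ → ℝ} {κ Λ M d t δ : ℝ} {k : ℕ} (hk : 1 ≤ k)
    (hmono : MonotoneOn h (Set.Ioi 0))
    (hderiv : ∀ t ∈ Set.Icc M (2 ^ k * M), HasDerivAt h (h' t) t)
    (hbound : ∀ t ∈ Set.Icc M (2 ^ k * M), h' t ∈ Set.Icc κ Λ) (hΛ : 0 ≤ Λ) (hM : 0 < M)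
    (hd : d ∈ Set.Icc 0 2) (ht : 0 < t) (hδ : δ ≤ 1 / 4) (htd : |t - M * d ^ k| ≤ M * δ) :
    (1 - d ^ 2 / 2) * (h t - h (M * √2 ^ k)) ≤
      Λ * (M * δ) - κ * (M / 4) * (1 - d ^ 2 / 2) ^ 2 := by
  obtain ⟨hd0, hd2⟩ := hd
  obtain ⟨htl, htu⟩ := abs_le.1 htd
  have hsqrt : √2 ^ 2 = 2 := Real.sq_sqrt zero_le_two
  have hsqrt1 : 1 ≤ √2 := Real.one_le_sqrt.2 one_le_two
  have hMδ0 : 0 ≤ M * δ := (abs_nonneg _).trans htd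
  have hMδ : M * δ ≤ M / 4 := by linarith [mul_le_mul_of_nonneg_left hδ hM.le]
  have hΛδ : 0 ≤ Λ * (M * δ) := by positivity
  have hcmp {x y : ℝ} (hx : x ∈ Set.Icc 0 (M / 4)) (hy : y ∈ Set.Icc 0 (M / 4)) :=
    sub_le_of_le_add_and_sub_le_of_sub_le (a := M * √2 ^ k) hmono hderiv hbound hM
      (by linarith [mul_le_mul_of_nonneg_left (one_add_quarter_le_sqrt_two_pow hk) hM.le])
      (by linarith [mul_le_mul_of_nonneg_left (sqrt_two_pow_add_quarter_le hk) hM.le]) hx hy ht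
  rcases le_total d √2 with hd' | hd'
  · have hgap := mul_le_mul_of_nonneg_left
      (sq_sub_sq_div_four_le_pow_sub_pow hd0 hd' hsqrt1 (by nlinarith) hk) hM.le
    rw [hsqrt] at hgap
    have hsq : d ^ 2 ≤ √2 ^ 2 := by gcongr
    have hζ : 1 - d ^ 2 / 2 ∈ Set.Icc 0 1 := ⟨by linarith, by linarith [sq_nonneg d]⟩
    have hMζ : 0 ≤ M * (1 - d ^ 2 / 2) := mul_nonneg hM.le hζ.1
    have hslope := (hcmp ⟨hMδ0, hMδ⟩ (y := M / 4 * (1 - d ^ 2 / 2))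
      ⟨by linarith, by linarith [mul_le_mul_of_nonneg_left hζ.2 hM.le]⟩).1 (by linarith)
    linarith [mul_le_mul_of_nonneg_left hslope hζ.1, mul_le_mul_of_nonneg_right hζ.2 hΛδ]
  · have hgap := mul_le_mul_of_nonneg_left
      (sq_sub_sq_div_four_le_pow_sub_pow (Real.sqrt_nonneg 2) hd' (by linarith) hd2 hk) hM.le
    rw [hsqrt] at hgap
    have hsq : √2 ^ 2 ≤ d ^ 2 := by gcongr
    have hsq4 : d ^ 2 ≤ 2 ^ 2 := by gcongr
    have hζ : d ^ 2 / 2 - 1 ∈ Set.Icc 0 1 := ⟨by linarith, by linarith⟩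
    have hMζ : 0 ≤ M * (d ^ 2 / 2 - 1) := mul_nonneg hM.le hζ.1
    have hslope := (hcmp ⟨hMδ0, hMδ⟩ (y := M / 4 * (d ^ 2 / 2 - 1))
      ⟨by linarith, by linarith [mul_le_mul_of_nonneg_left hζ.2 hM.le]⟩).2 (by linarith)
    linarith [mul_le_mul_of_nonneg_left hslope hζ.1, mul_le_mul_of_nonneg_right hζ.2 hΛδ]

end Concentration

-- Jensen's inequality for `t ↦ t ^ k`, from the tangent line at `s`; `q` has arbitrary mass.
lemma pow_mul_integral_le_integral_pow_mul {X : Type*} [MeasurableSpace X] {μ : Measure X}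
    {φ q : X → ℝ} {s : ℝ} {k : ℕ} (hs : 0 < s) (hφ : ∀ x, 0 ≤ φ x) (hq0 : ∀ x, 0 ≤ q x)
    (hq : Integrable q μ) (hφq : Integrable (fun x => φ x * q x) μ)
    (hφkq : Integrable (fun x => φ x ^ k * q x) μ) (h : s * ∫ x, q x ∂μ ≤ ∫ x, φ x * q x ∂μ) :
    s ^ k * ∫ x, q x ∂μ ≤ ∫ x, φ x ^ k * q x ∂μ := by
  have htangent (x : X) : s ^ k * q x + k * (s ^ k / s) * (φ x * q x - s * q x) ≤
      φ x ^ k * q x := by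
    have hb : 1 + k * (φ x / s - 1) ≤ (φ x / s) ^ k :=
      one_add_mul_sub_le_pow (by linarith [div_nonneg (hφ x) hs.le]) k
    calc s ^ k * q x + k * (s ^ k / s) * (φ x * q x - s * q x)
        = s ^ k * (1 + k * (φ x / s - 1)) * q x := by field_simp
      _ ≤ s ^ k * (φ x / s) ^ k * q x := by gcongr; exact hq0 x
      _ = φ x ^ k * q x := by rw [← mul_pow, mul_div_cancel₀ _ hs.ne']
  have hdiff : Integrable (fun x => φ x * q x - s * q x) μ := hφq.sub (hq.const_mul s)
  calc s ^ k * ∫ x, q x ∂μ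
      ≤ s ^ k * ∫ x, q x ∂μ + k * (s ^ k / s) * (∫ x, φ x * q x ∂μ - s * ∫ x, q x ∂μ) :=
        le_add_of_nonneg_right (mul_nonneg (by positivity) (sub_nonneg.2 h))
    _ = ∫ x, (s ^ k * q x + k * (s ^ k / s) * (φ x * q x - s * q x)) ∂μ := by
        rw [integral_add (hq.const_mul _) (hdiff.const_mul _), integral_const_mul,
          integral_const_mul, integral_sub hφq (hq.const_mul _), integral_const_mul]
    _ ≤ ∫ x, φ x ^ k * q x ∂μ :=
        integral_mono ((hq.const_mul _).add (hdiff.const_mul _)) hφkq htangent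

section MassSpread

variable {E : Type*} [NormedAddCommGroup E] [InnerProductSpace ℝ E] [FiniteDimensional ℝ E]
  [MeasurableSpace E] [BorelSpace E] {k : ℕ} {q v : E → ℝ} {h h' : ℝ → ℝ} {κ Λ M δ : ℝ}

theorem le_mul_of_abs_sub_mul_dist_pow_le (hn : 3 ≤ finrank ℝ E) (hk : 1 ≤ k)
    (hmono : MonotoneOn h (Set.Ioi 0))
    (hderiv : ∀ t ∈ Set.Icc M (2 ^ k * M), HasDerivAt h (h' t) t)
    (hbound : ∀ t ∈ Set.Icc M (2 ^ k * M), h' t ∈ Set.Icc κ Λ) (hΛ : 0 ≤ Λ) (hM : 0 < M)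
    (hδ : δ ≤ 1 / 4) (hv : ∀ x, 0 < v x) {x₀ : E}
    (hint : Integrable (fun x => ⟪spherePoint x₀, spherePoint x⟫ * h (v x)) (roundMeasure E))
    (hzero : ∫ x, ⟪spherePoint x₀, spherePoint x⟫ * h (v x) ∂roundMeasure E = 0)
    (hclose : ∀ x, |v x - M * dist (spherePoint x₀) (spherePoint x) ^ k| ≤ M * δ) :
    κ ≤ 4 * (finrank ℝ E + 1) * Λ * δ := by
  set ζ : E → ℝ := fun x => ⟪spherePoint x₀, spherePoint x⟫
  have hζint : Integrable ζ (roundMeasure E) := integrable_inner_spherePoint _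
  have hsq := integral_inner_spherePoint_sq hn (spherePoint x₀)
  rw [norm_spherePoint, one_pow, one_mul] at hsq
  have hσ : 0 < (roundMeasure E).real Set.univ := measureReal_univ_pos
  have hsqint : Integrable (fun x => ζ x ^ 2) (roundMeasure E) := .of_integral_ne_zero
    (right_ne_zero_of_mul (hsq.trans_ne hσ.ne'))
  -- The equatorial value of `h` may be subtracted because `ζ` has mean zero.
  have hle : ∫ x, (ζ x * h (v x) - h (M * √2 ^ k) * ζ x) ∂roundMeasure E ≤
      ∫ x, (Λ * (M * δ) - κ * (M / 4) * ζ x ^ 2) ∂roundMeasure E := by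
    refine integral_mono (hint.sub (hζint.const_mul _))
      ((integrable_const _).sub (hsqint.const_mul _)) fun x => ?_
    have hζx : ζ x = 1 - dist (spherePoint x₀) (spherePoint x) ^ 2 / 2 := by
      rw [dist_spherePoint_sq]; ring
    have := one_sub_mul_sub_le hk hmono hderiv hbound hΛ hM
      ⟨dist_nonneg, dist_spherePoint_le_two x₀ x⟩ (hv x) hδ (hclose x)
    simp only [hζx]
    linarith
  rw [integral_sub hint (hζint.const_mul _), hzero, integral_const_mul,
    integral_inner_spherePoint hn, mul_zero, sub_zero,
    integral_sub (integrable_const _) (hsqint.const_mul _), integral_const, integral_const_mul,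
    smul_eq_mul, ← hsq] at hle
  have hsqpos : 0 < ∫ x, ζ x ^ 2 ∂roundMeasure E :=
    pos_of_mul_pos_right (hsq.trans_gt hσ) (by positivity)
  exact le_of_mul_le_mul_right (by linarith) (mul_pos hM hsqpos)

lemma abs_chordPotential_sub_le (hq : Integrable q (roundMeasure E)) (hq0 : ∀ x, 0 ≤ q x)
    (x₀ x : E) :
    |chordPotential k q x -
        (∫ y, q y ∂roundMeasure E) * dist (spherePoint x₀) (spherePoint x) ^ k| ≤
      k * 2 ^ (k - 1) * ∫ y, dist (spherePoint x₀) (spherePoint y) * q y ∂roundMeasure E := by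
  have hd := integrable_dist_spherePoint_pow_mul hq 1 x₀
  simp only [pow_one] at hd
  rw [chordPotential, ← integral_mul_const, ← integral_const_mul,
    ← integral_sub (integrable_dist_spherePoint_pow_mul hq k x) (hq.mul_const _),
    ← Real.norm_eq_abs]
  refine norm_integral_le_of_norm_le (hd.const_mul _) (.of_forall fun y => ?_)
  rw [mul_comm (q y), ← sub_mul, norm_mul, Real.norm_of_nonneg (hq0 y), ← mul_assoc,
    Real.norm_eq_abs]
  refine mul_le_mul_of_nonneg_right ?_ (hq0 y)
  refine (abs_pow_sub_pow_le_of_le dist_nonneg dist_nonneg (dist_spherePoint_le_two _ _)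
    (dist_spherePoint_le_two _ _) k).trans ?_
  gcongr
  rw [dist_comm (spherePoint x₀), dist_comm (spherePoint x₀)]
  exact dist_dist_dist_le_right ..

theorem integral_le_mul_integral_dist_mul {C : ℝ} (hn : 3 ≤ finrank ℝ E) (hk : 1 ≤ k)
    (hq : Integrable q (roundMeasure E)) (hq0 : ∀ x, 0 ≤ q x)
    (hM : 0 < ∫ y, q y ∂roundMeasure E) (hpos : ∀ x, 0 < chordPotential k q x)
    (hmono : MonotoneOn h (Set.Ioi 0))
    (hderiv : ∀ t ∈ Set.Icc (∫ y, q y ∂roundMeasure E) (2 ^ k * ∫ y, q y ∂roundMeasure E),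
      HasDerivAt h (h' t) t)
    (hbound : ∀ t ∈ Set.Icc (∫ y, q y ∂roundMeasure E) (2 ^ k * ∫ y, q y ∂roundMeasure E),
      h' t ∈ Set.Icc κ Λ) (hκ : 0 < κ) (hC : Λ ≤ C * κ) {x₀ : E}
    (hint : Integrable (fun x => ⟪spherePoint x₀, spherePoint x⟫ * h (chordPotential k q x))
      (roundMeasure E))
    (hzero : ∫ x, ⟪spherePoint x₀, spherePoint x⟫ * h (chordPotential k q x)
      ∂roundMeasure E = 0) :
    ∫ y, q y ∂roundMeasure E ≤ 4 * (finrank ℝ E + 1) * C * (k * 2 ^ (k - 1)) *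
      ∫ y, dist (spherePoint x₀) (spherePoint y) * q y ∂roundMeasure E := by
  set M := ∫ y, q y ∂roundMeasure E
  set D := k * 2 ^ (k - 1) * ∫ y, dist (spherePoint x₀) (spherePoint y) * q y ∂roundMeasure E
  have hMmem : M ∈ Set.Icc M (2 ^ k * M) :=
    ⟨le_rfl, le_mul_of_one_le_left hM.le (one_le_pow₀ one_le_two)⟩
  have hκΛ : κ ≤ Λ := (hbound M hMmem).1.trans (hbound M hMmem).2
  have hC1 : 1 ≤ C := le_of_mul_le_mul_right (by linarith) hκ
  have hD : 0 ≤ D := mul_nonneg (by positivity)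
    (integral_nonneg fun y => mul_nonneg dist_nonneg (hq0 y))
  by_contra! hlt
  rw [mul_assoc] at hlt
  have hδ : 4 * (finrank ℝ E + 1) * C * (D / M) < 1 := by
    rwa [← mul_div_assoc, div_lt_one hM]
  have hδ4 : D / M ≤ 1 / 4 := by
    have : 1 * 1 ≤ (finrank ℝ E + 1) * C := by gcongr; linarith
    nlinarith [div_nonneg hD hM.le]
  have hκle := le_mul_of_abs_sub_mul_dist_pow_le hn hk hmono hderiv hbound (hκ.le.trans hκΛ) hM
    hδ4 hpos hint hzero fun x => by
      rw [mul_div_cancel₀ _ hM.ne']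
      exact abs_chordPotential_sub_le hq hq0 x₀ x
  refine hκle.not_gt ?_
  calc 4 * (finrank ℝ E + 1) * Λ * (D / M) ≤ 4 * (finrank ℝ E + 1) * (C * κ) * (D / M) := by
        gcongr
    _ = 4 * (finrank ℝ E + 1) * C * (D / M) * κ := by ring
    _ < κ := mul_lt_of_lt_one_left hκ hδ

end MassSpread

section Nonlinearity

lemma exists_forall_hasDerivAt_of_continuousOn_Ioi {g : ℝ → ℝ} {a : ℝ}
    (hg : ContinuousOn g (Set.Ioi a)) : ∃ G : ℝ → ℝ, ∀ t ∈ Set.Ioi a, HasDerivAt G (g t) t := by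
  refine ⟨fun t => ∫ s in (a + 1)..t, g s, fun t ht => ?_⟩
  refine intervalIntegral.integral_hasDerivAt_right (hg.mono fun s hs => ?_).intervalIntegrable
    (hg.stronglyMeasurableAtFilter isOpen_Ioi t ht) (hg.continuousAt (Ioi_mem_nhds ht))
  exact (lt_min (lt_add_one a) ht).trans_le hs.1

/-- The nonlinearity `t ↦ ε t + t ^ (-α)` that `F_{ε,u}` becomes on the sphere, where
`t = f ^ ((2m - n) / 2) u` and `f` is the conformal factor. -/
noncomputable def nonlinearity (ε α t : ℝ) : ℝ := ε * t + t ^ (-α)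

variable {ε α t : ℝ}

lemma nonlinearity_pos (hε : 0 ≤ ε) (ht : 0 < t) : 0 < nonlinearity ε α t := by
  unfold nonlinearity; positivity

lemma hasDerivAt_nonlinearity (ε α : ℝ) (ht : 0 < t) :
    HasDerivAt (nonlinearity ε α) (ε - α * t ^ (-α) / t) t := by
  refine (((hasDerivAt_id t).const_mul ε).add
    (Real.hasDerivAt_rpow_const (p := -α) (.inl ht.ne'))).congr_deriv ?_
  rw [Real.rpow_sub_one ht.ne']
  ring

lemma continuousOn_nonlinearity (ε α : ℝ) : ContinuousOn (nonlinearity ε α) (Set.Ioi 0) :=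
  fun _ ht => (hasDerivAt_nonlinearity ε α ht).continuousAt.continuousWithinAt

lemma hasDerivAt_primitive_add_mul_nonlinearity {G : ℝ → ℝ} {γ : ℝ} (n k : ℝ) (ht : 0 < t)
    (hG : HasDerivAt G (γ * nonlinearity ε α t) t) :
    HasDerivAt (fun t => n * G t + k / 2 * (t * (γ * nonlinearity ε α t)))
      (γ * (n + k) * ε * t + γ * (n + k / 2 * (1 - α)) * t ^ (-α)) t := by
  refine ((hG.const_mul n).add (((hasDerivAt_id t).mul
    ((hasDerivAt_nonlinearity ε α ht).const_mul γ)).const_mul (k / 2))).congr_deriv ?_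
  simp only [nonlinearity, id_eq]
  field_simp
  ring

variable {P Q K M : ℝ}

lemma monotoneOn_of_hasDerivAt_mul_add_mul_rpow {h : ℝ → ℝ} {β : ℝ} (hP : 0 ≤ P) (hQ : 0 ≤ Q)
    (hderiv : ∀ t, 0 < t → HasDerivAt h (P * t + Q * t ^ β) t) : MonotoneOn h (Set.Ioi 0) := by
  refine monotoneOn_of_hasDerivWithinAt_nonneg (convex_Ioi 0)
    (fun t ht => (hderiv t ht).continuousAt.continuousWithinAt)
    (fun t ht => (hderiv t (interior_subset ht)).hasDerivWithinAt) fun t ht => ?_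
  have ht0 : 0 < t := interior_subset ht
  positivity

lemma mul_add_mul_rpow_neg_mem_Icc (hP : 0 ≤ P) (hQ : 0 ≤ Q) (hα : 0 ≤ α) (hM : 0 < M)
    (ht : t ∈ Set.Icc M (K * M)) :
    P * t + Q * t ^ (-α) ∈
      Set.Icc (P * M + Q * (K * M) ^ (-α)) (P * (K * M) + Q * M ^ (-α)) := by
  have ht0 : 0 < t := hM.trans_le ht.1
  have hanti {x y : ℝ} (hx : 0 < x) (hxy : x ≤ y) : y ^ (-α) ≤ x ^ (-α) :=
    Real.rpow_le_rpow_of_nonpos hx hxy (neg_nonpos.2 hα)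
  exact ⟨add_le_add (mul_le_mul_of_nonneg_left ht.1 hP)
      (mul_le_mul_of_nonneg_left (hanti ht0 ht.2) hQ),
    add_le_add (mul_le_mul_of_nonneg_left ht.2 hP)
      (mul_le_mul_of_nonneg_left (hanti hM ht.1) hQ)⟩

lemma mul_add_mul_rpow_neg_le (hP : 0 ≤ P) (hQ : 0 ≤ Q) (hK : 0 < K) (hM : 0 < M) :
    P * (K * M) + Q * M ^ (-α) ≤ (K + K ^ α) * (P * M + Q * (K * M) ^ (-α)) := by
  have hscale : K ^ α * (K * M) ^ (-α) = M ^ (-α) := by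
    rw [Real.mul_rpow hK.le hM.le, ← mul_assoc, ← Real.rpow_add hK, add_neg_cancel,
      Real.rpow_zero, one_mul]
  have h1 : 0 ≤ K * (Q * (K * M) ^ (-α)) := by positivity
  have h2 : 0 ≤ K ^ α * (P * M) := by positivity
  linear_combination h1 + h2 - Q * hscale

end Nonlinearity

section Harnack

variable {E : Type*} [NormedAddCommGroup E] [InnerProductSpace ℝ E] [FiniteDimensional ℝ E]
  [MeasurableSpace E] [BorelSpace E] {k : ℕ} {q v : E → ℝ} {γ ε α lo hi C : ℝ}

lemma integrable_of_chordPotential_ne_zero [Nontrivial E] {x : E} (h : chordPotential k q x ≠ 0)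
    (hC : ∀ y, ‖q y‖ ≤ C) : Integrable q (roundMeasure E) := by
  have hint : Integrable (fun y => dist (spherePoint x) (spherePoint y) ^ k * q y)
    (roundMeasure E) := .of_integral_ne_zero h
  have hdist : Continuous fun y : E => dist (spherePoint x) (spherePoint y) ^ k :=
    (continuous_const.dist continuous_spherePoint).pow k
  refine .of_bound ((hdist.measurable.inv.aestronglyMeasurable.mul hint.1).congr ?_) C
    (.of_forall hC)
  filter_upwards [Measure.ae_ne (roundMeasure E) x] with y hy
  exact inv_mul_cancel_left₀ (pow_pos (dist_spherePoint_pos hy.symm) k).ne' _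

theorem integral_nonlinearity_le_mul_integral_dist (hn : 3 ≤ finrank ℝ E) (hk : 1 ≤ k)
    (hα : 0 < α) (hαk : α * k ≤ 2 * finrank ℝ E + k) (hγ : 0 < γ) (hε : 0 ≤ ε)
    (hsub : 0 < ε ∨ α * k < 2 * finrank ℝ E + k) (hlo : 0 < lo) (hv : ∀ x, v x ∈ Set.Icc lo hi)
    (hq : Integrable (fun x => γ * nonlinearity ε α (v x)) (roundMeasure E))
    (heq : chordPotential k (fun x => γ * nonlinearity ε α (v x)) = v) (x₀ : E) :
    ∫ y, γ * nonlinearity ε α (v y) ∂roundMeasure E ≤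
      4 * (finrank ℝ E + 1) * (2 ^ k + (2 ^ k) ^ α) * (k * 2 ^ (k - 1)) *
        ∫ y, dist (spherePoint x₀) (spherePoint y) * (γ * nonlinearity ε α (v y))
          ∂roundMeasure E := by
  have hpos (y : E) : 0 < v y := hlo.trans_le (hv y).1
  have hqpos (y : E) : 0 < γ * nonlinearity ε α (v y) := mul_pos hγ (nonlinearity_pos hε (hpos y))
  have hM : 0 < ∫ y, γ * nonlinearity ε α (v y) ∂roundMeasure E :=
    (integral_pos_iff_support_of_nonneg (fun y => (hqpos y).le) hq).2 <| by
      rw [Function.support_eq_univ fun y => (hqpos y).ne']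
      exact Measure.measure_univ_pos.2 (NeZero.ne _)
  have hgc : ContinuousOn (fun t => γ * nonlinearity ε α t) (Set.Ioi 0) :=
    (continuousOn_nonlinearity ε α).const_smul γ
  obtain ⟨G, hG⟩ := exists_forall_hasDerivAt_of_continuousOn_Ioi hgc
  have hIcc : Set.Icc lo hi ⊆ Set.Ioi 0 := fun t ht => hlo.trans_le ht.1
  obtain ⟨hint, hzero⟩ := integral_inner_mul_primitive hn hv (hgc.mono hIcc)
    (fun t ht => hG t (hIcc ht)) hq heq (spherePoint x₀)
  set n : ℝ := (finrank ℝ E : ℝ)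
  have hderiv (t : ℝ) (ht : 0 < t) :=
    hasDerivAt_primitive_add_mul_nonlinearity n k ht (hG t ht)
  have hP : 0 ≤ γ * (n + k) * ε := by positivity
  have : 0 < n := by positivity
  have hQ : 0 ≤ γ * (n + k / 2 * (1 - α)) := mul_nonneg hγ.le (by linarith)
  have hκ : 0 < γ * (n + k) * ε * (∫ y, γ * nonlinearity ε α (v y) ∂roundMeasure E) +
      γ * (n + k / 2 * (1 - α)) *
        (2 ^ k * ∫ y, γ * nonlinearity ε α (v y) ∂roundMeasure E) ^ (-α) := by
    rcases hsub with h | h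
    · positivity
    · have : 0 < n + k / 2 * (1 - α) := by linarith
      positivity
  refine integral_le_mul_integral_dist_mul hn hk hq (fun y => (hqpos y).le) hM
    (fun y => heq.symm ▸ hpos y)
    (monotoneOn_of_hasDerivAt_mul_add_mul_rpow hP hQ hderiv)
    (fun t ht => hderiv t (hM.trans_le ht.1))
    (fun t ht => mul_add_mul_rpow_neg_mem_Icc hP hQ hα.le hM ht) hκ
    (mul_add_mul_rpow_neg_le hP hQ (by positivity) hM) ?_ ?_
  · rwa [heq]
  · rwa [heq]

theorem exists_mul_integral_le (hn : 3 ≤ finrank ℝ E) (hk : 1 ≤ k) (hα : 0 < α)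
    (hαk : α * k ≤ 2 * finrank ℝ E + k) :
    ∃ c > 0, ∀ γ ε lo hi : ℝ, ∀ v : E → ℝ, 0 < γ → 0 ≤ ε →
      (0 < ε ∨ α * k < 2 * finrank ℝ E + k) → 0 < lo → (∀ x, v x ∈ Set.Icc lo hi) →
      Integrable (fun x => γ * nonlinearity ε α (v x)) (roundMeasure E) →
      chordPotential k (fun x => γ * nonlinearity ε α (v x)) = v →
      ∀ x, c * ∫ y, γ * nonlinearity ε α (v y) ∂roundMeasure E ≤ v x := by
  set C : ℝ := 4 * (finrank ℝ E + 1) * (2 ^ k + (2 ^ k) ^ α) * (k * 2 ^ (k - 1))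
  have hC : 0 < C := by positivity
  refine ⟨C⁻¹ ^ k, by positivity, fun γ ε lo hi v hγ hε hsub hlo hv hq heq x => ?_⟩
  have hq0 (y : E) : 0 ≤ γ * nonlinearity ε α (v y) :=
    mul_nonneg hγ.le (nonlinearity_pos hε (hlo.trans_le (hv y).1)).le
  have hspread := integral_nonlinearity_le_mul_integral_dist hn hk hα hαk hγ hε hsub hlo hv hq
    heq x
  have hdist := integrable_dist_spherePoint_pow_mul hq 1 x
  simp only [pow_one] at hdist
  have hjensen := pow_mul_integral_le_integral_pow_mul (inv_pos.2 hC)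
    (fun y => dist_nonneg) hq0 hq hdist (integrable_dist_spherePoint_pow_mul hq k x)
    ((inv_mul_le_iff₀ hC).2 hspread)
  exact hjensen.trans_eq (congrFun heq x)

end Harnack

section UniformBounds

variable {E : Type*} [NormedAddCommGroup E] [InnerProductSpace ℝ E] [FiniteDimensional ℝ E]
  [MeasurableSpace E] [BorelSpace E] {k : ℕ} {q q' v : E → ℝ} {γ ε εs α a z lo hi : ℝ}

lemma chordPotential_mono (hq : Integrable q (roundMeasure E))
    (hq' : Integrable q' (roundMeasure E)) (h : ∀ y, q y ≤ q' y) (x : E) :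
    chordPotential k q x ≤ chordPotential k q' x :=
  integral_mono (integrable_dist_spherePoint_pow_mul hq k x)
    (integrable_dist_spherePoint_pow_mul hq' k x) fun y =>
      mul_le_mul_of_nonneg_left (h y) (by positivity)

lemma chordPotential_const_mul (b : ℝ) (q : E → ℝ) (x : E) :
    chordPotential k (fun y => b * q y) x = b * chordPotential k q x := by
  simp only [chordPotential, mul_left_comm _ b, integral_const_mul]

lemma chordPotential_const (hone : ∀ x : E, chordPotential k (fun _ => γ) x = 1) (b : ℝ) (x : E) :
    chordPotential k (fun _ => b * γ) x = b := by
  rw [chordPotential_const_mul, hone, mul_one]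

lemma le_inv_of_mul_le_rpow_neg (ha : 0 < a) (ha1 : a ≤ 1) (hα : 0 ≤ α)
    (h : a * z ≤ z ^ (-α)) : z ≤ a⁻¹ := by
  rcases le_total z 1 with hz | hz
  · exact hz.trans ((one_le_inv₀ ha).2 ha1)
  · rw [← one_div, le_div_iff₀' ha]
    exact h.trans (Real.rpow_le_one_of_one_le_of_nonpos hz (neg_nonpos.2 hα))

lemma one_sub_mul_le_rpow_neg (hone : ∀ x : E, chordPotential k (fun _ => γ) x = 1)
    (hγ : 0 < γ) (hε : 0 ≤ ε) (hε1 : ε ≤ 1) (hα : 0 ≤ α) (hz : 0 < z)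
    (hv : ∀ x, v x ∈ Set.Icc z hi)
    (hq : Integrable (fun x => γ * nonlinearity ε α (v x)) (roundMeasure E))
    (heq : chordPotential k (fun x => γ * nonlinearity ε α (v x)) = v) :
    (1 - ε) * z ≤ z ^ (-α) := by
  have hbdd : BddAbove (Set.range v) := ⟨hi, Set.forall_mem_range.2 fun x => (hv x).2⟩
  have hsup : ⨆ x, v x ≤ ε * (⨆ x, v x) + z ^ (-α) := ciSup_le fun x => by
    rw [← chordPotential_const hone (ε * (⨆ x, v x) + z ^ (-α)) x, ← congrFun heq x]
    refine chordPotential_mono hq (integrable_const _) (fun y => ?_) x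
    rw [mul_comm _ γ]
    refine mul_le_mul_of_nonneg_left (add_le_add ?_ ?_) hγ.le
    · exact mul_le_mul_of_nonneg_left (le_ciSup hbdd y) hε
    · exact Real.rpow_le_rpow_of_nonpos hz (hv y).1 (neg_nonpos.2 hα)
  have hzsup : z ≤ ⨆ x, v x := (hv 0).1.trans (le_ciSup hbdd 0)
  nlinarith

lemma integrable_nonlinearity [Nontrivial E] (hlo : 0 < lo) (hv : ∀ x, v x ∈ Set.Icc lo hi)
    (heq : chordPotential k (fun x => γ * nonlinearity ε α (v x)) = v) :
    Integrable (fun x => γ * nonlinearity ε α (v x)) (roundMeasure E) := by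
  obtain ⟨B, hB⟩ := isCompact_Icc.exists_bound_of_continuousOn
    (((continuousOn_nonlinearity ε α).const_smul γ).mono
      fun t (ht : t ∈ Set.Icc lo hi) => hlo.trans_le ht.1)
  refine integrable_of_chordPotential_ne_zero (x := 0) (k := k) ?_ fun y => hB _ (hv y)
  rw [heq]
  exact (hlo.trans_le (hv 0).1).ne'

theorem mem_Icc_of_mul_integral_le {c : ℝ}
    (hone : ∀ x : E, chordPotential k (fun _ => γ) x = 1) (hγ : 0 < γ) (hε : 0 ≤ ε)
    (hεεs : ε ≤ εs) (hεs : εs < 1) (hα : 0 ≤ α) (hc : 0 < c) (hlo : 0 < lo)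
    (hv : ∀ x, v x ∈ Set.Icc lo hi)
    (hq : Integrable (fun x => γ * nonlinearity ε α (v x)) (roundMeasure E))
    (heq : chordPotential k (fun x => γ * nonlinearity ε α (v x)) = v)
    (hle : ∀ x, c * ∫ y, γ * nonlinearity ε α (v y) ∂roundMeasure E ≤ v x) (x : E) :
    v x ∈ Set.Icc ((2 ^ k * (c⁻¹ * (1 - εs)⁻¹)) ^ (-α)) (2 ^ k * (c⁻¹ * (1 - εs)⁻¹)) := by
  have hpos (y : E) : 0 < v y := hlo.trans_le (hv y).1
  have hqpos (y : E) : 0 < γ * nonlinearity ε α (v y) := mul_pos hγ (nonlinearity_pos hε (hpos y))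
  set M := ∫ y, γ * nonlinearity ε α (v y) ∂roundMeasure E
  have hvM (x : E) : v x ≤ 2 ^ k * M := by
    have habs := abs_chordPotential_le (k := k) hq x
    simp only [heq, abs_of_pos (hqpos _)] at habs
    exact (le_abs_self _).trans habs
  have hM : 0 < M := pos_of_mul_pos_right ((hpos 0).trans_le (hvM 0)) (by positivity)
  have hmass : M ≤ c⁻¹ * (1 - εs)⁻¹ := by
    refine (le_inv_mul_iff₀ hc).2 (le_inv_of_mul_le_rpow_neg (by linarith) (by linarith) hα ?_)
    calc (1 - εs) * (c * M) ≤ (1 - ε) * (c * M) := by gcongr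
      _ ≤ (c * M) ^ (-α) := one_sub_mul_le_rpow_neg hone hγ hε (hεεs.trans hεs.le) hα
        (mul_pos hc hM) (fun x => ⟨hle x, (hv x).2⟩) hq heq
  have hvU (x : E) : v x ≤ 2 ^ k * (c⁻¹ * (1 - εs)⁻¹) := (hvM x).trans (by gcongr)
  set U := 2 ^ k * (c⁻¹ * (1 - εs)⁻¹)
  refine ⟨?_, hvU x⟩
  rw [← chordPotential_const hone (U ^ (-α)) x, ← congrFun heq x]
  refine chordPotential_mono (integrable_const _) hq (fun y => ?_) x
  rw [mul_comm]
  refine mul_le_mul_of_nonneg_left (le_add_of_nonneg_of_le (mul_nonneg hε (hpos y).le) ?_) hγ.le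
  exact Real.rpow_le_rpow_of_nonpos (hpos y) (hvU y) (neg_nonpos.2 hα)

theorem exists_uniform_bounds (hn : 3 ≤ finrank ℝ E) (hk : 1 ≤ k) (hα : 0 < α)
    (hαk : α * k ≤ 2 * finrank ℝ E + k) (hγ : 0 < γ) (hεs : εs < 1)
    (hone : ∀ x : E, chordPotential k (fun _ => γ) x = 1) :
    ∃ U > 0, ∀ ε lo hi : ℝ, ∀ v : E → ℝ, 0 ≤ ε → ε < εs →
      (0 < ε ∨ α * k < 2 * finrank ℝ E + k) → 0 < lo → (∀ x, v x ∈ Set.Icc lo hi) →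
      chordPotential k (fun x => γ * nonlinearity ε α (v x)) = v →
      ∀ x, v x ∈ Set.Icc (U ^ (-α)) U := by
  have : Nontrivial E := nontrivial_of_finrank_pos (R := ℝ) (by omega)
  obtain ⟨c, hc, hharnack⟩ := exists_mul_integral_le (E := E) hn hk hα hαk
  have : 0 < 1 - εs := sub_pos.2 hεs
  refine ⟨2 ^ k * (c⁻¹ * (1 - εs)⁻¹), by positivity,
    fun ε lo hi v hε hεlt hsub hlo hv heq => ?_⟩
  have hq := integrable_nonlinearity hlo hv heq
  exact mem_Icc_of_mul_integral_le hone hγ hε hεlt.le hεs hα.le hc hlo hv hq heq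
    (hharnack γ ε lo hi v hγ hε hsub hlo hv hq heq)

end UniformBounds

section ConformalWeight

variable {E : Type*} [NormedAddCommGroup E]

lemma conformalFactor_rpow_mul (r : ℝ) (x : E) :
    conformalFactor x ^ r * (1 + ‖x‖ ^ 2) ^ r = 2 ^ r := by
  rw [← Real.mul_rpow (conformalFactor_pos x).le (by positivity), conformalFactor_mul]

lemma conformalFactor_rpow_mul_mem_Icc_iff {r a b t : ℝ} {x : E} :
    conformalFactor x ^ r * t ∈ Set.Icc (a * 2 ^ r) (b * 2 ^ r) ↔
      a * (1 + ‖x‖ ^ 2) ^ r ≤ t ∧ t ≤ b * (1 + ‖x‖ ^ 2) ^ r := by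
  have hf := Real.rpow_pos_of_pos (conformalFactor_pos x) r
  simp only [← conformalFactor_rpow_mul r x, mul_left_comm _ (conformalFactor x ^ r), Set.mem_Icc,
    mul_le_mul_iff_right₀ hf]

lemma one_add_norm_sq_div_two_rpow (r : ℝ) (x : E) :
    ((1 + ‖x‖ ^ 2) / 2) ^ r = (conformalFactor x ^ r)⁻¹ := by
  rw [← Real.inv_rpow (conformalFactor_pos x).le, conformalFactor, inv_div]

variable [InnerProductSpace ℝ E]

lemma dist_spherePoint_pow (k : ℕ) (x y : E) :
    dist (spherePoint x) (spherePoint y) ^ k =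
      conformalFactor x ^ (k / 2 : ℝ) * conformalFactor y ^ (k / 2 : ℝ) * ‖x - y‖ ^ k := by
  have hx := conformalFactor_pos x
  have hy := conformalFactor_pos y
  have hsq {t : ℝ} (ht : 0 ≤ t) : t ^ k = (t ^ 2) ^ (k / 2 : ℝ) := by
    rw [← Real.rpow_natCast_mul ht, Nat.cast_two, mul_div_cancel₀ _ two_ne_zero, Real.rpow_natCast]
  rw [hsq dist_nonneg, dist_spherePoint_sq_eq_mul, Real.mul_rpow (by positivity) (by positivity),
    Real.mul_rpow hx.le hy.le, ← hsq (norm_nonneg _)]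

variable [FiniteDimensional ℝ E] [MeasurableSpace E] [BorelSpace E]

lemma conformalFactor_rpow_mul_integral (k : ℕ) (q : E → ℝ) (x : E) :
    conformalFactor x ^ (k / 2 : ℝ) * ∫ y, ‖x - y‖ ^ k *
      (conformalFactor y ^ (finrank ℝ E + k / 2 : ℝ) * q y) = chordPotential k q x := by
  rw [chordPotential, integral_roundMeasure, ← integral_const_mul]
  congr with y
  rw [dist_spherePoint_pow, Real.rpow_add (conformalFactor_pos y), Real.rpow_natCast]
  ring

end ConformalWeight

section EuclideanSpace

variable {n m k : ℕ} {γ ε α : ℝ} {u : EuclideanSpace ℝ (Fin n) → ℝ}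

lemma sphF_eq (hk : 2 * m = n + k) (x : EuclideanSpace ℝ (Fin n)) (hu : 0 ≤ u x) :
    sphF n m ε α u x = conformalFactor x ^ (n + k / 2 : ℝ) *
      nonlinearity ε α (conformalFactor x ^ (k / 2 : ℝ) * u x) := by
  have hf := conformalFactor_pos x
  have hkR : 2 * (m : ℝ) = n + k := by exact_mod_cast hk
  have hlin : conformalFactor x ^ (2 * m) =
      conformalFactor x ^ (n + k / 2 : ℝ) * conformalFactor x ^ (k / 2 : ℝ) := by
    rw [← Real.rpow_add hf, ← Real.rpow_natCast, Nat.cast_mul, Nat.cast_two, hkR]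
    ring_nf
  have hpow : conformalFactor x ^ (((n : ℝ) + 2 * m) / 2 + α * ((n : ℝ) - 2 * m) / 2) =
      conformalFactor x ^ (n + k / 2 : ℝ) * conformalFactor x ^ (k / 2 * -α : ℝ) := by
    rw [← Real.rpow_add hf, hkR]
    ring_nf
  rw [sphF, ← conformalFactor, hlin, hpow, nonlinearity, Real.mul_rpow (by positivity) hu,
    ← Real.rpow_mul hf.le]
  ring

lemma chordPotential_const_eq_one (hk : 2 * m = n + k)
    (hγ : ∀ x : EuclideanSpace ℝ (Fin n), ((1 + ‖x‖ ^ 2) / 2) ^ (k / 2 : ℝ) =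
      γ * ∫ y, ‖x - y‖ ^ k * (2 / (1 + ‖y‖ ^ 2)) ^ (((n : ℝ) + 2 * m) / 2))
    (x : EuclideanSpace ℝ (Fin n)) : chordPotential k (fun _ => γ) x = 1 := by
  have hkR : ((n : ℝ) + 2 * m) / 2 = n + k / 2 := by
    rw [show 2 * (m : ℝ) = n + k by exact_mod_cast hk]; ring
  have hf := Real.rpow_pos_of_pos (conformalFactor_pos x) (k / 2)
  rw [← conformalFactor_rpow_mul_integral, finrank_euclideanSpace_fin]
  simp only [← mul_assoc, integral_mul_const]
  rw [mul_assoc, mul_comm _ γ, ← mul_inv_cancel₀ hf.ne', ← one_add_norm_sq_div_two_rpow, hγ x, hkR]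
  rfl

lemma chordPotential_nonlinearity_eq (hk : 2 * m = n + k) (hu : ∀ x, 0 ≤ u x)
    (heq : ∀ x, u x = γ * ∫ y, ‖x - y‖ ^ k * sphF n m ε α u y) :
    chordPotential k (fun x => γ * nonlinearity ε α (conformalFactor x ^ (k / 2 : ℝ) * u x)) =
      fun x => conformalFactor x ^ (k / 2 : ℝ) * u x := by
  ext x
  rw [chordPotential_const_mul, ← conformalFactor_rpow_mul_integral, finrank_euclideanSpace_fin,
    heq x, mul_left_comm]
  simp only [sphF_eq hk _ (hu _)]

end EuclideanSpace

end RoundSphere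

open RoundSphere in
theorem stmt14_general (n m : ℕ) (hn : 3 ≤ n) (hmn : n < 2 * m) (εs : ℝ) (hεs : εs < 1)
    (α : ℝ) (hα : 0 < α) (hαc : α ≤ (2 * (m : ℝ) + n) / (2 * (m : ℝ) - n)) (γ : ℝ) (hγ : 0 < γ)
    (hγeq : ∀ x : EuclideanSpace ℝ (Fin n),
      ((1 + ‖x‖ ^ 2) / 2) ^ ((2 * (m : ℝ) - n) / 2) =
        γ * ∫ y, ‖x - y‖ ^ (2 * m - n) * (2 / (1 + ‖y‖ ^ 2)) ^ (((n : ℝ) + 2 * m) / 2)) :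
    ∃ C : ℝ, 0 < C ∧ ∀ ε : ℝ, 0 ≤ ε → ε < εs →
      (0 < ε ∨ α < (2 * (m : ℝ) + n) / (2 * (m : ℝ) - n)) →
      ∀ u : EuclideanSpace ℝ (Fin n) → ℝ,
      (∃ c : ℝ, 0 < c ∧ ∀ x,
        c⁻¹ * (1 + ‖x‖ ^ 2) ^ ((2 * (m : ℝ) - n) / 2) ≤ u x ∧
          u x ≤ c * (1 + ‖x‖ ^ 2) ^ ((2 * (m : ℝ) - n) / 2)) →
      (∀ x, u x = γ * ∫ y, ‖x - y‖ ^ (2 * m - n) * sphF n m ε α u y) →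
      ∀ x : EuclideanSpace ℝ (Fin n),
        C⁻¹ * (1 + ‖x‖ ^ 2) ^ ((2 * (m : ℝ) - n) / 2) ≤ u x ∧
          u x ≤ C * (1 + ‖x‖ ^ 2) ^ ((2 * (m : ℝ) - n) / 2) := by
  obtain ⟨k, hk⟩ := Nat.exists_eq_add_of_le hmn.le
  have hkR : 2 * (m : ℝ) = n + k := by exact_mod_cast hk
  have hk1 : 1 ≤ k := by omega
  have hk0 : (0 : ℝ) < k := by exact_mod_cast hk1
  simp only [show 2 * m - n = k by omega, show 2 * (m : ℝ) - n = k by linarith,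
    show 2 * (m : ℝ) + n = 2 * n + k by linarith, le_div_iff₀ hk0, lt_div_iff₀ hk0] at *
  obtain ⟨U, hU, hbounds⟩ := exists_uniform_bounds (by rwa [finrank_euclideanSpace_fin]) hk1 hα
    (by rwa [finrank_euclideanSpace_fin]) hγ hεs (chordPotential_const_eq_one hk hγeq)
  have hs : (1 : ℝ) ≤ 2 ^ (k / 2 : ℝ) := Real.one_le_rpow one_le_two (by positivity)
  refine ⟨2 ^ (k / 2 : ℝ) * U ^ α + U, by positivity, fun ε hε hεεs hsub u ⟨c, hc, hu⟩ heq x => ?_⟩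
  have hu0 (x) : 0 ≤ u x := le_trans (by positivity) (hu x).1
  refine conformalFactor_rpow_mul_mem_Icc_iff.1 (Set.Icc_subset_Icc ?_ ?_ <|
    hbounds ε _ _ _ hε hεεs (by rwa [finrank_euclideanSpace_fin]) (by positivity)
      (fun x => conformalFactor_rpow_mul_mem_Icc_iff.2 (hu x))
      (chordPotential_nonlinearity_eq hk hu0 heq) x)
  · rw [Real.rpow_neg hU.le, inv_mul_le_iff₀ (by positivity), ← div_eq_mul_inv,
      le_div_iff₀ (by positivity)]
    linarith
  · nlinarith [show 0 ≤ 2 ^ (k / 2 : ℝ) * U ^ α * 2 ^ (k / 2 : ℝ) by positivity]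

/-- Compactness: for fixed `ε^* ∈ (0,1)` and `α ∈ (0,(2m+n)/(2m−n)]` there is a
constant `C > 0` such that any positive smooth solution of
`u(x) = γ ∫ |x−y|^{2m−n} F_{ε,u}(y) dy` with `ε ∈ (0, ε^*)` (or `ε ∈ [0, ε^*)` if
`α` is subcritical) and growth `u ≍ (1+|x|²)^{(2m−n)/2}` satisfies the uniform
bounds `C⁻¹(1+|x|²)^{(2m−n)/2} ≤ u ≤ C(1+|x|²)^{(2m−n)/2}`. -/
theorem stmt14 (n m : ℕ) (hn : 3 ≤ n) (hodd : Odd n) (hmn : n < 2 * m)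
    (εs : ℝ) (hεs0 : 0 < εs) (hεs1 : εs < 1)
    (α : ℝ) (hα0 : 0 < α) (hαc : α ≤ (2 * (m : ℝ) + n) / (2 * (m : ℝ) - n))
    (γ : ℝ) (hγ : 0 < γ)
    (hγeq : ∀ x : EuclideanSpace ℝ (Fin n),
      ((1 + ‖x‖ ^ 2) / 2) ^ ((2 * (m : ℝ) - n) / 2) =
        γ * ∫ y, ‖x - y‖ ^ (2 * m - n) * (2 / (1 + ‖y‖ ^ 2)) ^ (((n : ℝ) + 2 * m) / 2)) :
    ∃ C : ℝ, 0 < C ∧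
      (∀ ε : ℝ, 0 < ε → ε < εs →
        ∀ u : EuclideanSpace ℝ (Fin n) → ℝ, ContDiff ℝ (⊤ : ℕ∞) u → (∀ x, 0 < u x) →
        (∃ c : ℝ, 0 < c ∧ ∀ x,
          c⁻¹ * (1 + ‖x‖ ^ 2) ^ ((2 * (m : ℝ) - n) / 2) ≤ u x ∧
            u x ≤ c * (1 + ‖x‖ ^ 2) ^ ((2 * (m : ℝ) - n) / 2)) →
        (∀ x, u x = γ * ∫ y, ‖x - y‖ ^ (2 * m - n) * sphF n m ε α u y) →
        ∀ x : EuclideanSpace ℝ (Fin n),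
          C⁻¹ * (1 + ‖x‖ ^ 2) ^ ((2 * (m : ℝ) - n) / 2) ≤ u x ∧
            u x ≤ C * (1 + ‖x‖ ^ 2) ^ ((2 * (m : ℝ) - n) / 2)) ∧
      (α < (2 * (m : ℝ) + n) / (2 * (m : ℝ) - n) →
        ∀ ε : ℝ, 0 ≤ ε → ε < εs →
        ∀ u : EuclideanSpace ℝ (Fin n) → ℝ, ContDiff ℝ (⊤ : ℕ∞) u → (∀ x, 0 < u x) →
        (∃ c : ℝ, 0 < c ∧ ∀ x,
          c⁻¹ * (1 + ‖x‖ ^ 2) ^ ((2 * (m : ℝ) - n) / 2) ≤ u x ∧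
            u x ≤ c * (1 + ‖x‖ ^ 2) ^ ((2 * (m : ℝ) - n) / 2)) →
        (∀ x, u x = γ * ∫ y, ‖x - y‖ ^ (2 * m - n) * sphF n m ε α u y) →
        ∀ x : EuclideanSpace ℝ (Fin n),
          C⁻¹ * (1 + ‖x‖ ^ 2) ^ ((2 * (m : ℝ) - n) / 2) ≤ u x ∧
            u x ≤ C * (1 + ‖x‖ ^ 2) ^ ((2 * (m : ℝ) - n) / 2)) := by
  obtain ⟨C, hC, h⟩ := stmt14_general n m hn hmn εs hεs1 α hα0 hαc γ hγ hγeq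
  exact ⟨C, hC, fun ε h0 h1 u _ _ => h ε h0.le h1 (.inl h0) u,
    fun hs ε h0 h1 u _ _ => h ε h0 h1 (.inr hs) u⟩
end
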